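/- arXiv:2106.04962 — 2 statements merged into one kernel-verified Lean document; each statement's English description precedes it below -/
import Mathlib

section
/- Let 0 ≤ α < 1 and set r_α = (2 − √(3 + α²))/(1 + α). If f, g ∈ 𝒜 are both starlike of order α, then their Hadamard product f*g satisfies (f*g)(z) ≠ 0 and Re(z(f*g)'(z)/(f*g)(z)) > α for all z with 0 < |z| < r_α; that is, f*g is starlike of order α on |z| < r_α. -/
open Complex Metric Set

noncomputable section

/-- The open unit disk in `ℂ`. -/
def 𝔻 : Set ℂ := Metric.ball 0 1

/-- The class `𝒜` of analytic functions on `𝔻` normalized by `f 0 = 0`, `f' 0 = 1`. -/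
def IsClassA (f : ℂ → ℂ) : Prop :=
  DifferentiableOn ℂ f 𝔻 ∧ f 0 = 0 ∧ deriv f 0 = 1

/-- `g` is subordinate to `F` on the unit disk. -/
def Subordinate (g F : ℂ → ℂ) : Prop :=
  ∃ ω : ℂ → ℂ, DifferentiableOn ℂ ω 𝔻 ∧ ω 0 = 0 ∧ (∀ z ∈ 𝔻, ω z ∈ 𝔻) ∧
    ∀ z ∈ 𝔻, g z = F (ω z)

/-- `ψ` is a Ma-Minda function: analytic and univalent on `𝔻`, `Re ψ > 0`, `ψ 0 = 1`,
`ψ' 0 > 0`, with real Taylor coefficients (expressed via `ψ (conj z) = conj (ψ z)`). -/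
def MaMinda (ψ : ℂ → ℂ) : Prop :=
  DifferentiableOn ℂ ψ 𝔻 ∧ Set.InjOn ψ 𝔻 ∧ (∀ z ∈ 𝔻, 0 < (ψ z).re) ∧
    ψ 0 = 1 ∧ 0 < (deriv ψ 0).re ∧ (deriv ψ 0).im = 0 ∧
    (∀ z ∈ 𝔻, ψ (starRingEnd ℂ z) = starRingEnd ℂ (ψ z))

/-- The Ma-Minda starlike class `S*(ψ)`. -/
def StarlikeMM (ψ f : ℂ → ℂ) : Prop :=
  IsClassA f ∧ (∀ z ∈ 𝔻, z ≠ 0 → f z ≠ 0) ∧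
    Subordinate (fun z => if z = 0 then 1 else z * deriv f z / f z) ψ

/-- The Ma-Minda convex class `C(ψ)`. -/
def ConvexMM (ψ f : ℂ → ℂ) : Prop :=
  IsClassA f ∧ (∀ z ∈ 𝔻, deriv f z ≠ 0) ∧
    Subordinate (fun z => 1 + z * deriv (deriv f) z / deriv f z) ψ

/-- `f` is starlike of order `α`. -/
def StarlikeOrder (α : ℝ) (f : ℂ → ℂ) : Prop :=
  IsClassA f ∧ (∀ z ∈ 𝔻, z ≠ 0 → f z ≠ 0) ∧
    ∀ z ∈ 𝔻, z ≠ 0 → α < (z * deriv f z / f z).re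

/-- `f` is a (normalized) convex function on `𝔻`. -/
def IsConvexFn (f : ℂ → ℂ) : Prop :=
  IsClassA f ∧ (∀ z ∈ 𝔻, deriv f z ≠ 0) ∧
    ∀ z ∈ 𝔻, 0 < (1 + z * deriv (deriv f) z / deriv f z).re

/-!
Starlike functions are convex on `‖z‖ < 2 - √3`: if `p = z f' / f` has positive real part, the
Schwarz lemma applied to Cayley transforms of `p` bounds `Re p` from below and `p' / p` from above
in `1 + z f'' / f' = p + z p' / p`. Since `(2 - √(3 + α²)) / (1 + α) ≤ 2 - √3`, after a dilation it
is enough to show, following Ruscheweyh and Sheil-Small, that convolution with a convex `φ`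
preserves starlikeness of order `α`.

For this, `z (φ * g)' - α (φ * g)` is the convolution of `φ` with `(p - α) g`, where
`p = z g' / g`. Hence it suffices that `(φ * q g) / (φ * g)` has positive real part whenever `q`
has, and by the Herglotz formula only `q = (1 + u z) / (1 - u z)` matters. There the claim reduces
to the nonvanishing of `φ * ((1 - ζ z) k)` for `k = g / (1 - u z)`, which is starlike of order
`-1 / 2`. A zero would make an integral over the circle vanish whose integrand is the height of the
convex curve `φ` above a chord times the imaginary part of a rotation of `(1 - ζ z) k`; the latter
changes sign at two points only, and the chord through these points makes the integrand positive.
-/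

open Real (circleAverage)
open scoped ComplexConjugate Real

section CircleMap

theorem circleMap_zero_one_add (x y : ℝ) :
    circleMap 0 1 (x + y) = circleMap 0 1 x * circleMap 0 1 y := by
  simp only [circleMap_zero, ofReal_one, one_mul, ofReal_add, add_mul, exp_add]

theorem circleMap_zero_one_sub (x y : ℝ) :
    circleMap 0 1 (x - y) = circleMap 0 1 x * circleMap 0 1 (-y) := by
  rw [sub_eq_add_neg, circleMap_zero_one_add]

theorem circleMap_neg_mul_circleMap (x : ℝ) : circleMap 0 1 (-x) * circleMap 0 1 x = 1 := by
  rw [← circleMap_zero_one_add, neg_add_cancel, circleMap_zero]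
  simp

theorem im_circleMap_zero_one (x : ℝ) : (circleMap 0 1 x).im = Real.sin x := by
  simp [circleMap_zero, exp_ofReal_mul_I_im]

theorem circleMap_zero_one_pi_div_two : circleMap 0 1 (π / 2) = I := by
  simp [circleMap_zero, exp_pi_div_two_mul_I]

theorem one_sub_circleMap_zero_one (x : ℝ) :
    1 - circleMap 0 1 x = -2 * I * Real.sin (x / 2) * circleMap 0 1 (x / 2) := by
  have hsin : 2 * I * (Real.sin (x / 2) : ℂ) =
      circleMap 0 1 (x / 2) - circleMap 0 1 (-(x / 2)) := by
    have h := Complex.two_sin ((x / 2 : ℝ) : ℂ)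
    rw [mul_right_comm, ofReal_sin, h, circleMap_zero, circleMap_zero]
    push_cast
    linear_combination (cexp (-(x / 2 : ℂ) * I) - cexp ((x / 2 : ℂ) * I)) * I_mul_I
  conv_lhs => rw [show x = x / 2 + x / 2 by ring, circleMap_zero_one_add]
  linear_combination circleMap 0 1 (x / 2) * hsin - circleMap_neg_mul_circleMap (x / 2)

theorem circleMap_int_mul_pi (n : ℤ) : circleMap 0 1 (n * π) = Real.cos (n * π) := by
  rw [circleMap_zero, exp_mul_I, ← ofReal_cos, ← ofReal_sin, Real.sin_int_mul_pi, ofReal_one,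
    one_mul, ofReal_zero, zero_mul, add_zero]

theorem circleMap_neg_arg_mul_self (z : ℂ) : circleMap 0 1 (-arg z) * z = ‖z‖ := by
  have hpolar : z = ‖z‖ * circleMap 0 1 (arg z) := by simp [circleMap_zero]
  linear_combination circleMap 0 1 (-arg z) * hpolar + ‖z‖ * circleMap_neg_mul_circleMap (arg z)

end CircleMap

section PolarRepresentation

theorem exists_polar_of_hasDerivAt {c v : ℝ → ℂ} (hv : Continuous v)
    (hc : ∀ θ, HasDerivAt c (I * v θ * c θ) θ) (h0 : c 0 ≠ 0) :
    ∃ A γ : ℝ → ℝ, (∀ θ, 0 < A θ) ∧ (∀ θ, HasDerivAt γ (v θ).re θ) ∧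
      ∀ θ, c θ = A θ * circleMap 0 1 (γ θ) := by
  set V : ℝ → ℂ := fun θ => ∫ s in (0 : ℝ)..θ, v s
  have hV (θ : ℝ) : HasDerivAt V (v θ) θ :=
    intervalIntegral.integral_hasDerivAt_right (hv.intervalIntegrable _ _)
      (hv.stronglyMeasurableAtFilter _ _) hv.continuousAt
  have hconst (θ : ℝ) : c θ * cexp (-(I * V θ)) = c 0 := by
    have hderiv (s : ℝ) : HasDerivAt (fun s => c s * cexp (-(I * V s))) 0 s := by
      convert! (hc s).mul ((hV s).const_mul I).neg.cexp using 1
      ring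
    have := is_const_of_deriv_eq_zero (fun s => (hderiv s).differentiableAt)
      (fun s => (hderiv s).deriv) θ 0
    simpa [V] using this
  have hexp (θ : ℝ) : c θ = c 0 * cexp (I * V θ) := by
    rw [← hconst θ, mul_assoc, ← exp_add, neg_add_cancel, exp_zero, mul_one]
  refine ⟨fun θ => ‖c 0‖ * Real.exp (-(V θ).im), fun θ => (V θ).re + arg (c 0),
    fun θ => mul_pos (norm_pos_iff.2 h0) (Real.exp_pos _), fun θ => ?_, fun θ => ?_⟩
  · exact (reCLM.hasFDerivAt.comp_hasDerivAt θ (hV θ)).add_const _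
  · have hsplit : I * V θ = -(V θ).im + (V θ).re * I := by
      conv_lhs => rw [← re_add_im (V θ)]
      linear_combination (V θ).im * I_mul_I
    rw [hexp, hsplit, exp_add, circleMap_zero_one_add, circleMap_zero _ (arg (c 0)),
      circleMap_zero _ (V θ).re]
    conv_lhs => rw [← norm_mul_exp_arg_mul_I (c 0)]
    push_cast
    ring

theorem circleAverage_eq_of_differentiableOn {p : ℂ → ℂ}
    (hp : DifferentiableOn ℂ p (closedBall 0 1)) : circleAverage p 0 1 = p 0 := by
  refine DiffContOnCl.circleAverage (DifferentiableOn.diffContOnCl ?_)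
  rwa [abs_one, closure_ball _ one_ne_zero]

theorem circleMap_mem_closedBall_zero_one (θ : ℝ) : circleMap 0 1 θ ∈ closedBall (0 : ℂ) 1 :=
  circleMap_mem_closedBall 0 zero_le_one θ

theorem continuous_comp_circleMap {p : ℂ → ℂ}
    (hp : AnalyticOnNhd ℂ p (closedBall 0 1)) : Continuous fun θ => p (circleMap 0 1 θ) :=
  hp.continuousOn.comp_continuous (continuous_circleMap 0 1) circleMap_mem_closedBall_zero_one

/-- By the mean value property, the argument of `F` grows by `2π Re (p 0)` along the circle. -/
theorem exists_polar_on_circle {F p : ℂ → ℂ} (hF : AnalyticOnNhd ℂ F (closedBall 0 1))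
    (hp : AnalyticOnNhd ℂ p (closedBall 0 1))
    (hFp : ∀ z ∈ sphere (0 : ℂ) 1, z * deriv F z = p z * F z) (hF1 : F 1 ≠ 0) :
    ∃ A γ : ℝ → ℝ, (∀ θ, 0 < A θ) ∧ (∀ θ, HasDerivAt γ (p (circleMap 0 1 θ)).re θ) ∧
      (∀ θ, γ (θ + 2 * π) = γ θ + 2 * π * (p 0).re) ∧
      ∀ θ, F (circleMap 0 1 θ) = A θ * circleMap 0 1 (γ θ) := by
  have hpc : Continuous fun θ => p (circleMap 0 1 θ) := continuous_comp_circleMap hp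
  obtain ⟨A, γ, hA, hγ, hpolar⟩ := exists_polar_of_hasDerivAt
      (c := fun θ => F (circleMap 0 1 θ)) hpc (fun θ => by
    have hmem := circleMap_mem_closedBall_zero_one θ
    convert! (hF _ hmem).differentiableAt.hasDerivAt.comp θ (hasDerivAt_circleMap 0 1 θ) using 1
    linear_combination -I * hFp _ (circleMap_mem_sphere 0 zero_le_one θ))
    (by simpa [circleMap_zero])
  refine ⟨A, γ, hA, hγ, fun θ => ?_, hpolar⟩
  have hmean : circleAverage (fun z => (p z).re) 0 1 = (p 0).re := by
    rw [← circleAverage_eq_of_differentiableOn hp.differentiableOn]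
    exact reCLM.circleAverage_comp_comm (hpc.intervalIntegrable _ _)
  have hper : Function.Periodic (fun θ => (p (circleMap 0 1 θ)).re) (2 * π) := fun s =>
    congrArg (fun z => (p z).re) (periodic_circleMap 0 1 s)
  have hint : ∫ s in θ..θ + 2 * π, (p (circleMap 0 1 s)).re = γ (θ + 2 * π) - γ θ :=
    intervalIntegral.integral_eq_sub_of_hasDerivAt (fun s _ => hγ s)
      ((continuous_re.comp hpc).intervalIntegrable _ _)
  rw [hper.intervalIntegral_add_eq θ 0, zero_add] at hint
  rw [Real.circleAverage_def, hint, smul_eq_mul, inv_mul_eq_iff_eq_mul₀ Real.two_pi_pos.ne']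
    at hmean
  linarith

end PolarRepresentation

section ConvexCurve

theorem lt_and_lt_of_strictAnti_strictMono_strictAnti {l : ℝ → ℝ} {a m₁ d m₂ b : ℝ}
    (h₁ : StrictAntiOn l (Icc a m₁)) (h₂ : StrictMonoOn l (Icc m₁ m₂))
    (h₃ : StrictAntiOn l (Icc m₂ b)) (had : l a = l d) (hdb : l d = l b)
    (ham : a < m₁) (hmd : m₁ < d) (hdm : d < m₂) (hmb : m₂ < b) :
    (∀ θ ∈ Ioo a d, l θ < l d) ∧ ∀ θ ∈ Ioo d b, l d < l θ := by
  refine ⟨fun θ hθ => ?_, fun θ hθ => ?_⟩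
  · rcases le_total θ m₁ with h | h
    · exact had ▸ h₁ ⟨le_rfl, ham.le⟩ ⟨hθ.1.le, h⟩ hθ.1
    · exact h₂ ⟨h, (hθ.2.trans hdm).le⟩ ⟨hmd.le, hdm.le⟩ hθ.2
  · rcases le_total θ m₂ with h | h
    · exact h₂ ⟨hmd.le, hdm.le⟩ ⟨(hmd.trans hθ.1).le, h⟩ hθ.1
    · exact hdb ▸ h₃ ⟨h, hθ.2.le⟩ ⟨hmb.le, le_rfl⟩ hθ.2

theorem hasDerivAt_im_mul_curve {Γ : ℝ → ℂ} {A κ : ℝ → ℝ}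
    (hΓ : ∀ θ, HasDerivAt Γ (A θ * circleMap 0 1 (κ θ)) θ) (τ θ : ℝ) :
    HasDerivAt (fun s => (circleMap 0 1 (-τ) * Γ s).im) (A θ * Real.sin (κ θ - τ)) θ := by
  have h := imCLM.hasFDerivAt.comp_hasDerivAt θ ((hΓ θ).const_mul (circleMap 0 1 (-τ)))
  convert! h using 1
  rw [← im_circleMap_zero_one, circleMap_zero_one_sub, imCLM_apply,
    show circleMap 0 1 (-τ) * (A θ * circleMap 0 1 (κ θ)) =
      (A θ : ℂ) * (circleMap 0 1 (κ θ) * circleMap 0 1 (-τ)) by ring, im_ofReal_mul]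

variable {Γ : ℝ → ℂ} {A κ : ℝ → ℝ}

/-- Rolle's theorem for the height above the chord: both arcs cut off by a chord contain a point
where the tangent is parallel to the chord. -/
theorem exists_parallel_tangents (hA : ∀ θ, 0 < A θ) (hκ : StrictMono κ)
    (hκper : ∀ θ, κ (θ + 2 * π) = κ θ + 2 * π)
    (hΓ : ∀ θ, HasDerivAt Γ (A θ * circleMap 0 1 (κ θ)) θ) (hΓper : Function.Periodic Γ (2 * π))
    {a d : ℝ} (had : a < d) (hda : d < a + 2 * π) :
    ∃ m₁ ∈ Ioo a d, ∃ m₂ ∈ Ioo d (a + 2 * π), κ m₂ = κ m₁ + π ∧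
      (circleMap 0 1 (-κ m₁) * Γ a).im = (circleMap 0 1 (-κ m₁) * Γ d).im := by
  set τ := arg (Γ d - Γ a)
  have hchord : (circleMap 0 1 (-τ) * Γ a).im = (circleMap 0 1 (-τ) * Γ d).im := by
    have hreal := congrArg im (circleMap_neg_arg_mul_self (Γ d - Γ a))
    rw [mul_sub, sub_im, ofReal_im] at hreal
    exact (sub_eq_zero.1 hreal).symm
  have rolle {x y : ℝ} (hxy : x < y)
      (h : (circleMap 0 1 (-τ) * Γ x).im = (circleMap 0 1 (-τ) * Γ y).im) :
      ∃ m ∈ Ioo x y, ∃ n : ℤ, n * π = κ m - τ := by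
    obtain ⟨m, hm, h0⟩ := exists_hasDerivAt_eq_zero hxy
      (fun s _ => (hasDerivAt_im_mul_curve hΓ τ s).continuousAt.continuousWithinAt) h
      (fun s _ => hasDerivAt_im_mul_curve hΓ τ s)
    exact ⟨m, hm, Real.sin_eq_zero_iff.1 ((mul_eq_zero.1 h0).resolve_left (hA m).ne')⟩
  obtain ⟨m₁, hm₁, k, hk⟩ := rolle had hchord
  obtain ⟨m₂, hm₂, l, hl⟩ := rolle hda (by rw [hΓper a, hchord])
  have hlk : l = k + 1 := by
    have h₁ : κ m₁ < κ m₂ := hκ (hm₁.2.trans hm₂.1)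
    have h₂ : κ m₂ < κ m₁ + 2 * π := hκper m₁ ▸ hκ (by linarith [hm₁.1, hm₂.2])
    have hkl : (k : ℝ) < l := by nlinarith [Real.pi_pos]
    have hlk : (l : ℝ) < k + 2 := by nlinarith [Real.pi_pos]
    have : l < k + 2 := by exact_mod_cast hlk
    have : k < l := by exact_mod_cast hkl
    omega
  refine ⟨m₁, hm₁, m₂, hm₂, ?_, ?_⟩
  · rw [hlk] at hl
    push_cast at hl
    linarith
  · have hrot : circleMap 0 1 (-κ m₁) = (Real.cos ((-k : ℤ) * π) : ℝ) * circleMap 0 1 (-τ) := by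
      rw [← circleMap_int_mul_pi, ← circleMap_zero_one_add]
      congr 1
      push_cast
      linarith
    rw [hrot, mul_assoc, mul_assoc, im_ofReal_mul, im_ofReal_mul, hchord]

/-- The line through `Γ a` and `Γ d` separates the two arcs of a closed convex curve. -/
theorem exists_chord_separation (hA : ∀ θ, 0 < A θ) (hκ : StrictMono κ)
    (hκper : ∀ θ, κ (θ + 2 * π) = κ θ + 2 * π)
    (hΓ : ∀ θ, HasDerivAt Γ (A θ * circleMap 0 1 (κ θ)) θ) (hΓper : Function.Periodic Γ (2 * π))
    {a d : ℝ} (had : a < d) (hda : d < a + 2 * π) :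
    ∃ (c : ℂ) (m : ℝ), (∀ θ ∈ Ioo a d, (c * Γ θ).im < m) ∧
      ∀ θ ∈ Ioo d (a + 2 * π), m < (c * Γ θ).im := by
  obtain ⟨m₁, hm₁, m₂, hm₂, hκm, hchord⟩ := exists_parallel_tangents hA hκ hκper hΓ hΓper had hda
  have hl (θ : ℝ) := hasDerivAt_im_mul_curve hΓ (κ m₁) θ
  have hcont (s : Set ℝ) : ContinuousOn (fun θ => (circleMap 0 1 (-κ m₁) * Γ θ).im) s :=
    fun θ _ => (hl θ).continuousAt.continuousWithinAt
  have anti {x y : ℝ} (h : ∀ θ ∈ Ioo x y, Real.sin (κ θ - κ m₁) < 0) :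
      StrictAntiOn (fun θ => (circleMap 0 1 (-κ m₁) * Γ θ).im) (Icc x y) :=
    strictAntiOn_of_hasDerivWithinAt_neg (convex_Icc x y) (hcont _)
      (fun θ _ => (hl θ).hasDerivWithinAt)
      (fun θ hθ => mul_neg_of_pos_of_neg (hA θ) (h θ (interior_Icc (a := x) ▸ hθ)))
  refine ⟨circleMap 0 1 (-κ m₁), _,
    lt_and_lt_of_strictAnti_strictMono_strictAnti (anti fun θ hθ => ?_)
    (strictMonoOn_of_hasDerivWithinAt_pos (convex_Icc m₁ m₂) (hcont _)
      (fun θ _ => (hl θ).hasDerivWithinAt)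
      fun θ hθ => mul_pos (hA θ) (Real.sin_pos_of_pos_of_lt_pi ?_ ?_))
    (anti fun θ hθ => ?_) hchord (by rw [hΓper a, hchord]) hm₁.1 hm₁.2 hm₂.1 hm₂.2⟩
  · have h₁ : κ m₂ < κ θ + 2 * π := hκper θ ▸ hκ (by linarith [hθ.1, hm₂.2])
    exact Real.sin_neg_of_neg_of_neg_pi_lt (by linarith [hκ hθ.2]) (by linarith)
  · rw [interior_Icc] at hθ
    linarith [hκ hθ.1]
  · rw [interior_Icc] at hθ
    linarith [hκ hθ.2]
  · have h₁ : κ θ < κ m₁ + 2 * π := hκper m₁ ▸ hκ (by linarith [hθ.2, hm₁.1])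
    rw [← Real.sin_sub_two_pi]
    exact Real.sin_neg_of_neg_of_neg_pi_lt (by linarith) (by linarith [hκ hθ.1])

end ConvexCurve

section CirclePairing

/-- The average of `φ ζ * g ζ⁻¹` over the unit circle. For functions analytic on the closed disc
this is the value at `1` of their Hadamard product. -/
def circlePairing (φ g : ℂ → ℂ) : ℂ :=
  circleAverage (fun ζ => φ ζ * g ζ⁻¹) 0 1

theorem inv_mem_sphere_zero_one {ζ : ℂ} (hζ : ζ ∈ sphere (0 : ℂ) 1) : ζ⁻¹ ∈ sphere (0 : ℂ) 1 := by
  simpa using hζ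

theorem inv_eq_conj_of_mem_sphere {ζ : ℂ} (hζ : ζ ∈ sphere (0 : ℂ) 1) : ζ⁻¹ = conj ζ :=
  inv_eq_conj (mem_sphere_zero_iff_norm.1 hζ)

theorem continuousOn_comp_inv {g : ℂ → ℂ} (hg : ContinuousOn g (sphere 0 1)) :
    ContinuousOn (fun ζ => g ζ⁻¹) (sphere 0 1) :=
  hg.comp (continuousOn_inv₀.mono fun _ hζ => ne_of_mem_sphere hζ one_ne_zero)
    fun _ => inv_mem_sphere_zero_one

theorem circleIntegrable_mul_comp_inv {φ g : ℂ → ℂ} (hφ : ContinuousOn φ (sphere 0 1))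
    (hg : ContinuousOn g (sphere 0 1)) : CircleIntegrable (fun ζ => φ ζ * g ζ⁻¹) 0 1 :=
  (hφ.mul (continuousOn_comp_inv hg)).circleIntegrable zero_le_one

theorem circlePairing_add_const_mul {φ g k : ℂ → ℂ} (hφ : ContinuousOn φ (sphere 0 1))
    (hg : ContinuousOn g (sphere 0 1)) (hk : ContinuousOn k (sphere 0 1)) (c : ℂ) :
    circlePairing φ (fun w => g w + c * k w) = circlePairing φ g + c * circlePairing φ k := by
  have hck : CircleIntegrable (fun ζ => c • (φ ζ * k ζ⁻¹)) 0 1 :=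
    (circleIntegrable_mul_comp_inv hφ hk).const_smul
  rw [circlePairing, circlePairing, circlePairing, ← smul_eq_mul c, ← Real.circleAverage_fun_smul,
    ← Real.circleAverage_fun_add (circleIntegrable_mul_comp_inv hφ hg) hck]
  congr 1
  ext ζ
  rw [smul_eq_mul]
  ring

theorem circleAverage_mul_conj_comp_inv {φ g : ℂ → ℂ} (hφ : AnalyticOnNhd ℂ φ (closedBall 0 1))
    (hg : AnalyticOnNhd ℂ g (closedBall 0 1)) :
    circleAverage (fun ζ => φ ζ * conj (g ζ⁻¹)) 0 1 = φ 0 * conj (g 0) := by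
  have hdiff : DifferentiableOn ℂ (fun ζ => φ ζ * conj (g (conj ζ))) (closedBall 0 1) := by
    refine hφ.differentiableOn.mul fun ζ hζ => ?_
    have hmem : conj ζ ∈ closedBall (0 : ℂ) 1 := by simpa using hζ
    have h := (hg _ hmem).differentiableAt.conj_conj
    rw [conj_conj] at h
    exact h.differentiableWithinAt
  rw [Real.circleAverage_congr_sphere (f₂ := fun ζ => φ ζ * conj (g (conj ζ))),
    circleAverage_eq_of_differentiableOn hdiff, map_zero]
  intro ζ hζ
  rw [abs_one] at hζ
  simp only [inv_eq_conj_of_mem_sphere hζ]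

/-- `φ` pairs to zero with `ζ ↦ conj (g ζ⁻¹)` too because `g 0 = 0`; the product of imaginary parts
is half the real part of the difference of the two pairings. -/
theorem circleAverage_im_sub_mul_im_eq_zero {φ g : ℂ → ℂ}
    (hφ : AnalyticOnNhd ℂ φ (closedBall 0 1)) (hg : AnalyticOnNhd ℂ g (closedBall 0 1))
    (hg0 : g 0 = 0) (hφg : circlePairing φ g = 0) (c t : ℂ) (m : ℝ) :
    circleAverage (fun ζ => ((c * φ ζ).im - m) * (t * g ζ⁻¹).im) 0 1 = 0 := by
  have hφs := hφ.continuousOn.mono sphere_subset_closedBall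
  have hgs := hg.continuousOn.mono sphere_subset_closedBall
  have hconj : circleAverage (fun ζ => φ ζ * conj (g ζ⁻¹)) 0 1 = 0 := by
    rw [circleAverage_mul_conj_comp_inv hφ hg, hg0, map_zero, mul_zero]
  have hmean : circleAverage (fun ζ => g ζ⁻¹) 0 1 = 0 := by
    rw [Real.circleAverage_zero_one_congr_inv,
      circleAverage_eq_of_differentiableOn hg.differentiableOn, hg0]
  set F₁ : ℂ → ℂ := fun ζ => φ ζ * conj (g ζ⁻¹)
  set F₂ : ℂ → ℂ := fun ζ => φ ζ * g ζ⁻¹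
  set F₃ : ℂ → ℂ := fun ζ => g ζ⁻¹
  have hF₁ : CircleIntegrable ((c * conj t / 2) • F₁) 0 1 :=
    ((hφs.mul (continuous_conj.comp_continuousOn (continuousOn_comp_inv hgs))).circleIntegrable
      zero_le_one).const_smul
  have hF₂ : CircleIntegrable ((c * t / 2) • F₂) 0 1 :=
    (circleIntegrable_mul_comp_inv hφs hgs).const_smul
  have hF₃ : CircleIntegrable ((m * I * t) • F₃) 0 1 :=
    ((continuousOn_comp_inv hgs).circleIntegrable zero_le_one).const_smul
  have hzero :
      circleAverage ((c * conj t / 2) • F₁ - (c * t / 2) • F₂ + (m * I * t) • F₃) 0 1 = 0 := by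
    rw [Real.circleAverage_add (hF₁.sub hF₂) hF₃, Real.circleAverage_sub hF₁ hF₂,
      Real.circleAverage_smul, Real.circleAverage_smul, Real.circleAverage_smul, hconj, hmean,
      show circleAverage F₂ 0 1 = 0 from hφg, smul_zero, smul_zero, smul_zero, sub_zero, add_zero]
  rw [← zero_re, ← hzero]
  refine Eq.trans ?_ (reCLM.circleAverage_comp_comm ((hF₁.sub hF₂).add hF₃))
  congr 1
  ext ζ
  simp [F₁, F₂, F₃, mul_re, mul_im]
  ring

end CirclePairing

section NonVanishing

/-- `φ` is convex on the closed unit disc, with the analyticity and the curvature condition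
holding up to the boundary. No normalization of `deriv φ 0` is imposed. -/
structure ConvexOnClosedDisc (φ : ℂ → ℂ) : Prop where
  analyticOnNhd : AnalyticOnNhd ℂ φ (closedBall 0 1)
  map_zero : φ 0 = 0
  deriv_ne_zero : ∀ z ∈ closedBall (0 : ℂ) 1, deriv φ z ≠ 0
  re_pos : ∀ z ∈ closedBall (0 : ℂ) 1, 0 < (1 + z * deriv (deriv φ) z / deriv φ z).re

/-- `g` is starlike of order `σ` on the closed unit disc, with analyticity up to the boundary.
The quotient `z * deriv g z / g z` is carried along as the function `p`, which is analytic at `0`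
too. Negative `σ` are allowed. -/
structure StarlikeOnClosedDisc (σ : ℝ) (g p : ℂ → ℂ) : Prop where
  analyticOnNhd : AnalyticOnNhd ℂ g (closedBall 0 1)
  analyticOnNhd_quotient : AnalyticOnNhd ℂ p (closedBall 0 1)
  mul_deriv : ∀ z ∈ closedBall (0 : ℂ) 1, z * deriv g z = p z * g z
  quotient_zero : p 0 = 1
  deriv_zero_ne_zero : deriv g 0 ≠ 0
  ne_zero : ∀ z ∈ sphere (0 : ℂ) 1, g z ≠ 0
  lt_re_quotient : ∀ z ∈ sphere (0 : ℂ) 1, σ < (p z).re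

theorem StarlikeOnClosedDisc.map_zero {σ : ℝ} {g p : ℂ → ℂ} (hg : StarlikeOnClosedDisc σ g p) :
    g 0 = 0 := by
  simpa [hg.quotient_zero] using (hg.mul_deriv 0 (mem_closedBall_self zero_le_one)).symm

theorem circleMap_zero_one_mem_sphere (θ : ℝ) : circleMap 0 1 θ ∈ sphere (0 : ℂ) 1 :=
  circleMap_mem_sphere 0 zero_le_one θ

theorem ConvexOnClosedDisc.exists_tangent_angle {φ : ℂ → ℂ} (hφ : ConvexOnClosedDisc φ) :
    ∃ A κ : ℝ → ℝ, (∀ θ, 0 < A θ) ∧ StrictMono κ ∧ (∀ θ, κ (θ + 2 * π) = κ θ + 2 * π) ∧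
      ∀ θ, HasDerivAt (fun s => φ (circleMap 0 1 s)) (A θ * circleMap 0 1 (κ θ)) θ := by
  have hφ' := hφ.analyticOnNhd.deriv
  obtain ⟨A, γ, hA, hγ, hγper, hpolar⟩ := exists_polar_on_circle
    (F := fun z => z * deriv φ z) (p := fun z => 1 + z * deriv (deriv φ) z / deriv φ z)
    (analyticOnNhd_id.mul hφ')
    (analyticOnNhd_const.add ((analyticOnNhd_id.mul hφ'.deriv).div hφ' hφ.deriv_ne_zero))
    (fun z hz => by
      have hzb := sphere_subset_closedBall hz
      have hne := hφ.deriv_ne_zero z hzb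
      have hderiv := ((hasDerivAt_id' z).mul (hφ' z hzb).differentiableAt.hasDerivAt).deriv
      simp only [Pi.mul_def] at hderiv
      rw [hderiv]
      field_simp)
    (by simpa using hφ.deriv_ne_zero 1 (by simp))
  refine ⟨A, fun θ => γ θ + π / 2, hA, ?_, fun θ => ?_, fun θ => ?_⟩
  · exact (strictMono_of_hasDerivAt_pos hγ fun θ =>
      hφ.re_pos _ (circleMap_mem_closedBall_zero_one θ)).add_const _
  · simp only [hγper θ, zero_mul, zero_div, add_zero, one_re]
    ring
  · have hd := (hφ.analyticOnNhd _ (circleMap_mem_closedBall_zero_one θ)).differentiableAt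
    convert! hd.hasDerivAt.comp θ (hasDerivAt_circleMap 0 1 θ) using 1
    rw [circleMap_zero_one_add, circleMap_zero_one_pi_div_two]
    linear_combination -I * hpolar θ

/-- Multiplying `g` by `1 - ζ w` with `‖ζ‖ = 1` adds `1 / 2` to the angular speed, whence the bound
`-1 / 2`, and produces a simple real zero on the circle. -/
theorem StarlikeOnClosedDisc.exists_polar_one_sub_mul {g p : ℂ → ℂ}
    (hg : StarlikeOnClosedDisc (-1 / 2) g p) (b : ℝ) :
    ∃ B κ : ℝ → ℝ, (∀ θ, 0 < B θ) ∧ StrictMono κ ∧ Continuous κ ∧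
      (∀ θ, κ (θ + 2 * π) = κ θ + 3 * π) ∧
      ∀ θ, (1 - circleMap 0 1 b * circleMap 0 1 (-θ)) * g (circleMap 0 1 (-θ)) =
        B θ * Real.sin ((θ - b) / 2) * (I * circleMap 0 1 (-κ θ)) := by
  obtain ⟨A, γ, hA, hγ, hγper, hpolar⟩ := exists_polar_on_circle hg.analyticOnNhd
    hg.analyticOnNhd_quotient (fun z hz => hg.mul_deriv z (sphere_subset_closedBall hz))
    (hg.ne_zero 1 (by simp))
  have hκ (θ : ℝ) : HasDerivAt (fun s => -γ (-s) + (s - b) / 2)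
      ((p (circleMap 0 1 (-θ))).re + 1 / 2) θ := by
    convert! ((hγ (-θ)).scomp θ (hasDerivAt_neg θ)).neg.add
      (((hasDerivAt_id' θ).sub_const b).div_const 2) using 1
    simp
  refine ⟨fun θ => 2 * A (-θ), fun θ => -γ (-θ) + (θ - b) / 2,
    fun θ => mul_pos two_pos (hA (-θ)), strictMono_of_hasDerivAt_pos hκ fun θ => ?_,
    continuous_iff_continuousAt.2 fun θ => (hκ θ).continuousAt, fun θ => ?_, fun θ => ?_⟩
  · linarith [hg.lt_re_quotient _ (circleMap_zero_one_mem_sphere (-θ))]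
  · have := hγper (-(θ + 2 * π))
    rw [show -(θ + 2 * π) + 2 * π = -θ by ring, hg.quotient_zero, one_re] at this
    linarith
  · rw [hpolar, ← circleMap_zero_one_add, one_sub_circleMap_zero_one,
      show -(-γ (-θ) + (θ - b) / 2) = γ (-θ) + (b + -θ) / 2 by ring,
      circleMap_zero_one_add (γ (-θ)),
      show (b + -θ) / 2 = -((θ - b) / 2) by ring, Real.sin_neg]
    push_cast
    ring

theorem exists_sin_sign_changes {κ : ℝ → ℝ} {b T : ℝ} (hκ : StrictMono κ) (hκc : Continuous κ)
    (hT : κ T = κ b + 3 * π) :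
    ∃ d₁ d₂, b < d₁ ∧ d₁ < d₂ ∧ d₂ < T ∧ (∀ θ ∈ Ioo b d₁, 0 < Real.sin (κ θ - κ b)) ∧
      (∀ θ ∈ Ioo d₁ d₂, Real.sin (κ θ - κ b) < 0) ∧
      ∀ θ ∈ Ioo d₂ T, 0 < Real.sin (κ θ - κ b) := by
  have hbT : b ≤ T := hκ.le_iff_le.1 (by linarith [Real.pi_pos])
  have hivt := intermediate_value_Icc hbT hκc.continuousOn
  obtain ⟨d₁, -, hd₁⟩ := hivt (show κ b + π ∈ _ by constructor <;> linarith [Real.pi_pos])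
  obtain ⟨d₂, -, hd₂⟩ := hivt (show κ b + 2 * π ∈ _ by constructor <;> linarith [Real.pi_pos])
  refine ⟨d₁, d₂, hκ.lt_iff_lt.1 (by linarith [Real.pi_pos]),
    hκ.lt_iff_lt.1 (by linarith [Real.pi_pos]), hκ.lt_iff_lt.1 (by linarith [Real.pi_pos]),
    fun θ hθ => ?_, fun θ hθ => ?_, fun θ hθ => ?_⟩ <;>
    have hlow := hκ hθ.1 <;> have hupp := hκ hθ.2
  · exact Real.sin_pos_of_pos_of_lt_pi (by linarith) (by linarith)
  · rw [← Real.sin_sub_two_pi]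
    exact Real.sin_neg_of_neg_of_neg_pi_lt (by linarith) (by linarith)
  · rw [← Real.sin_sub_two_pi]
    exact Real.sin_pos_of_pos_of_lt_pi (by linarith) (by linarith)

theorem circleAverage_pos_of_pos_on_arcs {f : ℂ → ℝ} (hf : ContinuousOn f (sphere 0 1))
    {b d₁ d₂ : ℝ} (hbd : b < d₁) (hdd : d₁ < d₂) (hdT : d₂ < b + 2 * π)
    (h₁ : ∀ θ ∈ Ioo b d₁, 0 < f (circleMap 0 1 θ)) (h₂ : ∀ θ ∈ Ioo d₁ d₂, 0 < f (circleMap 0 1 θ))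
    (h₃ : ∀ θ ∈ Ioo d₂ (b + 2 * π), 0 < f (circleMap 0 1 θ)) :
    0 < circleAverage f 0 1 := by
  have hper : Function.Periodic (fun θ => f (circleMap 0 1 θ)) (2 * π) := fun θ =>
    congrArg f (periodic_circleMap 0 1 θ)
  have hint (x y : ℝ) :
      IntervalIntegrable (fun θ => f (circleMap 0 1 θ)) MeasureTheory.volume x y :=
    (hf.comp_continuous (continuous_circleMap 0 1) circleMap_zero_one_mem_sphere).intervalIntegrable
      x y
  rw [Real.circleAverage_def, ← zero_add (2 * π), hper.intervalIntegral_add_eq 0 b, zero_add,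
    ← intervalIntegral.integral_add_adjacent_intervals (hint b d₂) (hint _ _),
    ← intervalIntegral.integral_add_adjacent_intervals (hint b d₁) (hint _ _)]
  have p₁ := intervalIntegral.intervalIntegral_pos_of_pos_on (hint _ _) h₁ hbd
  have p₂ := intervalIntegral.intervalIntegral_pos_of_pos_on (hint _ _) h₂ hdd
  have p₃ := intervalIntegral.intervalIntegral_pos_of_pos_on (hint _ _) h₃ hdT
  exact smul_pos (by positivity) (by positivity)

theorem StarlikeOnClosedDisc.exists_im_sign_changes {g p : ℂ → ℂ}
    (hg : StarlikeOnClosedDisc (-1 / 2) g p) (b : ℝ) :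
    ∃ (t : ℂ) (s : ℝ → ℝ) (d₁ d₂ : ℝ), b < d₁ ∧ d₁ < d₂ ∧ d₂ < b + 2 * π ∧
      (∀ θ, (t * ((1 - circleMap 0 1 b * (circleMap 0 1 θ)⁻¹) * g (circleMap 0 1 θ)⁻¹)).im = s θ) ∧
      (∀ θ ∈ Ioo b d₁, 0 < s θ) ∧ (∀ θ ∈ Ioo d₁ d₂, s θ < 0) ∧
      ∀ θ ∈ Ioo d₂ (b + 2 * π), 0 < s θ := by
  obtain ⟨B, χ, hB, hχ, hχc, hχper, hpolar⟩ := hg.exists_polar_one_sub_mul b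
  obtain ⟨d₁, d₂, hbd, hdd, hdT, h₁, h₂, h₃⟩ := exists_sin_sign_changes hχ hχc (hχper b)
  refine ⟨I * circleMap 0 1 (χ b), fun θ => B θ * Real.sin ((θ - b) / 2) * Real.sin (χ θ - χ b),
    d₁, d₂, hbd, hdd, hdT, fun θ => ?_, ?_⟩
  · have hrot : I * circleMap 0 1 (χ b) * (B θ * Real.sin ((θ - b) / 2) *
        (I * circleMap 0 1 (-χ θ))) =
        ((B θ * Real.sin ((θ - b) / 2) : ℝ) : ℂ) * -circleMap 0 1 (χ b - χ θ) := by
      rw [circleMap_zero_one_sub]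
      push_cast
      linear_combination B θ * Complex.sin ((θ - b) / 2) * circleMap 0 1 (χ b) *
        circleMap 0 1 (-χ θ) * I_mul_I
    rw [circleMap_zero_inv, inv_one, hpolar, hrot, im_ofReal_mul, neg_im, im_circleMap_zero_one,
      ← Real.sin_neg, neg_sub]
  · have hpos {θ : ℝ} (hb : b < θ) (hT : θ < b + 2 * π) : 0 < B θ * Real.sin ((θ - b) / 2) :=
      mul_pos (hB θ) (Real.sin_pos_of_pos_of_lt_pi (by linarith) (by linarith))
    exact ⟨fun θ hθ => mul_pos (hpos hθ.1 (by linarith [hθ.2])) (h₁ θ hθ),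
      fun θ hθ => mul_neg_of_pos_of_neg (hpos (by linarith [hθ.1]) (by linarith [hθ.2])) (h₂ θ hθ),
      fun θ hθ => mul_pos (hpos (by linarith [hθ.1]) hθ.2) (h₃ θ hθ)⟩

/-- Were the pairing zero, the product of `Im (t (1 - ζ w) g)` with the height of `φ` above the
chord between the two sign changes would have mean zero, although both factors change sign at the
same points. -/
theorem circlePairing_one_sub_mul_ne_zero {φ g p : ℂ → ℂ} (hφ : ConvexOnClosedDisc φ)
    (hg : StarlikeOnClosedDisc (-1 / 2) g p) {ζ : ℂ} (hζ : ζ ∈ sphere (0 : ℂ) 1) :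
    circlePairing φ (fun w => (1 - ζ * w) * g w) ≠ 0 := by
  intro hpair
  obtain ⟨b, rfl⟩ : ∃ b, circleMap 0 1 b = ζ := by
    rwa [← abs_one, ← range_circleMap] at hζ
  have hG : AnalyticOnNhd ℂ (fun w => (1 - circleMap 0 1 b * w) * g w) (closedBall 0 1) :=
    (analyticOnNhd_const.sub (analyticOnNhd_const.mul analyticOnNhd_id)).mul hg.analyticOnNhd
  obtain ⟨A, κ, hA, hκ, hκper, hΓ⟩ := hφ.exists_tangent_angle
  obtain ⟨t, s, d₁, d₂, hbd, hdd, hdT, hs, h₁, h₂, h₃⟩ := hg.exists_im_sign_changes b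
  have hΓper : Function.Periodic (fun s => φ (circleMap 0 1 s)) (2 * π) := fun s =>
    congrArg φ (periodic_circleMap 0 1 s)
  obtain ⟨c, m, hlow, hupp⟩ := exists_chord_separation hA hκ hκper hΓ hΓper hdd (by linarith)
  have hzero := circleAverage_im_sub_mul_im_eq_zero hφ.analyticOnNhd hG
    (by simp [hg.map_zero]) hpair c t m
  have hcont : ContinuousOn (fun ζ => ((c * φ ζ).im - m) *
      (t * ((1 - circleMap 0 1 b * ζ⁻¹) * g ζ⁻¹)).im) (sphere 0 1) :=
    ((continuous_im.comp_continuousOn (continuousOn_const.mul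
      (hφ.analyticOnNhd.continuousOn.mono sphere_subset_closedBall))).sub continuousOn_const).mul
      (continuous_im.comp_continuousOn (continuousOn_const.mul
        (continuousOn_comp_inv (hG.continuousOn.mono sphere_subset_closedBall))))
  refine (circleAverage_pos_of_pos_on_arcs hcont hbd hdd hdT (fun θ hθ => ?_)
    (fun θ hθ => ?_) (fun θ hθ => ?_)).ne' hzero
  · have hshift := hupp (θ + 2 * π) ⟨by linarith [hθ.1], by linarith [hθ.2]⟩
    rw [periodic_circleMap 0 1 θ] at hshift
    exact mul_pos (sub_pos.2 hshift) ((h₁ θ hθ).trans_eq (hs θ).symm)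
  · exact mul_pos_of_neg_of_neg (sub_neg.2 (hlow θ hθ)) ((hs θ).trans_lt (h₂ θ hθ))
  · exact mul_pos (sub_pos.2 (hupp θ ⟨hθ.1, by linarith [hθ.2]⟩))
      ((h₃ θ hθ).trans_eq (hs θ).symm)

end NonVanishing

section NormComparison

theorem convexOnClosedDisc_comp_const_mul {φ : ℂ → ℂ} {U : Set ℂ} {c : ℂ} (hφ : AnalyticOnNhd ℂ φ U)
    (h0 : φ 0 = 0) (hne : ∀ z ∈ U, deriv φ z ≠ 0)
    (hre : ∀ z ∈ U, 0 < (1 + z * deriv (deriv φ) z / deriv φ z).re) (hc : c ≠ 0)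
    (hcU : MapsTo (fun z => c * z) (closedBall 0 1) U) :
    ConvexOnClosedDisc fun z => φ (c * z) := by
  have hderiv : deriv (fun z => φ (c * z)) = fun z => c * deriv φ (c * z) :=
    funext fun z => deriv_comp_mul_left c φ z
  refine ⟨hφ.comp (analyticOnNhd_const.mul analyticOnNhd_id) hcU, by simp [h0], fun z hz => ?_,
    fun z hz => ?_⟩
  · rw [hderiv]
    exact mul_ne_zero hc (hne _ (hcU hz))
  · convert hre _ (hcU hz) using 3
    rw [hderiv, deriv_const_mul_field, deriv_comp_mul_left c (deriv φ) z, smul_eq_mul]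
    have := hne _ (hcU hz)
    field_simp

theorem circlePairing_const_mul_left (c : ℂ) (φ g : ℂ → ℂ) :
    circlePairing (fun ζ => c * φ ζ) g = c * circlePairing φ g := by
  simp only [circlePairing, ← smul_eq_mul c, smul_mul_assoc, Real.circleAverage_fun_smul]

theorem circlePairing_comp_const_mul {φ : ℂ → ℂ} (h0 : φ 0 = 0) (c : ℂ) (g : ℂ → ℂ) :
    circlePairing (fun ζ => φ (c * ζ)) g =
      c * circlePairing (fun ζ => ζ * dslope φ 0 (c * ζ)) g := by
  rw [← circlePairing_const_mul_left]
  congr 1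
  ext ζ
  have := sub_smul_dslope φ 0 (c * ζ)
  rw [sub_zero, h0, sub_zero, smul_eq_mul] at this
  linear_combination -this

theorem continuousOn_circleAverage {X : Type*} [TopologicalSpace X] [FirstCountableTopology X]
    {F : X → ℂ → ℂ} {s : Set X} (hF : ContinuousOn (fun q : X × ℂ => F q.1 q.2) (s ×ˢ sphere 0 1)) :
    ContinuousOn (fun x => circleAverage (F x) 0 1) s := by
  rw [continuousOn_iff_continuous_domRestrict]
  have hcirc : Continuous fun q : s × ℝ => F q.1 (circleMap 0 1 q.2) :=
    hF.comp_continuous (f := fun q : s × ℝ => ((q.1 : X), circleMap 0 1 q.2))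
      (by fun_prop) fun q => ⟨q.1.2, circleMap_zero_one_mem_sphere q.2⟩
  exact (intervalIntegral.continuous_parametric_intervalIntegral_of_continuous' hcirc 0
    (2 * π)).const_smul (2 * π)⁻¹

theorem continuousOn_circlePairing {X : Type*} [TopologicalSpace X] [FirstCountableTopology X]
    {φ : X → ℂ → ℂ} {g : ℂ → ℂ} {s : Set X}
    (hφ : ContinuousOn (fun q : X × ℂ => φ q.1 q.2) (s ×ˢ sphere 0 1))
    (hg : ContinuousOn g (sphere 0 1)) : ContinuousOn (fun x => circlePairing (φ x) g) s :=
  continuousOn_circleAverage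
    (hφ.mul ((continuousOn_comp_inv hg).comp continuousOn_snd fun _ hq => hq.2))

theorem circlePairing_id {g : ℂ → ℂ} (hg : AnalyticOnNhd ℂ g (closedBall 0 1)) (hg0 : g 0 = 0) :
    circlePairing (fun ζ => ζ) g = deriv g 0 := by
  have hslope : DifferentiableOn ℂ (dslope g 0) (closedBall 0 1) :=
    (differentiableOn_dslope (closedBall_mem_nhds 0 one_pos)).2 hg.differentiableOn
  rw [← dslope_same, ← circleAverage_eq_of_differentiableOn hslope, circlePairing,
    ← Real.circleAverage_zero_one_congr_inv]
  refine Real.circleAverage_congr_sphere fun ζ hζ => ?_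
  rw [abs_one] at hζ
  simp [dslope_of_ne _ (ne_of_mem_sphere hζ one_ne_zero), slope_def_field, hg0, div_eq_inv_mul]

theorem circlePairing_id_mul {g : ℂ → ℂ} (hg : AnalyticOnNhd ℂ g (closedBall 0 1)) :
    circlePairing (fun ζ => ζ) (fun w => w * g w) = g 0 := by
  rw [circlePairing_id (analyticOnNhd_id.mul hg) (zero_mul _),
    deriv_fun_mul differentiableAt_fun_id (hg 0 (by simp)).differentiableAt]
  simp

variable {φ g p : ℂ → ℂ}

theorem circlePairing_one_sub_mul (hφ : AnalyticOnNhd ℂ φ (closedBall 0 1))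
    (hg : AnalyticOnNhd ℂ g (closedBall 0 1)) (ζ : ℂ) :
    circlePairing φ (fun w => (1 - ζ * w) * g w) =
      circlePairing φ g - ζ * circlePairing φ (fun w => w * g w) := by
  have hgs := hg.continuousOn.mono sphere_subset_closedBall
  have hwg : ContinuousOn (fun w => w * g w) (sphere 0 1) := continuousOn_id.mul hgs
  rw [sub_eq_add_neg, ← neg_mul, ← circlePairing_add_const_mul
    (hφ.continuousOn.mono sphere_subset_closedBall) hgs hwg]
  congr 1
  ext w
  ring

theorem norm_circlePairing_id_mul_ne (hφ : ConvexOnClosedDisc φ)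
    (hg : StarlikeOnClosedDisc (-1 / 2) g p) :
    ‖circlePairing φ fun w => w * g w‖ ≠ ‖circlePairing φ g‖ := by
  intro h
  have key {ζ : ℂ} (hζ : ζ ∈ sphere (0 : ℂ) 1) := circlePairing_one_sub_mul hφ.analyticOnNhd
    hg.analyticOnNhd ζ ▸ circlePairing_one_sub_mul_ne_zero hφ hg hζ
  rcases eq_or_ne (circlePairing φ fun w => w * g w) 0 with h0 | h0
  · rw [h0, norm_zero, eq_comm, norm_eq_zero] at h
    exact key (ζ := 1) (by simp) (by rw [h, h0, mul_zero, sub_zero])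
  · refine key (ζ := circlePairing φ g / circlePairing φ fun w => w * g w) ?_ ?_
    · rw [mem_sphere_zero_iff_norm, norm_div, ← h, div_self (norm_ne_zero_iff.2 h0)]
    · rw [div_mul_cancel₀ _ h0, sub_self]

theorem continuousOn_mul_dslope_comp (hφ : AnalyticOnNhd ℂ φ (closedBall 0 1)) :
    ContinuousOn (fun q : ℂ × ℂ => q.2 * dslope φ 0 (q.1 * q.2))
      (closedBall 0 1 ×ˢ sphere 0 1) := by
  have hslope : ContinuousOn (dslope φ 0) (closedBall 0 1) :=
    (continuousOn_dslope (closedBall_mem_nhds 0 one_pos)).2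
      ⟨hφ.continuousOn, (hφ 0 (by simp)).differentiableAt⟩
  refine continuousOn_snd.mul (hslope.comp (continuous_fst.mul continuous_snd).continuousOn ?_)
  rintro ⟨c, ζ⟩ ⟨hc, hζ⟩
  simpa [mem_sphere_zero_iff_norm.1 hζ] using hc

/-- Shrinking the disc on which `φ` is taken deforms the comparison to the linear term of `φ`, and
along the deformation the two norms never agree. -/
theorem norm_circlePairing_id_mul_lt (hφ : ConvexOnClosedDisc φ)
    (hg : StarlikeOnClosedDisc (-1 / 2) g p) :
    ‖circlePairing φ fun w => w * g w‖ < ‖circlePairing φ g‖ := by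
  have hwg : AnalyticOnNhd ℂ (fun w => w * g w) (closedBall 0 1) :=
    analyticOnNhd_id.mul hg.analyticOnNhd
  set Φ : ℂ → ℂ → ℂ := fun c ζ => ζ * dslope φ 0 (c * ζ) with hΦdef
  set N : ℂ → ℝ := fun c =>
    ‖circlePairing (Φ c) g‖ - ‖circlePairing (Φ c) fun w => w * g w‖ with hNdef
  have hN : ContinuousOn N (closedBall 0 1) := by
    have hΦc := continuousOn_mul_dslope_comp hφ.analyticOnNhd
    exact (continuousOn_circlePairing hΦc
      (hg.analyticOnNhd.continuousOn.mono sphere_subset_closedBall)).norm.sub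
      (continuousOn_circlePairing hΦc (hwg.continuousOn.mono sphere_subset_closedBall)).norm
  have hN0 : 0 < N 0 := by
    have hΦ0 (k : ℂ → ℂ) : circlePairing (Φ 0) k = deriv φ 0 * circlePairing (fun ζ => ζ) k := by
      rw [← circlePairing_const_mul_left]
      simp only [hΦdef, zero_mul, dslope_same, mul_comm (deriv φ 0)]
    simp only [hNdef, hΦ0, circlePairing_id hg.analyticOnNhd hg.map_zero,
      circlePairing_id_mul hg.analyticOnNhd, hg.map_zero, mul_zero, norm_zero, sub_zero]
    exact norm_pos_iff.2 (mul_ne_zero (hφ.deriv_ne_zero 0 (by simp)) hg.deriv_zero_ne_zero)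
  have hne {c : ℂ} (hc : c ∈ closedBall 0 1) : N c ≠ 0 := by
    rcases eq_or_ne c 0 with rfl | hc0
    · exact hN0.ne'
    have hdil := convexOnClosedDisc_comp_const_mul hφ.analyticOnNhd hφ.map_zero hφ.deriv_ne_zero
      hφ.re_pos hc0 fun z hz => by
        simpa using mul_le_one₀ (mem_closedBall_zero_iff.1 hc) (norm_nonneg z)
          (mem_closedBall_zero_iff.1 hz)
    have h := norm_circlePairing_id_mul_ne hdil hg
    rw [circlePairing_comp_const_mul hφ.map_zero, circlePairing_comp_const_mul hφ.map_zero,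
      norm_mul, norm_mul] at h
    exact sub_ne_zero.2 fun heq => h (by rw [heq])
  have hN1 : N 1 = ‖circlePairing φ g‖ - ‖circlePairing φ fun w => w * g w‖ := by
    have h (k : ℂ → ℂ) : circlePairing (Φ 1) k = circlePairing φ k := by
      simpa [hΦdef] using (circlePairing_comp_const_mul hφ.map_zero 1 k).symm
    simp only [hNdef, h]
  rw [← sub_pos, ← hN1]
  by_contra! hneg
  obtain ⟨c, hc, hNc⟩ := (convex_closedBall (0 : ℂ) 1).isPreconnected.intermediate_value
    (mem_closedBall_zero_iff.2 norm_one.le) (mem_closedBall_self zero_le_one) hN ⟨hneg, hN0.le⟩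
  exact hne hc hNc

end NormComparison

section CayleyKernel

variable {σ : ℝ} {φ g p : ℂ → ℂ} {u : ℂ}

theorem one_sub_mul_ne_zero_of_norm_lt_one {u w : ℂ} (hu : ‖u‖ < 1)
    (hw : w ∈ closedBall (0 : ℂ) 1) : 1 - u * w ≠ 0 := by
  refine sub_ne_zero.2 fun h => ?_
  have : ‖u * w‖ < 1 := by
    rw [norm_mul]
    exact mul_lt_one_of_nonneg_of_lt_one_left (norm_nonneg u) hu (mem_closedBall_zero_iff.1 hw)
  rw [← h, norm_one] at this
  exact this.false

theorem neg_half_lt_re_div_one_sub {z : ℂ} (hz : ‖z‖ < 1) : -(1 / 2) < (z / (1 - z)).re := by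
  have hne : 1 - z ≠ 0 := sub_ne_zero.2 fun h => by simp [← h] at hz
  have hsq : normSq z < 1 := by
    rw [normSq_eq_norm_sq]
    exact pow_lt_one₀ (norm_nonneg z) hz two_ne_zero
  have hpos : 0 < normSq (1 - z) := normSq_pos.2 hne
  rw [div_re, ← add_div, lt_div_iff₀ hpos]
  simp only [normSq_apply, sub_re, sub_im, one_re, one_im] at hsq ⊢
  linarith

theorem StarlikeOnClosedDisc.div_one_sub_mul (hg : StarlikeOnClosedDisc σ g p) (hu : ‖u‖ < 1) :
    StarlikeOnClosedDisc (σ - 1 / 2) (fun w => g w / (1 - u * w))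
      (fun w => p w + u * w / (1 - u * w)) := by
  have hlin : AnalyticOnNhd ℂ (fun w => u * w) (closedBall 0 1) :=
    analyticOnNhd_const.mul analyticOnNhd_id
  have hden : AnalyticOnNhd ℂ (fun w => 1 - u * w) (closedBall 0 1) := analyticOnNhd_const.sub hlin
  have hne (w : ℂ) (hw : w ∈ closedBall (0 : ℂ) 1) := one_sub_mul_ne_zero_of_norm_lt_one hu hw
  have hderiv {w : ℂ} (hw : w ∈ closedBall (0 : ℂ) 1) : deriv (fun w => g w / (1 - u * w)) w =
      (deriv g w * (1 - u * w) + g w * u) / (1 - u * w) ^ 2 := by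
    rw [deriv_fun_div (hg.analyticOnNhd w hw).differentiableAt (hden w hw).differentiableAt
      (hne w hw)]
    simp
  refine ⟨hg.analyticOnNhd.div hden hne, hg.analyticOnNhd_quotient.add (hlin.div hden hne),
    fun w hw => ?_, by simp [hg.quotient_zero], ?_, fun w hw => ?_, fun w hw => ?_⟩
  · rw [hderiv hw, ← mul_div_assoc, add_div' _ _ _ (hne w hw), div_mul_div_comm, ← sq]
    congr 1
    linear_combination (1 - u * w) * hg.mul_deriv w hw
  · rw [hderiv (mem_closedBall_self zero_le_one)]
    simpa [hg.map_zero] using hg.deriv_zero_ne_zero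
  · exact div_ne_zero (hg.ne_zero w hw) (hne w (sphere_subset_closedBall hw))
  · have := neg_half_lt_re_div_one_sub (z := u * w)
      (by simpa [mem_sphere_zero_iff_norm.1 hw] using hu)
    rw [add_re]
    linarith [hg.lt_re_quotient w hw]

theorem circlePairing_congr {k : ℂ → ℂ} (h : EqOn g k (sphere 0 1)) :
    circlePairing φ g = circlePairing φ k :=
  Real.circleAverage_congr_sphere fun ζ hζ => by
    rw [abs_one] at hζ
    simp only [h (inv_mem_sphere_zero_one hζ)]

/-- With `k = g / (1 - u w)`, the pairings of `φ` with `g (1 + u w) / (1 - u w)` and with `g` are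
`M + u L` and `M - u L`, where `M` is the pairing with `k` and `L` the one with `w k`. -/
theorem re_circlePairing_cayley_mul_conj_pos (hφ : ConvexOnClosedDisc φ)
    (hg : StarlikeOnClosedDisc 0 g p) (hu : ‖u‖ < 1) :
    0 < (circlePairing φ (fun w => g w * ((1 + u * w) / (1 - u * w))) *
      conj (circlePairing φ g)).re := by
  set k : ℂ → ℂ := fun w => g w / (1 - u * w) with hk
  have hkstar := hg.div_one_sub_mul hu
  rw [zero_sub, ← neg_div, ← hk] at hkstar
  have hks := hkstar.analyticOnNhd.continuousOn.mono sphere_subset_closedBall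
  have hsplit (c : ℂ) : circlePairing φ k + c * circlePairing φ (fun w => w * k w) =
      circlePairing φ fun w => k w + c * (w * k w) :=
    (circlePairing_add_const_mul (hφ.analyticOnNhd.continuousOn.mono sphere_subset_closedBall) hks
      (continuousOn_id.mul hks) c).symm
  have hplus : circlePairing φ (fun w => g w * ((1 + u * w) / (1 - u * w))) =
      circlePairing φ k + u * circlePairing φ (fun w => w * k w) := by
    rw [hsplit]
    congr 1
    ext w
    rw [hk]
    ring
  have hminus :
      circlePairing φ g = circlePairing φ k + -u * circlePairing φ (fun w => w * k w) := by
    rw [hsplit]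
    refine circlePairing_congr fun w hw => ?_
    have := one_sub_mul_ne_zero_of_norm_lt_one hu (sphere_subset_closedBall hw)
    rw [hk]
    field_simp
    ring
  have hlt := norm_circlePairing_id_mul_lt hφ hkstar
  have hsq : ‖u * circlePairing φ (fun w => w * k w)‖ ^ 2 < ‖circlePairing φ k‖ ^ 2 := by
    rw [norm_mul]
    refine pow_lt_pow_left₀ (lt_of_le_of_lt ?_ hlt) (by positivity) two_ne_zero
    exact mul_le_of_le_one_left (norm_nonneg _) hu.le
  rw [hplus, hminus]
  rw [← normSq_eq_norm_sq, ← normSq_eq_norm_sq, normSq_apply, normSq_apply] at hsq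
  simp only [neg_mul, mul_re (_ + _), map_add, map_neg, add_re, add_im, neg_re, neg_im, conj_re,
    conj_im]
  linarith

end CayleyKernel

section Herglotz

theorem continuousOn_comp_mul_of_norm_lt_one {q : ℂ → ℂ} (hq : ContinuousOn q (closedBall 0 1))
    {c : ℂ} (hc : ‖c‖ < 1) : ContinuousOn (fun w => q (c * w)) (sphere 0 1) :=
  hq.comp (continuous_const.mul continuous_id).continuousOn fun w hw => by
    simpa [mem_sphere_zero_iff_norm.1 hw] using hc.le

theorem eq_of_re_eq_zero {F : ℂ → ℂ} {U : Set ℂ} (hF : AnalyticOnNhd ℂ F U)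
    (hU : IsOpen U) (hUc : IsPreconnected U) (hre : ∀ z ∈ U, (F z).re = 0) {z w : ℂ} (hz : z ∈ U)
    (hw : w ∈ U) : F z = F w := by
  rcases hF.is_constant_or_isOpen hUc with ⟨c, hc⟩ | hopen
  · rw [hc z hz, hc w hw]
  · have himage : F '' U ⊆ re ⁻¹' {0} := image_subset_iff.2 hre
    have hinterior : F z ∈ interior (re ⁻¹' {0}) :=
      interior_maximal himage (hopen U subset_rfl hU) (mem_image_of_mem F hz)
    rw [interior_preimage_re, interior_singleton] at hinterior
    exact absurd hinterior (notMem_empty _)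

theorem re_circleAverage_herglotzRieszKernel_mul_re {q : ℂ → ℂ}
    (hq : AnalyticOnNhd ℂ q (closedBall 0 1)) {w : ℂ} (hw : w ∈ ball (0 : ℂ) 1) :
    (circleAverage (fun ζ => herglotzRieszKernel 0 w ζ * (q ζ).re) 0 1).re = (q w).re := by
  have hqs := hq.continuousOn.mono (sphere_subset_closedBall (x := (0 : ℂ)) (ε := 1))
  have hre : CircleIntegrable (fun ζ => (q ζ).re) 0 1 :=
    (continuous_re.comp_continuousOn hqs).circleIntegrable zero_le_one
  have hker : ContinuousOn (fun ζ => (herglotzRieszKernel 0 w ζ).re) (sphere 0 1) :=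
    continuous_re.comp_continuousOn
      (abs_one (α := ℝ) ▸ continuousOn_herglotzRieszKernel_sphere hw)
  have hint : CircleIntegrable (fun ζ => (herglotzRieszKernel 0 w ζ).re • q ζ) 0 1 :=
    (hker.smul hqs).circleIntegrable zero_le_one
  have hdiff : DiffContOnCl ℂ q (ball 0 1) := by
    refine DifferentiableOn.diffContOnCl ?_
    rw [closure_ball _ one_ne_zero]
    exact hq.differentiableOn
  refine (re_circleAverage_herglotzRieszKernel_smul hre hw).trans ?_
  rw [← hdiff.circleAverage_re_herglotzRieszKernel_smul hw]
  refine Eq.trans ?_ (reCLM.circleAverage_comp_comm hint)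
  congr 1
  ext ζ
  simp

theorem eq_circleAverage_herglotzRieszKernel {q : ℂ → ℂ} (hq : AnalyticOnNhd ℂ q (closedBall 0 1))
    {w : ℂ} (hw : w ∈ ball (0 : ℂ) 1) :
    q w = circleAverage (fun ζ => herglotzRieszKernel 0 w ζ * (q ζ).re) 0 1 + I * (q 0).im := by
  have hqs := hq.continuousOn.mono (sphere_subset_closedBall (x := (0 : ℂ)) (ε := 1))
  have hre : ContinuousOn (fun ζ => (q ζ).re) (sphere 0 1) := continuous_re.comp_continuousOn hqs
  set A : ℂ → ℂ := fun w => circleAverage (fun ζ => herglotzRieszKernel 0 w ζ * (q ζ).re) 0 1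
  have h0 : (0 : ℂ) ∈ ball (0 : ℂ) 1 := mem_ball_self one_pos
  have hA : AnalyticOnNhd ℂ A (ball 0 1) :=
    analyticOnNhd_circleAverage_herglotzRieszKernel_smul
      ((continuous_ofReal.comp_continuousOn hre).circleIntegrable zero_le_one)
  have hA0im : (A 0).im = 0 := by
    have hreal : A 0 = circleAverage (fun ζ => ((q ζ).re : ℂ)) 0 1 :=
      Real.circleAverage_congr_sphere fun ζ hζ => by
        simp [herglotzRieszKernel_def, ne_of_mem_sphere hζ]
    rw [hreal]
    exact congrArg im (ofRealCLM.circleAverage_comp_comm (hre.circleIntegrable zero_le_one))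
  have hA0 : A 0 = (q 0).re :=
    Complex.ext (re_circleAverage_herglotzRieszKernel_mul_re hq h0) hA0im
  have hconst : q w - A w = q 0 - A 0 :=
    eq_of_re_eq_zero ((hq.mono ball_subset_closedBall).sub hA) isOpen_ball
      (convex_ball 0 1).isPreconnected (fun z hz => by
        simp only [Pi.sub_apply, sub_re, A, re_circleAverage_herglotzRieszKernel_mul_re hq hz,
          sub_self]) hw h0
  rw [← sub_eq_iff_eq_add', hconst, hA0, sub_eq_iff_eq_add', mul_comm, re_add_im]

theorem circleAverage_pos {f : ℂ → ℝ} (hf : ContinuousOn f (sphere 0 1))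
    (hpos : ∀ ζ ∈ sphere (0 : ℂ) 1, 0 < f ζ) : 0 < circleAverage f 0 1 :=
  smul_pos (inv_pos.2 Real.two_pi_pos) (intervalIntegral.intervalIntegral_pos_of_pos
    (hf.circleIntegrable zero_le_one) (fun θ => hpos _ (circleMap_zero_one_mem_sphere θ))
    Real.two_pi_pos)

theorem circleAverage_circleAverage_swap {F : ℂ → ℂ → ℂ}
    (hF : ContinuousOn (fun q : ℂ × ℂ => F q.1 q.2) (sphere 0 1 ×ˢ sphere 0 1)) :
    circleAverage (fun ζ => circleAverage (F ζ) 0 1) 0 1 =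
      circleAverage (fun η => circleAverage (fun ζ => F ζ η) 0 1) 0 1 := by
  have hcont : Continuous fun q : ℝ × ℝ => F (circleMap 0 1 q.1) (circleMap 0 1 q.2) :=
    hF.comp_continuous (f := fun q : ℝ × ℝ => (circleMap 0 1 q.1, circleMap 0 1 q.2)) (by fun_prop)
      fun q => ⟨circleMap_zero_one_mem_sphere q.1, circleMap_zero_one_mem_sphere q.2⟩
  simp only [Real.circleAverage_def, intervalIntegral.integral_smul]
  congr 2
  refine MeasureTheory.intervalIntegral_intervalIntegral_swap ?_
  exact (hcont.continuousOn.integrableOn_compact (isCompact_uIcc.prod isCompact_uIcc)).mono_set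
    (prod_mono uIoc_subset_uIcc uIoc_subset_uIcc)

variable {φ g k p q : ℂ → ℂ} {c : ℂ}

theorem continuousOn_herglotzRieszKernel_comp_inv (hc : ‖c‖ < 1) :
    ContinuousOn (fun q : ℂ × ℂ => herglotzRieszKernel 0 (c * q.2⁻¹) q.1)
      (sphere 0 1 ×ˢ sphere 0 1) := by
  have hinv : ContinuousOn (fun q : ℂ × ℂ => c * q.2⁻¹) (sphere 0 1 ×ˢ sphere 0 1) :=
    continuousOn_const.mul (continuousOn_snd.inv₀ fun q hq => ne_of_mem_sphere hq.2 one_ne_zero)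
  simp only [herglotzRieszKernel_def, sub_zero]
  refine (continuousOn_fst.add hinv).div (continuousOn_fst.sub hinv) fun q hq => ?_
  refine sub_ne_zero.2 fun h => hc.ne ?_
  have := congrArg norm h
  simpa [mem_sphere_zero_iff_norm.1 hq.1, mem_sphere_zero_iff_norm.1 hq.2] using this.symm

theorem continuousOn_mul_herglotzRieszKernel (hφ : ContinuousOn φ (sphere 0 1))
    (hk : ContinuousOn k (sphere 0 1)) (hc : ‖c‖ < 1) :
    ContinuousOn (fun x : ℂ × ℂ => φ x.2 * (k x.2⁻¹ * herglotzRieszKernel 0 (c * x.2⁻¹) x.1))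
      (sphere 0 1 ×ˢ sphere 0 1) :=
  (hφ.comp continuousOn_snd fun _ hx => hx.2).mul
    (((continuousOn_comp_inv hk).comp continuousOn_snd fun _ hx => hx.2).mul
      (continuousOn_herglotzRieszKernel_comp_inv hc))

theorem herglotzRieszKernel_zero_mul (c w : ℂ) {η : ℂ} (hη : η ≠ 0) :
    herglotzRieszKernel 0 (c * w) η = (1 + c * η⁻¹ * w) / (1 - c * η⁻¹ * w) := by
  rw [herglotzRieszKernel_def, sub_zero, sub_zero, ← mul_div_mul_left _ (1 - c * η⁻¹ * w) hη]
  congr 1 <;> field_simp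

theorem circlePairing_mul_comp_eq_circleAverage (hφ : ContinuousOn φ (sphere 0 1))
    (hk : ContinuousOn k (sphere 0 1)) (hq : AnalyticOnNhd ℂ q (closedBall 0 1)) (hc : ‖c‖ < 1) :
    circlePairing φ (fun w => k w * q (c * w)) =
      circleAverage (fun η => (q η).re *
        circlePairing φ (fun w => k w * herglotzRieszKernel 0 (c * w) η)) 0 1 +
        I * (q 0).im * circlePairing φ k := by
  set A : ℂ → ℂ := fun w => circleAverage (fun η => herglotzRieszKernel 0 (c * w) η * (q η).re) 0 1
  have hA (w : ℂ) (hw : w ∈ sphere (0 : ℂ) 1) : q (c * w) = A w + I * (q 0).im :=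
    eq_circleAverage_herglotzRieszKernel hq (by simpa [mem_sphere_zero_iff_norm.1 hw] using hc)
  have hAc : ContinuousOn A (sphere 0 1) :=
    ((continuousOn_comp_mul_of_norm_lt_one hq.continuousOn hc).sub
      (continuousOn_const (c := I * ((q 0).im : ℂ)))).congr
        fun w hw => eq_sub_of_add_eq (hA w hw).symm
  have hF : ContinuousOn (fun x : ℂ × ℂ => ((q x.1).re : ℂ) *
      (φ x.2 * (k x.2⁻¹ * herglotzRieszKernel 0 (c * x.2⁻¹) x.1))) (sphere 0 1 ×ˢ sphere 0 1) :=
    (continuous_ofReal.comp_continuousOn (continuous_re.comp_continuousOn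
      ((hq.continuousOn.mono sphere_subset_closedBall).comp continuousOn_fst fun _ hx => hx.1))).mul
      (continuousOn_mul_herglotzRieszKernel hφ hk hc)
  have hswap : circlePairing φ (fun w => k w * A w) = circleAverage (fun η => (q η).re *
      circlePairing φ (fun w => k w * herglotzRieszKernel 0 (c * w) η)) 0 1 := by
    simp only [circlePairing, A, ← smul_eq_mul, ← Real.circleAverage_fun_smul]
    simp only [smul_eq_mul]
    refine Eq.trans ?_ (circleAverage_circleAverage_swap hF).symm
    congr! 4
    ring
  have hkA : ContinuousOn (fun w => k w * A w) (sphere 0 1) := hk.mul hAc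
  rw [← hswap, ← circlePairing_add_const_mul hφ hkA hk]
  exact circlePairing_congr fun w hw => by
    simp only [hA w hw]
    ring

theorem re_circlePairing_mul_comp_mul_conj_pos (hφ : ConvexOnClosedDisc φ)
    (hg : StarlikeOnClosedDisc 0 g p) (hq : AnalyticOnNhd ℂ q (closedBall 0 1))
    (hqpos : ∀ z ∈ sphere (0 : ℂ) 1, 0 < (q z).re) (hc : ‖c‖ < 1) :
    0 < (circlePairing φ (fun w => g w * q (c * w)) * conj (circlePairing φ g)).re := by
  have hφs := hφ.analyticOnNhd.continuousOn.mono (sphere_subset_closedBall (x := (0 : ℂ)) (ε := 1))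
  have hgs := hg.analyticOnNhd.continuousOn.mono (sphere_subset_closedBall (x := (0 : ℂ)) (ε := 1))
  have hqs := hq.continuousOn.mono (sphere_subset_closedBall (x := (0 : ℂ)) (ε := 1))
  set P : ℂ → ℂ := fun η => circlePairing φ (fun w => g w * herglotzRieszKernel 0 (c * w) η)
  have hP (η : ℂ) (hη : η ∈ sphere (0 : ℂ) 1) : 0 < (P η * conj (circlePairing φ g)).re := by
    have hu : ‖c * η⁻¹‖ < 1 := by simpa [mem_sphere_zero_iff_norm.1 hη] using hc
    simpa only [P, herglotzRieszKernel_zero_mul c _ (ne_of_mem_sphere hη one_ne_zero)] using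
      re_circlePairing_cayley_mul_conj_pos hφ hg hu
  have hPc : ContinuousOn P (sphere 0 1) :=
    continuousOn_circleAverage (continuousOn_mul_herglotzRieszKernel hφs hgs hc)
  have hqP : ContinuousOn (fun η => ((q η).re : ℂ) * P η) (sphere 0 1) :=
    ((continuous_ofReal.comp continuous_re).comp_continuousOn hqs).mul hPc
  have hint : CircleIntegrable (fun η => conj (circlePairing φ g) • ((q η).re * P η)) 0 1 :=
    (hqP.circleIntegrable zero_le_one).const_smul
  have havg : (circlePairing φ (fun w => g w * q (c * w)) * conj (circlePairing φ g)).re =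
      circleAverage (fun η => (q η).re * (P η * conj (circlePairing φ g)).re) 0 1 := by
    rw [circlePairing_mul_comp_eq_circleAverage hφs hgs hq hc, add_mul, mul_assoc (I * _), mul_conj,
      mul_comm (circleAverage _ _ _), ← smul_eq_mul, ← Real.circleAverage_fun_smul, add_re,
      mul_assoc, ← ofReal_mul, I_mul_re, ofReal_im, neg_zero, add_zero]
    refine (reCLM.circleAverage_comp_comm hint).symm.trans (congrArg (circleAverage · 0 1) ?_)
    ext η
    rw [Function.comp_apply, smul_eq_mul, mul_left_comm, reCLM_apply, re_ofReal_mul,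
      mul_comm (conj _)]
  rw [havg]
  refine circleAverage_pos ?_ fun η hη => mul_pos (hqpos η hη) (hP η hη)
  exact (continuous_re.comp_continuousOn hqs).mul
    (continuous_re.comp_continuousOn (hPc.mul continuousOn_const))

end Herglotz

section HadamardProduct

variable {a b : ℕ → ℂ} {f g : ℂ → ℂ}

theorem circlePairing_comm (φ g : ℂ → ℂ) : circlePairing φ g = circlePairing g φ := by
  rw [circlePairing, ← Real.circleAverage_zero_one_congr_inv]
  simp only [inv_inv, mul_comm, circlePairing]

theorem circlePairing_pow_pow (m n : ℕ) :
    circlePairing (· ^ m) (· ^ n) = if m = n then 1 else 0 := by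
  wlog hnm : n ≤ m generalizing m n
  · rw [circlePairing_comm, this n m (le_of_not_ge hnm)]
    simp only [eq_comm]
  obtain ⟨k, rfl⟩ := Nat.exists_eq_add_of_le hnm
  have hcancel : circlePairing (· ^ (n + k)) (· ^ n) = circleAverage (· ^ k) 0 1 :=
    Real.circleAverage_congr_sphere fun ζ hζ => by
      have hne : ζ ≠ 0 := ne_of_mem_sphere hζ (by simp)
      simp only [pow_add, inv_pow]
      field_simp
  rw [hcancel, circleAverage_eq_of_differentiableOn (by fun_prop)]
  rcases eq_or_ne k 0 with rfl | hk <;> simp_all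

theorem hasSum_circlePairing (ha : Summable fun n => ‖a n‖)
    (hf : ∀ ζ ∈ sphere (0 : ℂ) 1, HasSum (fun n => a n * ζ ^ n) (f ζ))
    (hg : ContinuousOn g (sphere 0 1)) :
    HasSum (fun n => a n * circlePairing (· ^ n) g) (circlePairing f g) := by
  have hgc : Continuous fun θ => g (circleMap 0 1 θ)⁻¹ :=
    (continuousOn_comp_inv hg).comp_continuous (continuous_circleMap 0 1)
      circleMap_zero_one_mem_sphere
  simp only [← circlePairing_const_mul_left]
  refine HasSum.const_smul (f := fun n => ∫ θ in (0 : ℝ)..2 * π, a n * circleMap 0 1 θ ^ n *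
    g (circleMap 0 1 θ)⁻¹) _ ?_
  refine intervalIntegral.hasSum_integral_of_dominated_convergence
    (fun n θ => ‖a n‖ * ‖g (circleMap 0 1 θ)⁻¹‖) (fun n => ?_) (fun n => ?_) ?_ ?_ ?_
  · exact ((continuous_const.mul ((continuous_circleMap 0 1).pow n)).mul hgc).aestronglyMeasurable
  · exact .of_forall fun θ _ => by simp
  · exact .of_forall fun θ _ => ha.mul_right _
  · simp_rw [tsum_mul_right]
    exact (continuous_const.mul hgc.norm).intervalIntegrable _ _
  · exact .of_forall fun θ _ => (hf _ (circleMap_zero_one_mem_sphere θ)).mul_right _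

theorem circlePairing_pow (hb : Summable fun n => ‖b n‖)
    (hg : ∀ ζ ∈ sphere (0 : ℂ) 1, HasSum (fun n => b n * ζ ^ n) (g ζ)) (n : ℕ) :
    circlePairing (· ^ n) g = b n := by
  rw [circlePairing_comm]
  refine (hasSum_circlePairing hb hg (continuous_pow n).continuousOn).unique ?_
  simpa [circlePairing_pow_pow] using
    hasSum_single (f := fun m => b m * circlePairing (· ^ m) (· ^ n))
    n fun m hm => by rw [circlePairing_pow_pow, if_neg hm, mul_zero]

theorem hasSum_comp_const_mul (hf : ∀ z ∈ 𝔻, HasSum (fun n => a n * z ^ n) (f z)) {x : ℂ}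
    (hx : x ∈ 𝔻) :
    (Summable fun n => ‖a n * x ^ n‖) ∧
      ∀ ζ ∈ sphere (0 : ℂ) 1, HasSum (fun n => a n * x ^ n * ζ ^ n) (f (x * ζ)) := by
  refine ⟨(hf x hx).summable.norm, fun ζ hζ => ?_⟩
  have hmem : x * ζ ∈ 𝔻 := by simpa [𝔻, mem_sphere_zero_iff_norm.1 hζ] using hx
  simpa only [mul_pow, mul_assoc] using hf _ hmem

theorem hasSum_hadamard_circlePairing (hf : ∀ z ∈ 𝔻, HasSum (fun n => a n * z ^ n) (f z))
    (hg : ∀ z ∈ 𝔻, HasSum (fun n => b n * z ^ n) (g z)) (hgc : ContinuousOn g 𝔻) {x y : ℂ}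
    (hx : x ∈ 𝔻) (hy : y ∈ 𝔻) :
    HasSum (fun n => a n * b n * (x * y) ^ n)
      (circlePairing (fun ζ => f (x * ζ)) fun ζ => g (y * ζ)) := by
  obtain ⟨ha, hfx⟩ := hasSum_comp_const_mul hf hx
  obtain ⟨hb, hgy⟩ := hasSum_comp_const_mul hg hy
  have hgyc : ContinuousOn (fun ζ => g (y * ζ)) (sphere 0 1) :=
    hgc.comp (continuous_const_mul y).continuousOn fun ζ hζ => by
      simpa [𝔻, mem_sphere_zero_iff_norm.1 hζ] using hy
  refine (hasSum_circlePairing ha hfx hgyc).congr_fun fun n => ?_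
  rw [circlePairing_pow hb hgy]
  ring

theorem hasSum_mul_deriv (hf : ∀ z ∈ 𝔻, HasSum (fun n => a n * z ^ n) (f z)) {z : ℂ}
    (hz : z ∈ 𝔻) : HasSum (fun n => n * a n * z ^ n) (z * deriv f z) := by
  have hz' : ‖z‖ < 1 := mem_ball_zero_iff.1 hz
  obtain ⟨r, hzr, hr1⟩ := exists_between hz'
  have hr0 : 0 < r := (norm_nonneg z).trans_lt hzr
  have hsummable : Summable fun n => ‖a n‖ * r ^ n := by
    simpa [abs_of_pos hr0] using
      (hf r (by simpa [𝔻, abs_of_pos hr0] using hr1)).summable.norm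
  have hterm := Complex.hasSum_deriv_of_summable_norm (F := fun n w => a n * w ^ n)
    (U := ball (0 : ℂ) r) hsummable (fun n => by fun_prop) isOpen_ball (fun n w hw => by
      rw [norm_mul, norm_pow]
      gcongr
      exact (mem_ball_zero_iff.1 hw).le) (mem_ball_zero_iff.2 hzr)
  have hderiv : deriv (fun w => ∑' n, a n * w ^ n) z = deriv f z :=
    Filter.EventuallyEq.deriv_eq <| Filter.eventuallyEq_of_mem (isOpen_ball.mem_nhds hz)
      fun w hw => (hf w hw).tsum_eq
  rw [hderiv] at hterm
  refine (hterm.mul_left z).congr_fun fun n => ?_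
  rw [deriv_const_mul_field, deriv_pow_field]
  rcases n with _ | n
  · simp
  · rw [Nat.add_sub_cancel]
    ring

end HadamardProduct

section ConvexConvolution

variable {α β : ℝ} {a b : ℕ → ℂ} {φ f g h : ℂ → ℂ} {x y z : ℂ}

theorem mapsTo_const_mul_closedBall (hx : x ∈ 𝔻) : MapsTo (fun z => x * z) (closedBall 0 1) 𝔻 :=
  fun z hz => mem_ball_zero_iff.2 <| by
    rw [norm_mul]
    exact mul_lt_one_of_nonneg_of_lt_one_left (norm_nonneg x) (mem_ball_zero_iff.1 hx)
      (mem_closedBall_zero_iff.1 hz)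

theorem IsClassA.analyticOnNhd (hf : IsClassA f) : AnalyticOnNhd ℂ f 𝔻 :=
  hf.1.analyticOnNhd isOpen_ball

theorem IsConvexFn.convexOnClosedDisc (hφ : IsConvexFn φ) (hx : x ∈ 𝔻) (hx0 : x ≠ 0) :
    ConvexOnClosedDisc fun z => φ (x * z) :=
  convexOnClosedDisc_comp_const_mul hφ.1.analyticOnNhd hφ.1.2.1 hφ.2.1 hφ.2.2 hx0
    (mapsTo_const_mul_closedBall hx)

theorem StarlikeOrder.mono (hf : StarlikeOrder β f) (h : α ≤ β) : StarlikeOrder α f :=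
  ⟨hf.1, hf.2.1, fun z hz hz0 => h.trans_lt (hf.2.2 z hz hz0)⟩

/-- The quotient `z * deriv f z / f z`, continued analytically to `0` when `f` has a simple zero
there. -/
def starlikeQuotient (f : ℂ → ℂ) (z : ℂ) : ℂ :=
  deriv f z / dslope f 0 z

theorem IsClassA.mul_dslope (hf : IsClassA f) (z : ℂ) : z * dslope f 0 z = f z := by
  simpa [hf.2.1] using sub_smul_dslope f 0 z

theorem IsClassA.analyticOnNhd_dslope (hf : IsClassA f) : AnalyticOnNhd ℂ (dslope f 0) 𝔻 :=
  ((differentiableOn_dslope (isOpen_ball.mem_nhds (mem_ball_self one_pos))).2 hf.1).analyticOnNhd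
    isOpen_ball

namespace StarlikeOrder

theorem dslope_ne_zero (hf : StarlikeOrder α f) (hz : z ∈ 𝔻) : dslope f 0 z ≠ 0 := by
  rcases eq_or_ne z 0 with rfl | hz0
  · rw [dslope_same, hf.1.2.2]
    exact one_ne_zero
  · exact right_ne_zero_of_mul (hf.1.mul_dslope z ▸ hf.2.1 z hz hz0)

theorem analyticOnNhd_starlikeQuotient (hf : StarlikeOrder α f) :
    AnalyticOnNhd ℂ (starlikeQuotient f) 𝔻 :=
  hf.1.analyticOnNhd.deriv.div hf.1.analyticOnNhd_dslope fun _ => hf.dslope_ne_zero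

theorem starlikeQuotient_zero (hf : StarlikeOrder α f) : starlikeQuotient f 0 = 1 := by
  rw [starlikeQuotient, dslope_same, hf.1.2.2, div_one]

theorem mul_deriv_eq (hf : StarlikeOrder α f) (hz : z ∈ 𝔻) :
    z * deriv f z = starlikeQuotient f z * f z := by
  rw [starlikeQuotient, ← hf.1.mul_dslope z, mul_left_comm,
    div_mul_cancel₀ _ (hf.dslope_ne_zero hz)]

theorem lt_re_starlikeQuotient (hf : StarlikeOrder α f) (hz : z ∈ 𝔻) (hz0 : z ≠ 0) :
    α < (starlikeQuotient f z).re := by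
  rw [eq_div_of_mul_eq (hf.2.1 z hz hz0) (hf.mul_deriv_eq hz).symm]
  exact hf.2.2 z hz hz0

theorem starlikeOnClosedDisc (hf : StarlikeOrder α f) (hx : x ∈ 𝔻) (hx0 : x ≠ 0) :
    StarlikeOnClosedDisc α (fun z => f (x * z)) (fun z => starlikeQuotient f (x * z)) := by
  have hmaps := mapsTo_const_mul_closedBall hx
  have hlin : AnalyticOnNhd ℂ (fun z => x * z) (closedBall 0 1) :=
    analyticOnNhd_const.mul analyticOnNhd_id
  have hderiv : deriv (fun z => f (x * z)) = fun z => x * deriv f (x * z) :=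
    funext fun z => deriv_comp_mul_left x f z
  have hmem {z : ℂ} (hz : z ∈ sphere (0 : ℂ) 1) : x * z ∈ 𝔻 ∧ x * z ≠ 0 :=
    ⟨hmaps (sphere_subset_closedBall hz), mul_ne_zero hx0 (ne_of_mem_sphere hz one_ne_zero)⟩
  refine ⟨hf.1.analyticOnNhd.comp hlin hmaps, hf.analyticOnNhd_starlikeQuotient.comp hlin hmaps,
    fun z hz => ?_, ?_, ?_, fun z hz => hf.2.1 _ (hmem hz).1 (hmem hz).2,
    fun z hz => hf.lt_re_starlikeQuotient (hmem hz).1 (hmem hz).2⟩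
  · rw [← hf.mul_deriv_eq (hmaps hz), hderiv, mul_left_comm, mul_assoc]
  · rw [mul_zero, hf.starlikeQuotient_zero]
  · simpa [hderiv, hf.1.2.2] using hx0

end StarlikeOrder

theorem hasSum_mul_deriv_sub (hf : ∀ z ∈ 𝔻, HasSum (fun n => a n * z ^ n) (f z)) (k : ℂ)
    (hz : z ∈ 𝔻) : HasSum (fun n => (n - k) * a n * z ^ n) (z * deriv f z - k * f z) :=
  ((hasSum_mul_deriv hf hz).sub ((hf z hz).mul_left k)).congr_fun fun n => by ring

theorem circlePairing_mul_starlikeQuotient_sub (hg : StarlikeOrder α g)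
    (hfa : ∀ z ∈ 𝔻, HasSum (fun n => a n * z ^ n) (f z))
    (hgb : ∀ z ∈ 𝔻, HasSum (fun n => b n * z ^ n) (g z))
    (hh : ∀ z ∈ 𝔻, HasSum (fun n => a n * b n * z ^ n) (h z)) (hx : x ∈ 𝔻) (hy : y ∈ 𝔻) (k : ℂ) :
    circlePairing (fun ζ => f (x * ζ)) (fun ζ => g (y * ζ) * (starlikeQuotient g (y * ζ) - k)) =
      x * y * deriv h (x * y) - k * h (x * y) := by
  have hgc : ContinuousOn (fun w => w * deriv g w - k * g w) 𝔻 :=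
    (continuousOn_id.mul hg.1.analyticOnNhd.deriv.continuousOn).sub
      (continuousOn_const.mul hg.1.1.continuousOn)
  have hsum := hasSum_hadamard_circlePairing hfa (fun w => hasSum_mul_deriv_sub hgb k) hgc hx hy
  have hxy : x * y ∈ 𝔻 := mapsTo_const_mul_closedBall hx (ball_subset_closedBall hy)
  rw [← (hsum.congr_fun fun n => by ring).unique (hasSum_mul_deriv_sub hh k hxy)]
  refine circlePairing_congr fun w hw => ?_
  have := hg.mul_deriv_eq (mapsTo_const_mul_closedBall hy (sphere_subset_closedBall hw))
  simp only [this, mul_sub, mul_comm]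

/-- Writing `z = x ^ 3`, the three factors are spent on dilating `φ`, on dilating `g`, and on the
margin `c` required by the pairing with the quotient of `g`. -/
theorem re_mul_deriv_sub_mul_conj_pos (hφ : IsConvexFn φ) (hα : 0 ≤ α) (hg : StarlikeOrder α g)
    (hφa : ∀ z ∈ 𝔻, HasSum (fun n => a n * z ^ n) (φ z))
    (hgb : ∀ z ∈ 𝔻, HasSum (fun n => b n * z ^ n) (g z))
    (hh : ∀ z ∈ 𝔻, HasSum (fun n => a n * b n * z ^ n) (h z)) (hz : z ∈ 𝔻) (hz0 : z ≠ 0) :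
    0 < ((z * deriv h z - α * h z) * conj (h z)).re := by
  obtain ⟨x, rfl⟩ := IsAlgClosed.exists_pow_nat_eq z three_pos
  have hx0 : x ≠ 0 := ne_zero_pow three_ne_zero hz0
  have hx1 : ‖x‖ < 1 := by simpa [𝔻, pow_lt_one_iff_of_nonneg] using hz
  have hx : x ∈ 𝔻 := mem_ball_zero_iff.2 hx1
  have hxx : x * x ∈ 𝔻 := mapsTo_const_mul_closedBall hx (ball_subset_closedBall hx)
  have hcube : x * (x * x) = x ^ 3 := by ring
  have hpair : circlePairing (fun ζ => φ (x * ζ)) (fun ζ => g (x * x * ζ)) = h (x ^ 3) :=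
    (hcube ▸ hasSum_hadamard_circlePairing hφa hgb hg.1.1.continuousOn hx hxx).unique (hh _ hz)
  have hgx := hg.starlikeOnClosedDisc hx hx0
  have hq : AnalyticOnNhd ℂ (fun w => starlikeQuotient g (x * w) - α) (closedBall 0 1) :=
    hgx.analyticOnNhd_quotient.sub analyticOnNhd_const
  have hqpos (w : ℂ) (hw : w ∈ sphere (0 : ℂ) 1) : 0 < (starlikeQuotient g (x * w) - α).re := by
    simpa using hgx.lt_re_quotient w hw
  have hpos := re_circlePairing_mul_comp_mul_conj_pos (hφ.convexOnClosedDisc hx hx0)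
    ((hg.mono hα).starlikeOnClosedDisc hxx (mul_ne_zero hx0 hx0)) hq hqpos hx1
  simp only [← mul_assoc x x] at hpos
  rwa [circlePairing_mul_starlikeQuotient_sub hg hφa hgb hh hx hxx, hpair, hcube] at hpos

theorem lt_re_mul_deriv_div_of_isConvexFn (hφ : IsConvexFn φ) (hα : 0 ≤ α) (hg : StarlikeOrder α g)
    (hφa : ∀ z ∈ 𝔻, HasSum (fun n => a n * z ^ n) (φ z))
    (hgb : ∀ z ∈ 𝔻, HasSum (fun n => b n * z ^ n) (g z))
    (hh : ∀ z ∈ 𝔻, HasSum (fun n => a n * b n * z ^ n) (h z)) (hz : z ∈ 𝔻) (hz0 : z ≠ 0) :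
    h z ≠ 0 ∧ α < (z * deriv h z / h z).re := by
  have hpos := re_mul_deriv_sub_mul_conj_pos hφ hα hg hφa hgb hh hz hz0
  have hne : h z ≠ 0 := fun h0 => by simp [h0] at hpos
  refine ⟨hne, sub_pos.1 ?_⟩
  have hdiv : z * deriv h z / h z - α = (z * deriv h z - α * h z) * conj (h z) / normSq (h z) := by
    rw [normSq_eq_conj_mul_self]
    field_simp [(map_ne_zero conj).2 hne]
  rw [← ofReal_re α, ← sub_re, hdiv, div_ofReal_re]
  exact div_pos hpos (normSq_pos.2 hne)

end ConvexConvolution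

section RadiusOfConvexity

variable {p f : ℂ → ℂ} {v w z : ℂ}

theorem norm_sub_le_norm_add_conj (hv : 0 ≤ v.re) (hw : 0 ≤ w.re) : ‖v - w‖ ≤ ‖v + conj w‖ := by
  rw [← sq_le_sq₀ (norm_nonneg _) (norm_nonneg _), ← normSq_eq_norm_sq, ← normSq_eq_norm_sq,
    normSq_sub, normSq_add, normSq_conj, conj_conj]
  simp only [mul_re, conj_re, conj_im]
  nlinarith [mul_nonneg hv hw]

theorem add_conj_ne_zero_of_re_pos (hv : 0 < v.re) (hw : 0 < w.re) : v + conj w ≠ 0 := fun h => by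
  have := congrArg re h
  rw [add_re, conj_re, zero_re] at this
  linarith

/-- The Cayley transform sending `p 0` to `0` carries `p` to a self-map of the disc. -/
theorem mapsTo_cayley_comp (hpos : ∀ z ∈ ball (0 : ℂ) 1, 0 < (p z).re) :
    MapsTo (fun z => (p z - p 0) / (p z + conj (p 0))) (ball 0 1) (closedBall 0 1) := fun z hz => by
  rw [mem_closedBall_zero_iff, norm_div]
  exact div_le_one_of_le₀ (norm_sub_le_norm_add_conj (hpos z hz).le
    (hpos 0 (mem_ball_self one_pos)).le) (norm_nonneg _)

theorem differentiableOn_cayley_comp (hp : DifferentiableOn ℂ p (ball 0 1))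
    (hpos : ∀ z ∈ ball (0 : ℂ) 1, 0 < (p z).re) :
    DifferentiableOn ℂ (fun z => (p z - p 0) / (p z + conj (p 0))) (ball 0 1) :=
  (hp.sub_const _).div (hp.add_const _) fun z hz =>
    add_conj_ne_zero_of_re_pos (hpos z hz) (hpos 0 (mem_ball_self one_pos))

theorem norm_sub_le_mul_norm_add_conj_of_re_pos (hp : DifferentiableOn ℂ p (ball 0 1))
    (hpos : ∀ z ∈ ball (0 : ℂ) 1, 0 < (p z).re) (hz : z ∈ ball (0 : ℂ) 1) :
    ‖p z - p 0‖ ≤ ‖z‖ * ‖p z + conj (p 0)‖ := by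
  have hschwarz := norm_le_norm_of_mapsTo_ball (differentiableOn_cayley_comp hp hpos)
    (mapsTo_cayley_comp hpos) (by simp) (mem_ball_zero_iff.1 hz)
  rwa [norm_div, div_le_iff₀ (norm_pos_iff.2 <|
    add_conj_ne_zero_of_re_pos (hpos z hz) (hpos 0 (mem_ball_self one_pos)))] at hschwarz

theorem norm_deriv_zero_le_two_mul_re_of_re_pos (hp : DifferentiableOn ℂ p (ball 0 1))
    (hpos : ∀ z ∈ ball (0 : ℂ) 1, 0 < (p z).re) : ‖deriv p 0‖ ≤ 2 * (p 0).re := by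
  have h0 : (0 : ℂ) ∈ ball (0 : ℂ) 1 := mem_ball_self one_pos
  have hne := add_conj_ne_zero_of_re_pos (hpos 0 h0) (hpos 0 h0)
  have hd := (hp.differentiableAt (isOpen_ball.mem_nhds h0)).hasDerivAt
  have hω : deriv (fun z => (p z - p 0) / (p z + conj (p 0))) 0 =
      deriv p 0 / (2 * (p 0).re : ℝ) := by
    rw [((hd.sub_const _).fun_div (hd.add_const _) hne).deriv, ← add_conj]
    field_simp
    ring
  have hschwarz := norm_deriv_le_one_of_mapsTo_ball (differentiableOn_cayley_comp hp hpos)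
    (by simpa using mapsTo_cayley_comp hpos) one_pos
  rwa [hω, norm_div, norm_real, Real.norm_of_nonneg (by linarith [hpos 0 h0]),
    div_le_one (by linarith [hpos 0 h0])] at hschwarz

theorem one_add_conj_mul_ne_zero (hw : ‖w‖ < 1) (hz : ‖z‖ < 1) : 1 + conj w * z ≠ 0 := by
  simpa using one_sub_mul_ne_zero_of_norm_lt_one (u := -conj w) (by simpa using hw)
    (mem_closedBall_zero_iff.2 hz.le)

theorem mapsTo_discAutomorphism (hw : ‖w‖ < 1) :
    MapsTo (fun z => (z + w) / (1 + conj w * z)) (ball 0 1) (ball 0 1) := fun z hz => by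
  have hz1 : ‖z‖ < 1 := mem_ball_zero_iff.1 hz
  rw [mem_ball_zero_iff, norm_div, div_lt_one (norm_pos_iff.2 (one_add_conj_mul_ne_zero hw hz1)),
    ← sq_lt_sq₀ (norm_nonneg _) (norm_nonneg _), ← sub_pos]
  have hident : ‖1 + conj w * z‖ ^ 2 - ‖z + w‖ ^ 2 = (1 - ‖z‖ ^ 2) * (1 - ‖w‖ ^ 2) := by
    simp only [← normSq_eq_norm_sq, normSq_apply, add_re, add_im, mul_re, mul_im, conj_re, conj_im,
      one_re, one_im]
    ring
  rw [hident]
  exact mul_pos (sub_pos.2 (pow_lt_one₀ (norm_nonneg z) hz1 two_ne_zero))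
    (sub_pos.2 (pow_lt_one₀ (norm_nonneg w) hw two_ne_zero))

theorem norm_deriv_le_of_re_pos (hp : DifferentiableOn ℂ p (ball 0 1))
    (hpos : ∀ z ∈ ball (0 : ℂ) 1, 0 < (p z).re) (hw : w ∈ ball (0 : ℂ) 1) :
    ‖deriv p w‖ * (1 - ‖w‖ ^ 2) ≤ 2 * (p w).re := by
  have hw1 : ‖w‖ < 1 := mem_ball_zero_iff.1 hw
  have hτ := mapsTo_discAutomorphism hw1
  have hτd : DifferentiableOn ℂ (fun z => (z + w) / (1 + conj w * z)) (ball 0 1) :=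
    (differentiableOn_id.add_const w).div ((differentiableOn_id.const_mul _).const_add 1)
      fun z hz => one_add_conj_mul_ne_zero hw1 (mem_ball_zero_iff.1 hz)
  have hτ0 : HasDerivAt (fun z => (z + w) / (1 + conj w * z)) ((1 - ‖w‖ ^ 2 : ℝ) : ℂ) 0 := by
    convert! ((hasDerivAt_id' (0 : ℂ)).add_const w).fun_div
      (((hasDerivAt_id' (0 : ℂ)).const_mul (conj w)).const_add 1) (by simp) using 1
    push_cast
    simp [← mul_conj']
  have hcomp := norm_deriv_zero_le_two_mul_re_of_re_pos (hp.comp hτd hτ) fun z hz => hpos _ (hτ hz)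
  have hpw : HasDerivAt p (deriv p w) ((0 + w) / (1 + conj w * 0)) := by
    simpa using (hp.differentiableAt (isOpen_ball.mem_nhds hw)).hasDerivAt
  rw [(hpw.comp 0 hτ0).deriv, norm_mul, norm_real, Real.norm_of_nonneg
    (sub_nonneg.2 (pow_le_one₀ (norm_nonneg w) hw1.le))] at hcomp
  simpa using hcomp

theorem div_le_re_of_re_pos (hp : DifferentiableOn ℂ p (ball 0 1))
    (hpos : ∀ z ∈ ball (0 : ℂ) 1, 0 < (p z).re) (h0 : p 0 = 1) (hz : z ∈ ball (0 : ℂ) 1) :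
    (1 - ‖z‖) / (1 + ‖z‖) ≤ (p z).re := by
  have hz1 : ‖z‖ < 1 := mem_ball_zero_iff.1 hz
  have h := norm_sub_le_mul_norm_add_conj_of_re_pos hp hpos hz
  rw [h0, map_one, ← sq_le_sq₀ (norm_nonneg _) (by positivity), mul_pow,
    ← normSq_eq_norm_sq (_ - _), ← normSq_eq_norm_sq (_ + _)] at h
  simp only [normSq_apply, sub_re, sub_im, add_re, add_im, one_re, one_im] at h
  have hquad : ((1 + ‖z‖) * (p z).re - (1 - ‖z‖)) * ((1 - ‖z‖) * (p z).re - (1 + ‖z‖)) ≤ 0 := by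
    nlinarith [mul_nonneg (sub_nonneg.2 (pow_le_one₀ (n := 2) (norm_nonneg z) hz1.le))
      (sq_nonneg (p z).im)]
  rw [div_le_iff₀' (by positivity)]
  by_contra! hlt
  have : (1 - ‖z‖) * (p z).re < 1 + ‖z‖ := by
    nlinarith [norm_nonneg z, hpos z hz, mul_nonneg (norm_nonneg z) (hpos z hz).le]
  nlinarith [mul_pos (sub_pos.2 hlt) (sub_pos.2 this)]

namespace StarlikeOrder

variable {α : ℝ}

theorem re_starlikeQuotient_pos (hf : StarlikeOrder 0 f) (hz : z ∈ 𝔻) :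
    0 < (starlikeQuotient f z).re := by
  rcases eq_or_ne z 0 with rfl | hz0
  · rw [hf.starlikeQuotient_zero, one_re]
    exact one_pos
  · exact hf.lt_re_starlikeQuotient hz hz0

theorem starlikeQuotient_ne_zero (hf : StarlikeOrder 0 f) (hz : z ∈ 𝔻) :
    starlikeQuotient f z ≠ 0 := fun h => by
  simpa [h] using hf.re_starlikeQuotient_pos hz

theorem deriv_eq_mul_dslope (hf : StarlikeOrder α f) (hz : z ∈ 𝔻) :
    deriv f z = starlikeQuotient f z * dslope f 0 z :=
  (div_mul_cancel₀ _ (hf.dslope_ne_zero hz)).symm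

theorem deriv_ne_zero (hf : StarlikeOrder 0 f) (hz : z ∈ 𝔻) : deriv f z ≠ 0 := by
  rw [hf.deriv_eq_mul_dslope hz]
  exact mul_ne_zero (hf.starlikeQuotient_ne_zero hz) (hf.dslope_ne_zero hz)

theorem one_add_mul_deriv_deriv_div (hf : StarlikeOrder 0 f) (hz : z ∈ 𝔻) :
    1 + z * deriv (deriv f) z / deriv f z =
      starlikeQuotient f z + z * deriv (starlikeQuotient f) z / starlikeQuotient f z := by
  have hp := (hf.analyticOnNhd_starlikeQuotient z hz).differentiableAt
  have hf' := (hf.1.analyticOnNhd.deriv z hz).differentiableAt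
  have hderiv : deriv f z + z * deriv (deriv f) z =
      deriv (starlikeQuotient f) z * f z + starlikeQuotient f z * deriv f z := by
    rw [← deriv_fun_mul hp (hf.1.analyticOnNhd z hz).differentiableAt,
      ← one_mul (deriv f z), ← congrFun deriv_id'' z, ← deriv_fun_mul differentiableAt_fun_id hf']
    exact Filter.EventuallyEq.deriv_eq <|
      Filter.eventually_of_mem (isOpen_ball.mem_nhds hz) fun w hw => hf.mul_deriv_eq hw
  have hne := hf.deriv_ne_zero hz
  have hpne := hf.starlikeQuotient_ne_zero hz
  field_simp
  linear_combination starlikeQuotient f z * hderiv -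
    deriv (starlikeQuotient f) z * hf.mul_deriv_eq hz

theorem le_re_one_add_mul_deriv_deriv_div (hf : StarlikeOrder 0 f) (hz : z ∈ 𝔻) :
    (1 - 4 * ‖z‖ + ‖z‖ ^ 2) / (1 - ‖z‖ ^ 2) ≤ (1 + z * deriv (deriv f) z / deriv f z).re := by
  set p := starlikeQuotient f
  have hz1 : ‖z‖ < 1 := mem_ball_zero_iff.1 hz
  have hsq : 0 < 1 - ‖z‖ ^ 2 := sub_pos.2 (pow_lt_one₀ (norm_nonneg z) hz1 two_ne_zero)
  have hp : DifferentiableOn ℂ p (ball 0 1) := hf.analyticOnNhd_starlikeQuotient.differentiableOn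
  have hpos : ∀ w ∈ ball (0 : ℂ) 1, 0 < (p w).re := fun w => hf.re_starlikeQuotient_pos
  have hpz : 0 < ‖p z‖ := norm_pos_iff.2 (hf.starlikeQuotient_ne_zero hz)
  have hlog : ‖z * deriv p z / p z‖ ≤ 2 * ‖z‖ / (1 - ‖z‖ ^ 2) := by
    rw [norm_div, norm_mul, div_le_div_iff₀ hpz hsq, mul_assoc, mul_right_comm, mul_comm]
    have := (norm_deriv_le_of_re_pos hp hpos hz).trans
      (mul_le_mul_of_nonneg_left (re_le_norm _) zero_le_two)
    nlinarith [mul_le_mul_of_nonneg_right this (norm_nonneg z)]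
  rw [hf.one_add_mul_deriv_deriv_div hz, add_re]
  calc (1 - 4 * ‖z‖ + ‖z‖ ^ 2) / (1 - ‖z‖ ^ 2)
      = (1 - ‖z‖) / (1 + ‖z‖) - 2 * ‖z‖ / (1 - ‖z‖ ^ 2) := by
        have : 1 + ‖z‖ ≠ 0 := by positivity
        have : 1 - ‖z‖ ≠ 0 := (sub_pos.2 hz1).ne'
        rw [show 1 - ‖z‖ ^ 2 = (1 + ‖z‖) * (1 - ‖z‖) by ring]
        field_simp
        ring
    _ ≤ (p z).re - ‖z * deriv p z / p z‖ :=
        sub_le_sub (div_le_re_of_re_pos hp hpos hf.starlikeQuotient_zero hz) hlog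
    _ ≤ (p z).re + (z * deriv p z / p z).re := by
        linarith [(abs_le.1 (abs_re_le_norm (z * deriv p z / p z))).1]

theorem re_one_add_mul_deriv_deriv_div_pos (hf : StarlikeOrder 0 f) (hz : ‖z‖ < 2 - √3) :
    0 < (1 + z * deriv (deriv f) z / deriv f z).re := by
  have hsqrt : (√3) ^ 2 = 3 := Real.sq_sqrt zero_le_three
  have hone : 1 < √3 := Real.lt_sqrt_of_sq_lt (by norm_num)
  have hz1 : ‖z‖ < 1 := by linarith
  refine (div_pos ?_ ?_).trans_le (hf.le_re_one_add_mul_deriv_deriv_div (mem_ball_zero_iff.2 hz1))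
  · nlinarith
  · exact sub_pos.2 (pow_lt_one₀ (norm_nonneg z) hz1 two_ne_zero)

end StarlikeOrder

/-- The dilation `z ↦ f (r * z) / r`, which preserves the normalization of the class `𝒜`. -/
def normalizedDilation (r : ℝ) (f : ℂ → ℂ) (z : ℂ) : ℂ :=
  f (r * z) / r

variable {r : ℝ}

theorem deriv_normalizedDilation (hr : r ≠ 0) :
    deriv (normalizedDilation r f) = fun z => deriv f (r * z) := by
  ext z
  unfold normalizedDilation
  rw [deriv_div_const, deriv_comp_mul_left, smul_eq_mul,
    mul_div_cancel_left₀ _ (ofReal_ne_zero.2 hr)]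

theorem norm_ofReal_mul_lt (hr : 0 < r) (hz : z ∈ 𝔻) : ‖(r : ℂ) * z‖ < r := by
  rw [norm_mul, norm_real, Real.norm_of_nonneg hr.le]
  exact mul_lt_of_lt_one_right hr (mem_ball_zero_iff.1 hz)

theorem ofReal_mul_mem_disc (hr : 0 < r) (hr1 : r ≤ 1) (hz : z ∈ 𝔻) : (r : ℂ) * z ∈ 𝔻 :=
  mem_ball_zero_iff.2 ((norm_ofReal_mul_lt hr hz).trans_le hr1)

theorem hasSum_normalizedDilation {a : ℕ → ℂ}
    (hf : ∀ z ∈ 𝔻, HasSum (fun n => a n * z ^ n) (f z)) (hr : 0 < r) (hr1 : r ≤ 1) (hz : z ∈ 𝔻) :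
    HasSum (fun n => a n * r ^ n / r * z ^ n) (normalizedDilation r f z) :=
  ((hf _ (ofReal_mul_mem_disc hr hr1 hz)).div_const (r : ℂ)).congr_fun fun n => by ring

theorem IsClassA.isClassA_normalizedDilation (hf : IsClassA f) (hr : 0 < r) (hr1 : r ≤ 1) :
    IsClassA (normalizedDilation r f) := by
  refine ⟨(hf.1.comp (differentiableOn_id.const_mul (r : ℂ)) fun z hz =>
    ofReal_mul_mem_disc hr hr1 hz).div_const _, ?_, ?_⟩
  · rw [normalizedDilation, mul_zero, hf.2.1, zero_div]
  · simp only [deriv_normalizedDilation hr.ne', mul_zero, hf.2.2]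

theorem mul_deriv_div_normalizedDilation (hr : r ≠ 0) (z : ℂ) :
    z * deriv (normalizedDilation r f) z / normalizedDilation r f z =
      r * z * deriv f (r * z) / f (r * z) := by
  rw [deriv_normalizedDilation hr, normalizedDilation, div_div_eq_mul_div]
  ring

theorem two_sub_sqrt_three_pos : 0 < 2 - √3 :=
  sub_pos.2 ((Real.sqrt_lt' two_pos).2 (by norm_num))

theorem two_sub_sqrt_three_le_one : 2 - √3 ≤ 1 := by
  linarith [Real.one_le_sqrt.2 (by norm_num : (1 : ℝ) ≤ 3)]

theorem StarlikeOrder.isConvexFn_normalizedDilation (hf : StarlikeOrder 0 f) :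
    IsConvexFn (normalizedDilation (2 - √3) f) := by
  have hr := two_sub_sqrt_three_pos
  have hr1 := two_sub_sqrt_three_le_one
  refine ⟨hf.1.isClassA_normalizedDilation hr hr1, fun z hz => ?_, fun z hz => ?_⟩
  · rw [deriv_normalizedDilation hr.ne']
    exact hf.deriv_ne_zero (ofReal_mul_mem_disc hr hr1 hz)
  · simp only [deriv_normalizedDilation hr.ne', deriv_comp_mul_left, smul_eq_mul,
      mul_left_comm z, ← mul_assoc]
    exact hf.re_one_add_mul_deriv_deriv_div_pos (norm_ofReal_mul_lt hr hz)

theorem div_one_add_le_two_sub_sqrt_three {α : ℝ} (hα : 0 ≤ α) :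
    (2 - √(3 + α ^ 2)) / (1 + α) ≤ 2 - √3 := by
  have hsqrt : √3 ≤ √(3 + α ^ 2) := Real.sqrt_le_sqrt (le_add_of_nonneg_right (sq_nonneg α))
  rw [div_le_iff₀ (by linarith)]
  nlinarith [two_sub_sqrt_three_pos]

end RadiusOfConvexity

theorem stmt8_general {α : ℝ} (hα : 0 ≤ α) {f g h : ℂ → ℂ} {a b : ℕ → ℂ} (hf : StarlikeOrder 0 f)
    (hg : StarlikeOrder α g) (hfa : ∀ z ∈ 𝔻, HasSum (fun n => a n * z ^ n) (f z))
    (hgb : ∀ z ∈ 𝔻, HasSum (fun n => b n * z ^ n) (g z))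
    (hh : ∀ z ∈ 𝔻, HasSum (fun n => a n * b n * z ^ n) (h z)) {z : ℂ} (hz0 : 0 < ‖z‖)
    (hz : ‖z‖ < 2 - √3) : h z ≠ 0 ∧ α < (z * deriv h z / h z).re := by
  have hr := two_sub_sqrt_three_pos
  have hr1 := two_sub_sqrt_three_le_one
  set r := 2 - √3
  have hrc : (r : ℂ) ≠ 0 := ofReal_ne_zero.2 hr.ne'
  have hw : z / r ∈ 𝔻 := mem_ball_zero_iff.2 <| by
    rwa [norm_div, norm_real, Real.norm_of_nonneg hr.le, div_lt_one hr]
  have hmain := lt_re_mul_deriv_div_of_isConvexFn (h := normalizedDilation r h)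
    hf.isConvexFn_normalizedDilation hα hg (fun w => hasSum_normalizedDilation hfa hr hr1) hgb
    (fun w hw => (hasSum_normalizedDilation hh hr hr1 hw).congr_fun fun n => by ring)
    hw (div_ne_zero (norm_pos_iff.1 hz0) hrc)
  rw [mul_deriv_div_normalizedDilation hr.ne', normalizedDilation, mul_div_cancel₀ _ hrc,
    div_ne_zero_iff] at hmain
  exact ⟨hmain.1.1, hmain.2⟩

theorem stmt8 (α : ℝ) (hα0 : 0 ≤ α) (hα1 : α < 1)
    (f g h : ℂ → ℂ) (a b : ℕ → ℂ)
    (hf : StarlikeOrder α f) (hg : StarlikeOrder α g)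
    (ha0 : a 0 = 0) (ha1 : a 1 = 1) (hb0 : b 0 = 0) (hb1 : b 1 = 1)
    (hfa : ∀ z ∈ 𝔻, HasSum (fun n => a n * z^n) (f z))
    (hgb : ∀ z ∈ 𝔻, HasSum (fun n => b n * z^n) (g z))
    (hhab : ∀ z ∈ 𝔻, HasSum (fun n => a n * b n * z^n) (h z)) :
    ∀ z : ℂ, 0 < ‖z‖ → ‖z‖ < (2 - Real.sqrt (3 + α^2)) / (1 + α) →
      h z ≠ 0 ∧ α < (z * deriv h z / h z).re := by
  intro z hz0 hz
  exact stmt8_general hα0 (hf.mono hα0) hg hfa hgb hhab hz0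
    (hz.trans_le (div_one_add_le_two_sub_sqrt_three hα0))
end
end

section
/- Let ψ be a Ma-Minda function with ψ(𝔻) a convex set, let k ≥ 2, and let g_k(z) = (z − z^{k+1})/(1 − z) = z + z² + ⋯ + z^k. Suppose r₀ ∈ (0, 1] is such that the function z ↦ g_k(r₀z)/r₀ is convex (i.e. belongs to C). If f(z) = z + Σ_{n≥2} aₙzⁿ ∈ C(ψ), then the k-th section f_k(z) = z + Σ_{n=2}^k aₙzⁿ satisfies: the function z ↦ f_k(r₀z)/r₀ belongs to C(ψ); that is, f_k ∈ C(ψ) on |z| < r₀. -/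
open Complex Metric Set

noncomputable section

/-! The section is `f_k(r₀z) / r₀ = h ⋆ f`, a Hadamard product with the convex function
`h(z) = g_k(r₀z) / r₀`. Let `φ = h ⋆ f` and `H(z) = h(z) / z`. Then `φ' = H ⋆ f'`, and
`1 + zφ''/φ' = (H ⋆ f'F) / (H ⋆ f')` with `F = 1 + zf''/f'`. By the theorem of Ruscheweyh and
Sheil-Small this ratio stays in every half-plane containing `F(𝔻)`, hence in the convex set `ψ(𝔻)`.

An average over the circle reduces the half-plane property to the Herglotz kernels
`F(z) = (1 + sz) / (1 - sz)`, `|s| = 1`, that is, to `H ⋆ (f'(z)(1 + cz) / (1 - sz)) ≠ 0` for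
`|c| = 1`. Since the tangent of the convex curve `f(|z| = ρ)` turns exactly once, there are a
unimodular `x` and a constant `e ≠ 0` with `Re e f'(ρz)(1 + cz)(1 - xz) ≥ 0` on the unit circle
(Robertson), so by the same average `f'(ρz)(1 + cz)` may be replaced by `1 / (1 - xz)`. The products
`H ⋆ (1 / ((1 - xz)(1 - sz)))` are divided differences of `h`, and what remains to be shown is that
no line meets the convex curve `h(|z| = ρ)` in three points.
-/

open scoped Topology

section UnivalentFunctions

variable {U : Set ℂ} {f : ℂ → ℂ} {z : ℂ}

lemma not_eventually_eq_of_injOn (hU : IsOpen U) (hinj : InjOn f U) (hz : z ∈ U) :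
    ¬ ∀ᶠ w in 𝓝 z, f w = f z := fun hconst => by
  have hne : ∀ᶠ w in 𝓝[≠] z, w ≠ z := eventually_mem_nhdsWithin
  obtain ⟨w, ⟨hw, hwU⟩, hwz⟩ :=
    (((hconst.and (hU.eventually_mem hz)).filter_mono nhdsWithin_le_nhds).and hne).exists
  exact hwz (hinj hwU hz hw)

lemma isOpen_image_of_injOn (hU : IsOpen U) (hf : DifferentiableOn ℂ f U) (hinj : InjOn f U) :
    IsOpen (f '' U) := by
  refine isOpen_iff_mem_nhds.2 ?_
  rintro _ ⟨z, hz, rfl⟩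
  have hle := ((hf.analyticOnNhd hU) z hz).eventually_constant_or_nhds_le_map_nhds.resolve_left
    (not_eventually_eq_of_injOn hU hinj hz)
  exact hle (Filter.image_mem_map (hU.mem_nhds hz))

lemma eventually_deriv_ne_zero_of_injOn (hU : IsOpen U) (hf : DifferentiableOn ℂ f U)
    (hinj : InjOn f U) (hz : z ∈ U) : ∀ᶠ w in 𝓝[≠] z, deriv f w ≠ 0 := by
  refine ((hf.analyticOnNhd hU).deriv z hz).eventually_eq_zero_or_eventually_ne_zero.resolve_left
    fun hzero => not_eventually_eq_of_injOn hU hinj hz ?_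
  obtain ⟨ε, hε, hball⟩ := Metric.eventually_nhds_iff_ball.1 (hzero.and (hU.eventually_mem hz))
  filter_upwards [ball_mem_nhds z hε] with w hw
  exact isOpen_ball.is_const_of_deriv_eq_zero (convex_ball z ε).isPreconnected
    (hf.mono fun x hx => (hball x hx).2) (fun x hx => (hball x hx).1) hw (mem_ball_self hε)

lemma continuousAt_invFunOn (hU : IsOpen U) (hf : DifferentiableOn ℂ f U) (hinj : InjOn f U)
    (hz : z ∈ U) : ContinuousAt (Function.invFunOn f U) (f z) := by
  have hleft := hinj.leftInvOn_invFunOn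
  rw [ContinuousAt, hleft hz, _root_.tendsto_nhds]
  intro s hs hzs
  have hopen : IsOpen (f '' (s ∩ U)) := isOpen_image_of_injOn (hs.inter hU)
    (hf.mono inter_subset_right) (hinj.mono inter_subset_right)
  filter_upwards [hopen.mem_nhds ⟨z, ⟨hzs, hz⟩, rfl⟩]
  rintro _ ⟨x, ⟨hxs, hxU⟩, rfl⟩
  rwa [mem_preimage, hleft hxU]

lemma differentiableAt_invFunOn_of_deriv_ne_zero (hU : IsOpen U) (hf : DifferentiableOn ℂ f U)
    (hinj : InjOn f U) (hz : z ∈ U) (hderiv : deriv f z ≠ 0) :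
    DifferentiableAt ℂ (Function.invFunOn f U) (f z) := by
  have hleft := hinj.leftInvOn_invFunOn hz
  have hright : ∀ᶠ y in 𝓝 (f z), f (Function.invFunOn f U y) = y := by
    filter_upwards [(isOpen_image_of_injOn hU hf hinj).mem_nhds ⟨z, hz, rfl⟩] with y hy
    exact Function.invFunOn_eq hy
  refine (HasDerivAt.of_local_left_inverse (f := f) (f' := deriv f z)
    (continuousAt_invFunOn hU hf hinj hz) ?_ hderiv hright).differentiableAt
  rw [hleft]
  exact (hf.differentiableAt (hU.mem_nhds hz)).hasDerivAt

lemma differentiableOn_invFunOn (hU : IsOpen U) (hf : DifferentiableOn ℂ f U)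
    (hinj : InjOn f U) : DifferentiableOn ℂ (Function.invFunOn f U) (f '' U) := by
  rintro _ ⟨z, hz, rfl⟩
  have hcont := continuousAt_invFunOn hU hf hinj hz
  have hleft := hinj.leftInvOn_invFunOn
  have hmem : ∀ᶠ y in 𝓝 (f z), y ∈ f '' U :=
    (isOpen_image_of_injOn hU hf hinj).mem_nhds ⟨z, hz, rfl⟩
  have hderiv : ∀ᶠ y in 𝓝 (f z), Function.invFunOn f U y ≠ z →
      deriv f (Function.invFunOn f U y) ≠ 0 := by
    have htendsto := hcont.tendsto
    rw [hleft hz] at htendsto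
    exact htendsto.eventually
      (eventually_nhdsWithin_iff.1 (eventually_deriv_ne_zero_of_injOn hU hf hinj hz))
  refine (Complex.analyticAt_of_differentiable_on_punctured_nhds_of_continuousAt
    (eventually_nhdsWithin_iff.2 ?_) hcont).differentiableAt.differentiableWithinAt
  filter_upwards [hmem, hderiv]
  rintro _ ⟨x, hx, rfl⟩ hx' hne
  rw [hleft hx] at hx'
  exact differentiableAt_invFunOn_of_deriv_ne_zero hU hf hinj hx
    (hx' fun h => hne (congrArg f h))

lemma ne_zero_of_re_nonneg {q : ℂ → ℂ} {z₀ : ℂ} (hU : IsOpen U) (hconn : IsPreconnected U)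
    (hq : DifferentiableOn ℂ q U) (hre : ∀ z ∈ U, 0 ≤ (q z).re) (hz₀ : z₀ ∈ U) (h₀ : q z₀ ≠ 0) :
    ∀ z ∈ U, q z ≠ 0 := by
  intro z hz hqz
  rcases (hq.analyticOnNhd hU).is_constant_or_isOpen hconn with ⟨c, hc⟩ | hopen
  · exact h₀ (by rw [hc z₀ hz₀, ← hc z hz, hqz])
  · have hsub : q '' U ⊆ interior {w : ℂ | 0 ≤ w.re} :=
      interior_maximal (by rintro _ ⟨x, hx, rfl⟩; exact hre x hx) (hopen U subset_rfl hU)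
    have hpos := hsub ⟨z, hz, hqz⟩
    rw [Complex.interior_setOfPred_le_re] at hpos
    exact lt_irrefl (0 : ℝ) hpos

lemma re_pos_of_re_ne_zero {q : ℂ → ℂ} {z₀ : ℂ} (hconn : IsPreconnected U)
    (hq : ContinuousOn q U) (hre : ∀ z ∈ U, (q z).re ≠ 0) (hz₀ : z₀ ∈ U) (h₀ : 0 < (q z₀).re)
    (hz : z ∈ U) : 0 < (q z).re := by
  by_contra! hneg
  obtain ⟨y, hy, hy0⟩ := hconn.intermediate_value hz hz₀
    (Complex.continuous_re.comp_continuousOn hq) ⟨hneg, h₀.le⟩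
  exact hre y hy hy0

end UnivalentFunctions

section UnitDisk

lemma isOpen_unitDisk : IsOpen 𝔻 := isOpen_ball

lemma isPreconnected_unitDisk : IsPreconnected 𝔻 := (convex_ball 0 1).isPreconnected

lemma zero_mem_unitDisk : (0 : ℂ) ∈ 𝔻 := mem_ball_self one_pos

lemma mem_unitDisk {z : ℂ} : z ∈ 𝔻 ↔ ‖z‖ < 1 := mem_ball_zero_iff

lemma mul_mem_unitDisk {c z : ℂ} (hc : ‖c‖ ≤ 1) (hz : z ∈ 𝔻) : c * z ∈ 𝔻 := by
  rw [mem_unitDisk, norm_mul]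
  exact (mul_le_of_le_one_left (norm_nonneg z) hc).trans_lt (mem_unitDisk.1 hz)

lemma differentiableOn_dslope_zero {f : ℂ → ℂ} (hf : DifferentiableOn ℂ f 𝔻) :
    DifferentiableOn ℂ (dslope f 0) 𝔻 :=
  (Complex.differentiableOn_dslope (isOpen_unitDisk.mem_nhds zero_mem_unitDisk)).2 hf

end UnitDisk

lemma subordinate_of_mapsTo_image {ψ Q : ℂ → ℂ} (hψ : DifferentiableOn ℂ ψ 𝔻)
    (hinj : InjOn ψ 𝔻) (hQ : DifferentiableOn ℂ Q 𝔻) (h₀ : Q 0 = ψ 0)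
    (hmaps : MapsTo Q 𝔻 (ψ '' 𝔻)) : Subordinate Q ψ := by
  refine ⟨Function.invFunOn ψ 𝔻 ∘ Q, ?_, ?_, fun z hz => Function.invFunOn_mem (hmaps hz),
    fun z hz => (Function.invFunOn_eq (hmaps hz)).symm⟩
  · exact (differentiableOn_invFunOn isOpen_unitDisk hψ hinj).comp hQ hmaps
  · rw [Function.comp_apply, h₀, hinj.leftInvOn_invFunOn zero_mem_unitDisk]

section TaylorCoeff

variable {f g : ℂ → ℂ} {z : ℂ}

/-- The `n`-th Taylor coefficient of `f` at the origin. -/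
def taylorCoeff (f : ℂ → ℂ) (n : ℕ) : ℂ := iteratedDeriv n f 0 / n.factorial

lemma hasSum_taylorCoeff (hf : DifferentiableOn ℂ f 𝔻) (hz : z ∈ 𝔻) :
    HasSum (fun n => taylorCoeff f n * z ^ n) (f z) := by
  have hterm (n : ℕ) : taylorCoeff f n * z ^ n =
      (n.factorial : ℂ)⁻¹ • (z - 0) ^ n • iteratedDeriv n f 0 := by
    rw [taylorCoeff, sub_zero, smul_eq_mul, smul_eq_mul]
    ring
  simpa only [hterm] using Complex.hasSum_taylorSeries_on_ball hf hz

lemma hasFPowerSeriesOnBall_of_hasSum {c : ℕ → ℂ}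
    (hsum : ∀ z ∈ 𝔻, HasSum (fun n => c n * z ^ n) (f z)) :
    HasFPowerSeriesOnBall f (FormalMultilinearSeries.ofScalars ℂ c) 0 1 := by
  refine ⟨ENNReal.le_of_forall_nnreal_lt fun r hr => ?_, one_pos, fun {y} hy => ?_⟩
  · refine FormalMultilinearSeries.le_radius_of_summable_norm _ ?_
    have hr1 : (r : ℂ) ∈ 𝔻 := mem_unitDisk.2 (by simpa using hr)
    simpa [FormalMultilinearSeries.ofScalars_norm] using (hsum _ hr1).summable.norm
  · have hy1 : y ∈ 𝔻 := mem_unitDisk.2 (by simpa [enorm_eq_nnnorm, ← NNReal.coe_lt_coe] using hy)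
    simpa [FormalMultilinearSeries.ofScalars_apply_eq, mul_comm] using hsum y hy1

lemma differentiableOn_of_hasSum {c : ℕ → ℂ}
    (hsum : ∀ z ∈ 𝔻, HasSum (fun n => c n * z ^ n) (f z)) : DifferentiableOn ℂ f 𝔻 := by
  have hdiff := (hasFPowerSeriesOnBall_of_hasSum hsum).differentiableOn
  rwa [← ENNReal.ofReal_one, eball_ofReal] at hdiff

lemma taylorCoeff_eq_of_hasSum {c : ℕ → ℂ}
    (hsum : ∀ z ∈ 𝔻, HasSum (fun n => c n * z ^ n) (f z)) : taylorCoeff f = c := by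
  have hseries := hasFPowerSeriesOnBall_of_hasSum hsum
  exact (FormalMultilinearSeries.ofScalars_series_eq_iff ℂ _ _).1
    (hseries.analyticAt.hasFPowerSeriesAt.eq_formalMultilinearSeries hseries.hasFPowerSeriesAt)

lemma taylorCoeff_congr (hfg : EqOn f g 𝔻) : taylorCoeff f = taylorCoeff g := by
  ext n
  rw [taylorCoeff, taylorCoeff,
    (hfg.eventuallyEq_of_mem (isOpen_unitDisk.mem_nhds zero_mem_unitDisk)).iteratedDeriv_eq]

lemma eqOn_of_taylorCoeff_eq (hf : DifferentiableOn ℂ f 𝔻) (hg : DifferentiableOn ℂ g 𝔻)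
    (hfg : taylorCoeff f = taylorCoeff g) : EqOn f g 𝔻 := fun _ hz =>
  (hasSum_taylorCoeff hf hz).unique (hfg ▸ hasSum_taylorCoeff hg hz)

lemma taylorCoeff_zero_right (f : ℂ → ℂ) : taylorCoeff f 0 = f 0 := by simp [taylorCoeff]

lemma taylorCoeff_smul_add_smul (hf : DifferentiableOn ℂ f 𝔻) (hg : DifferentiableOn ℂ g 𝔻)
    (a b : ℂ) (n : ℕ) :
    taylorCoeff (a • f + b • g) n = a * taylorCoeff f n + b * taylorCoeff g n := by
  refine congrFun (taylorCoeff_eq_of_hasSum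
    (c := fun n => a * taylorCoeff f n + b * taylorCoeff g n) fun z hz => ?_) n
  simpa [add_mul, mul_assoc] using
    ((hasSum_taylorCoeff hf hz).mul_left a).add ((hasSum_taylorCoeff hg hz).mul_left b)

lemma taylorCoeff_comp_const_mul (hf : DifferentiableOn ℂ f 𝔻) {c : ℂ} (hc : ‖c‖ ≤ 1) (n : ℕ) :
    taylorCoeff (fun z => f (c * z)) n = c ^ n * taylorCoeff f n := by
  refine congrFun (taylorCoeff_eq_of_hasSum (c := fun n => c ^ n * taylorCoeff f n)
    fun z hz => ?_) n
  simpa [mul_pow, mul_assoc, mul_left_comm] using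
    hasSum_taylorCoeff hf (mul_mem_unitDisk hc hz)

lemma taylorCoeff_deriv (f : ℂ → ℂ) (n : ℕ) :
    taylorCoeff (deriv f) n = (n + 1) * taylorCoeff f (n + 1) := by
  rw [taylorCoeff, taylorCoeff, iteratedDeriv_succ', Nat.factorial_succ]
  push_cast
  field_simp

lemma taylorCoeff_id_mul_deriv (hf : DifferentiableOn ℂ f 𝔻) (n : ℕ) :
    taylorCoeff (id * deriv f) n = n * taylorCoeff f n := by
  refine congrFun (taylorCoeff_eq_of_hasSum (c := fun n => n * taylorCoeff f n)
    fun z hz => ?_) n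
  rw [← hasSum_nat_add_iff' 1]
  simpa [taylorCoeff_deriv, pow_succ, mul_assoc, mul_left_comm, mul_comm] using
    (hasSum_taylorCoeff (hf.deriv isOpen_unitDisk) hz).mul_left z

lemma taylorCoeff_dslope (hf : DifferentiableOn ℂ f 𝔻) (n : ℕ) :
    taylorCoeff (dslope f 0) n = taylorCoeff f (n + 1) := by
  refine congrFun (taylorCoeff_eq_of_hasSum (c := fun n => taylorCoeff f (n + 1))
    fun z hz => ?_) n
  rcases eq_or_ne z 0 with rfl | hz0
  · rw [dslope_same]
    convert hasSum_single (f := fun n => taylorCoeff f (n + 1) * (0 : ℂ) ^ n) 0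
      fun n hn => by simp [hn] using 1
    simp [taylorCoeff]
  · have hshift := (hasSum_nat_add_iff' 1).2 (hasSum_taylorCoeff hf hz)
    rw [Finset.sum_range_one, pow_zero, mul_one, taylorCoeff_zero_right] at hshift
    rw [dslope_of_ne _ hz0, slope_def_field, sub_zero]
    simpa only [pow_succ, ← mul_assoc, mul_div_cancel_right₀ _ hz0] using hshift.div_const z

lemma taylorCoeff_sum_mul_pow (c : ℕ → ℂ) (s : Finset ℕ) :
    taylorCoeff (fun z => ∑ i ∈ s, c i * z ^ i) = fun n => if n ∈ s then c n else 0 :=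
  taylorCoeff_eq_of_hasSum fun z _ => by
    rw [Finset.sum_congr rfl fun i hi => by rw [← if_pos (c := i ∈ s) (t := c i) (e := 0) hi]]
    exact hasSum_sum_of_ne_finset_zero fun n hn => by rw [if_neg hn, zero_mul]

end TaylorCoeff

section HadamardProduct

variable {f g H : ℂ → ℂ} {w : ℂ}

/-- The Hadamard product (convolution) of two functions analytic on the unit disk: the function
whose Taylor coefficients at the origin are the products of theirs. -/
def hadamardProd (f g : ℂ → ℂ) (z : ℂ) : ℂ := ∑' n, taylorCoeff f n * taylorCoeff g n * z ^ n

lemma hasSum_hadamardProd (hf : DifferentiableOn ℂ f 𝔻) (hg : DifferentiableOn ℂ g 𝔻)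
    (hw : w ∈ 𝔻) : HasSum (fun n => taylorCoeff f n * taylorCoeff g n * w ^ n)
      (hadamardProd f g w) := by
  have hr : ((√‖w‖ : ℝ) : ℂ) ∈ 𝔻 := by
    rw [mem_unitDisk, norm_real, Real.norm_of_nonneg (Real.sqrt_nonneg _)]
    exact (Real.sqrt_lt' one_pos).2 (by simpa using mem_unitDisk.1 hw)
  have hf_bdd : Filter.Tendsto (fun n => ‖taylorCoeff f n * ((√‖w‖ : ℝ) : ℂ) ^ n‖) Filter.atTop
      (𝓝 0) := (hasSum_taylorCoeff hf hr).summable.norm.tendsto_atTop_zero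
  refine (Summable.of_norm_bounded_eventually_nat
    (hasSum_taylorCoeff hg hr).summable.norm ?_).hasSum
  filter_upwards [hf_bdd.eventually_le_const one_pos] with n hn
  calc ‖taylorCoeff f n * taylorCoeff g n * w ^ n‖
      = ‖taylorCoeff f n * ((√‖w‖ : ℝ) : ℂ) ^ n‖ * ‖taylorCoeff g n * ((√‖w‖ : ℝ) : ℂ) ^ n‖ := by
        have hsq : ‖w‖ ^ n = √‖w‖ ^ n * √‖w‖ ^ n := by
          rw [← mul_pow, Real.mul_self_sqrt (norm_nonneg w)]
        simp only [norm_mul, norm_pow, norm_real, Real.norm_of_nonneg (Real.sqrt_nonneg _), hsq]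
        ring
    _ ≤ ‖taylorCoeff g n * ((√‖w‖ : ℝ) : ℂ) ^ n‖ := mul_le_of_le_one_left (norm_nonneg _) hn

lemma hadamardProd_congr_right (hfg : EqOn f g 𝔻) : hadamardProd H f = hadamardProd H g := by
  ext w
  simp only [hadamardProd, taylorCoeff_congr hfg]

lemma differentiableOn_hadamardProd (hf : DifferentiableOn ℂ f 𝔻)
    (hg : DifferentiableOn ℂ g 𝔻) : DifferentiableOn ℂ (hadamardProd f g) 𝔻 :=
  differentiableOn_of_hasSum fun _ hw => hasSum_hadamardProd hf hg hw

lemma taylorCoeff_hadamardProd (hf : DifferentiableOn ℂ f 𝔻) (hg : DifferentiableOn ℂ g 𝔻)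
    (n : ℕ) : taylorCoeff (hadamardProd f g) n = taylorCoeff f n * taylorCoeff g n :=
  congrFun (taylorCoeff_eq_of_hasSum fun _ hw => hasSum_hadamardProd hf hg hw) n

lemma hadamardProd_apply_zero (f g : ℂ → ℂ) : hadamardProd f g 0 = f 0 * g 0 := by
  rw [hadamardProd, tsum_eq_single 0 fun n hn => by simp [hn]]
  simp [taylorCoeff_zero_right]

lemma hadamardProd_sum_mul_pow_div (r : ℂ) (s : Finset ℕ) (f : ℂ → ℂ) :
    hadamardProd (fun z => (∑ i ∈ s, (r * z) ^ i) / r) f =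
      fun z => (∑ i ∈ s, taylorCoeff f i * (r * z) ^ i) / r := by
  have hpoly : (fun z => (∑ i ∈ s, (r * z) ^ i) / r) = fun z => ∑ i ∈ s, r ^ i / r * z ^ i := by
    ext z
    rw [Finset.sum_div]
    exact Finset.sum_congr rfl fun i _ => by ring
  ext w
  simp only [hpoly, hadamardProd, taylorCoeff_sum_mul_pow]
  rw [tsum_eq_sum (s := s) fun n hn => by rw [if_neg hn, zero_mul, zero_mul], Finset.sum_div]
  refine Finset.sum_congr rfl fun i hi => ?_
  rw [if_pos hi]
  ring

lemma hadamardProd_smul_add_smul (hH : DifferentiableOn ℂ H 𝔻) (hf : DifferentiableOn ℂ f 𝔻)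
    (hg : DifferentiableOn ℂ g 𝔻) (a b : ℂ) (hw : w ∈ 𝔻) :
    hadamardProd H (a • f + b • g) w = a * hadamardProd H f w + b * hadamardProd H g w := by
  have hsum := ((hasSum_hadamardProd hH hf hw).mul_left a).add
    ((hasSum_hadamardProd hH hg hw).mul_left b)
  rw [← hsum.tsum_eq, hadamardProd]
  refine tsum_congr fun n => ?_
  rw [taylorCoeff_smul_add_smul hf hg]
  ring

lemma hadamardProd_smul (hH : DifferentiableOn ℂ H 𝔻) (hf : DifferentiableOn ℂ f 𝔻) (a : ℂ)
    (hw : w ∈ 𝔻) : hadamardProd H (a • f) w = a * hadamardProd H f w := by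
  simpa using hadamardProd_smul_add_smul hH hf hf a 0 hw

lemma hadamardProd_comp_const_mul_right (hf : DifferentiableOn ℂ f 𝔻) {c : ℂ} (hc : ‖c‖ ≤ 1)
    (w : ℂ) : hadamardProd H (fun z => f (c * z)) w = hadamardProd H f (c * w) :=
  tsum_congr fun n => by rw [taylorCoeff_comp_const_mul hf hc]; ring

lemma deriv_hadamardProd (hf : DifferentiableOn ℂ f 𝔻) (hg : DifferentiableOn ℂ g 𝔻) :
    EqOn (deriv (hadamardProd f g)) (hadamardProd (dslope f 0) (deriv g)) 𝔻 := by
  have hslope : DifferentiableOn ℂ (dslope f 0) 𝔻 := differentiableOn_dslope_zero hf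
  refine eqOn_of_taylorCoeff_eq ((differentiableOn_hadamardProd hf hg).deriv isOpen_unitDisk)
    (differentiableOn_hadamardProd hslope (hg.deriv isOpen_unitDisk)) (funext fun n => ?_)
  rw [taylorCoeff_deriv, taylorCoeff_hadamardProd hf hg,
    taylorCoeff_hadamardProd hslope (hg.deriv isOpen_unitDisk), taylorCoeff_dslope hf,
    taylorCoeff_deriv]
  ring

lemma id_mul_deriv_hadamardProd (hf : DifferentiableOn ℂ f 𝔻) (hg : DifferentiableOn ℂ g 𝔻) :
    EqOn (id * deriv (hadamardProd f g)) (hadamardProd f (id * deriv g)) 𝔻 := by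
  have hzg : DifferentiableOn ℂ (id * deriv g) 𝔻 :=
    differentiableOn_id.mul (hg.deriv isOpen_unitDisk)
  have hprod := differentiableOn_hadamardProd hf hg
  refine eqOn_of_taylorCoeff_eq (differentiableOn_id.mul (hprod.deriv isOpen_unitDisk))
    (differentiableOn_hadamardProd hf hzg) (funext fun n => ?_)
  rw [taylorCoeff_id_mul_deriv hprod, taylorCoeff_hadamardProd hf hg,
    taylorCoeff_hadamardProd hf hzg, taylorCoeff_id_mul_deriv hg]
  ring

/-- The quotient `(H ⋆ EP) / (H ⋆ E)` of Hadamard products. It is linear in `P` and equals `1` at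
`P = 1`, hence behaves as a mean value of `P`; it is `0` by convention where `H ⋆ E` vanishes. -/
def hadamardRatio (H E P : ℂ → ℂ) (w : ℂ) : ℂ := hadamardProd H (E * P) w / hadamardProd H E w

lemma differentiableOn_hadamardRatio {E P : ℂ → ℂ} (hH : DifferentiableOn ℂ H 𝔻)
    (hE : DifferentiableOn ℂ E 𝔻) (hP : DifferentiableOn ℂ P 𝔻)
    (hne : ∀ w ∈ 𝔻, hadamardProd H E w ≠ 0) : DifferentiableOn ℂ (hadamardRatio H E P) 𝔻 :=
  (differentiableOn_hadamardProd hH (hE.mul hP)).div (differentiableOn_hadamardProd hH hE) hne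

lemma hadamardRatio_apply_zero {E : ℂ → ℂ} (hH : H 0 ≠ 0) (hE : E 0 ≠ 0) (P : ℂ → ℂ) :
    hadamardRatio H E P 0 = P 0 := by
  rw [hadamardRatio, hadamardProd_apply_zero, hadamardProd_apply_zero, Pi.mul_apply, ← mul_assoc,
    mul_div_cancel_left₀ _ (mul_ne_zero hH hE)]

end HadamardProduct

section CauchyKernel

variable {f H : ℂ → ℂ} {w x y s z : ℂ}

/-- The kernel `1 / (1 - xz) = ∑ xⁿ zⁿ`, which reproduces `f (xw)` under the Hadamard product. -/
def cauchyKernel (x z : ℂ) : ℂ := (1 - x * z)⁻¹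

/-- The Herglotz kernel `(1 + sz) / (1 - sz)`, whose real part is positive on the unit disk; it is
written through `cauchyKernel` so that linearity reduces it to that kernel. -/
def herglotzKernel (s : ℂ) : ℂ → ℂ := (2 : ℂ) • cauchyKernel s + (-1 : ℂ) • 1

lemma one_sub_mul_ne_zero (hx : ‖x‖ ≤ 1) (hz : z ∈ 𝔻) : 1 - x * z ≠ 0 := fun h =>
  (mem_unitDisk.1 (mul_mem_unitDisk hx hz)).ne (by rw [← sub_eq_zero.1 h, norm_one])

lemma differentiableOn_cauchyKernel (hx : ‖x‖ ≤ 1) : DifferentiableOn ℂ (cauchyKernel x) 𝔻 :=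
  DifferentiableOn.fun_inv (by fun_prop) fun _ hz => one_sub_mul_ne_zero hx hz

lemma differentiableOn_herglotzKernel (hs : ‖s‖ ≤ 1) :
    DifferentiableOn ℂ (herglotzKernel s) 𝔻 :=
  ((differentiableOn_cauchyKernel hs).const_smul _).add ((differentiableOn_const 1).const_smul _)

lemma taylorCoeff_cauchyKernel (hx : ‖x‖ ≤ 1) (n : ℕ) : taylorCoeff (cauchyKernel x) n = x ^ n := by
  refine congrFun (taylorCoeff_eq_of_hasSum (c := fun n => x ^ n) fun z hz => ?_) n
  simpa only [mul_pow, cauchyKernel] using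
    hasSum_geometric_of_norm_lt_one (mem_unitDisk.1 (mul_mem_unitDisk hx hz))

lemma taylorCoeff_cauchyKernel_mul_self (hx : ‖x‖ ≤ 1) (n : ℕ) :
    taylorCoeff (cauchyKernel x * cauchyKernel x) n = (n + 1) * x ^ n := by
  refine congrFun (taylorCoeff_eq_of_hasSum (c := fun n => (n + 1) * x ^ n) fun z hz => ?_) n
  have hsum := hasSum_choose_mul_geometric_of_norm_lt_one 1
    (mem_unitDisk.1 (mul_mem_unitDisk hx hz))
  simpa [cauchyKernel, mul_pow, mul_assoc, sq] using hsum

lemma hadamardProd_cauchyKernel (hH : DifferentiableOn ℂ H 𝔻) (hx : ‖x‖ ≤ 1) (hw : w ∈ 𝔻) :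
    hadamardProd H (cauchyKernel x) w = H (x * w) := by
  rw [← (hasSum_taylorCoeff hH (mul_mem_unitDisk hx hw)).tsum_eq, hadamardProd]
  refine tsum_congr fun n => ?_
  rw [taylorCoeff_cauchyKernel hx, mul_pow, mul_assoc]

lemma hadamardProd_dslope_cauchyKernel_mul_self (hf : DifferentiableOn ℂ f 𝔻) (hx : ‖x‖ ≤ 1)
    (hw : w ∈ 𝔻) :
    hadamardProd (dslope f 0) (cauchyKernel x * cauchyKernel x) w = deriv f (x * w) := by
  have hsum := hasSum_taylorCoeff (hf.deriv isOpen_unitDisk) (mul_mem_unitDisk hx hw)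
  rw [← hsum.tsum_eq, hadamardProd]
  refine tsum_congr fun n => ?_
  rw [taylorCoeff_cauchyKernel_mul_self hx, taylorCoeff_dslope hf, taylorCoeff_deriv]
  ring

lemma cauchyKernel_zero_left : cauchyKernel 0 = 1 := by
  ext z
  simp [cauchyKernel]

lemma hadamardProd_mul_herglotzKernel {E : ℂ → ℂ} (hH : DifferentiableOn ℂ H 𝔻)
    (hE : DifferentiableOn ℂ E 𝔻) (hs : ‖s‖ ≤ 1) (hw : w ∈ 𝔻) :
    hadamardProd H (E * herglotzKernel s) w =
      2 * hadamardProd H (E * cauchyKernel s) w - hadamardProd H E w := by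
  rw [herglotzKernel, mul_add, mul_smul_comm, mul_smul_comm, mul_one,
    hadamardProd_smul_add_smul hH (hE.mul (differentiableOn_cauchyKernel hs)) hE _ _ hw]
  ring

lemma sub_smul_cauchyKernel_mul_cauchyKernel (hx : ‖x‖ ≤ 1) (hy : ‖y‖ ≤ 1) :
    EqOn ((x - y) • (cauchyKernel x * cauchyKernel y))
      (x • cauchyKernel x + (-y) • cauchyKernel y) 𝔻 := fun z hz => by
  have hxz := one_sub_mul_ne_zero hx hz
  have hyz := one_sub_mul_ne_zero hy hz
  simp only [Pi.smul_apply, Pi.mul_apply, Pi.add_apply, cauchyKernel, smul_eq_mul]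
  field_simp
  ring

end CauchyKernel

section CircleAverage

open Real (circleAverage)

variable {f H E P : ℂ → ℂ} {w : ℂ} {R : ℝ}

lemma hasSum_circleAverage_mul_pow {G φ S : ℂ → ℂ} {a : ℕ → ℂ} {r : ℝ}
    (hG : ContinuousOn G (sphere 0 |R|)) (hφ : ContinuousOn φ (sphere 0 |R|))
    (hφr : ∀ ζ ∈ sphere (0 : ℂ) |R|, ‖φ ζ‖ ≤ r) (ha : Summable fun n => ‖a n‖ * r ^ n)
    (hS : ∀ ζ ∈ sphere (0 : ℂ) |R|, HasSum (fun n => a n * φ ζ ^ n) (S ζ)) :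
    HasSum (fun n => a n * circleAverage (fun ζ => G ζ * φ ζ ^ n) 0 R)
      (circleAverage (fun ζ => G ζ * S ζ) 0 R) := by
  obtain ⟨M, hM⟩ := (isCompact_sphere (0 : ℂ) |R|).exists_bound_of_continuousOn hG
  have hmem (θ : ℝ) : circleMap 0 R θ ∈ sphere (0 : ℂ) |R| := circleMap_mem_sphere' 0 R θ
  have hterm (n : ℕ) : a n * circleAverage (fun ζ => G ζ * φ ζ ^ n) 0 R =
      circleAverage (fun ζ => G ζ * (a n * φ ζ ^ n)) 0 R := by
    rw [← smul_eq_mul, ← Real.circleAverage_fun_smul]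
    simp only [smul_eq_mul, mul_left_comm]
  simp only [hterm]
  refine HasSum.const_smul _ (intervalIntegral.hasSum_integral_of_dominated_convergence
    (fun n _ => M * (‖a n‖ * r ^ n)) (fun n => ?_) (fun n => ?_) ?_ intervalIntegrable_const ?_)
  · exact ((hG.mul (continuousOn_const.mul (hφ.pow n))).comp_continuous
      (continuous_circleMap 0 R) hmem).aestronglyMeasurable
  · refine Filter.Eventually.of_forall fun θ _ => ?_
    rw [norm_mul, norm_mul, norm_pow]
    gcongr
    exacts [(norm_nonneg _).trans (hM _ (hmem θ)), hM _ (hmem θ), hφr _ (hmem θ)]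
  · exact Filter.Eventually.of_forall fun _ _ => ha.mul_left M
  · exact Filter.Eventually.of_forall fun θ _ => (hS _ (hmem θ)).mul_left _

lemma circleAverage_mul_inv_pow (hR : 0 < R) (hf : DifferentiableOn ℂ f (closedBall 0 R))
    (n : ℕ) : circleAverage (fun ζ => f ζ * ζ⁻¹ ^ n) 0 R = taylorCoeff f n := by
  have hcauchy := hf.circleIntegral_one_div_sub_center_pow_smul hR n
  have hintegrand : (∮ ζ in C(0, R), (ζ - 0)⁻¹ • (f ζ * ζ⁻¹ ^ n)) =
      ∮ ζ in C(0, R), (1 / (ζ - 0) ^ (n + 1)) • f ζ :=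
    circleIntegral.integral_congr hR.le fun ζ _ => by
      simp only [sub_zero, smul_eq_mul, one_div, pow_succ, mul_inv, inv_pow]
      ring
  rw [Real.circleAverage_eq_circleIntegral hR.ne', hintegrand, hcauchy, taylorCoeff, smul_smul,
    smul_eq_mul, ← mul_div_assoc, inv_mul_cancel₀ two_pi_I_ne_zero, one_div_mul_eq_div]

lemma circleAverage_mul_pow (hR : 0 ≤ R) (hf : DifferentiableOn ℂ f (closedBall 0 R)) (n : ℕ) :
    circleAverage (fun ζ => f ζ * ζ ^ n) 0 R = f 0 * 0 ^ n := by
  refine DiffContOnCl.circleAverage (f := fun ζ => f ζ * ζ ^ n) ?_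
  rw [abs_of_nonneg hR]
  exact ((hf.mul (by fun_prop)).mono closure_ball_subset_closedBall).diffContOnCl

lemma continuousOn_inv_sphere (hR : R ≠ 0) :
    ContinuousOn (fun ζ : ℂ => ζ⁻¹) (sphere 0 |R|) :=
  continuousOn_id.inv₀ fun _ hζ => ne_of_mem_sphere hζ (abs_ne_zero.2 hR)

lemma div_mem_unitDisk (hwR : ‖w‖ < R) {ζ : ℂ} (hζ : ζ ∈ sphere (0 : ℂ) |R|) : w / ζ ∈ 𝔻 := by
  have hR : 0 < R := (norm_nonneg w).trans_lt hwR
  rw [mem_sphere_zero_iff_norm, abs_of_pos hR] at hζ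
  rwa [mem_unitDisk, norm_div, hζ, div_lt_one hR]

lemma hadamardProd_eq_circleAverage (hH : DifferentiableOn ℂ H 𝔻) (hf : DifferentiableOn ℂ f 𝔻)
    (hwR : ‖w‖ < R) (hR : R < 1) :
    hadamardProd H f w = circleAverage (fun ζ => f ζ * H (w / ζ)) 0 R := by
  have hR0 : 0 < R := (norm_nonneg w).trans_lt hwR
  have hf_closed : DifferentiableOn ℂ f (closedBall 0 R) := hf.mono (closedBall_subset_ball hR)
  have hmem : w / R ∈ 𝔻 := div_mem_unitDisk hwR (by simp)
  have hsum := hasSum_circleAverage_mul_pow (φ := fun ζ => w / ζ) (r := ‖w / R‖)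
    (hf_closed.continuousOn.mono (by simpa [abs_of_pos hR0] using sphere_subset_closedBall))
    (continuousOn_const.mul (continuousOn_inv_sphere hR0.ne'))
    (fun ζ hζ => by simp [mem_sphere_zero_iff_norm.1 hζ])
    (by simpa using (hasSum_taylorCoeff hH hmem).summable.norm)
    (fun ζ hζ => hasSum_taylorCoeff hH (div_mem_unitDisk hwR hζ))
  rw [← hsum.tsum_eq, hadamardProd]
  refine tsum_congr fun n => ?_
  have hfactor : (fun ζ => f ζ * (w / ζ) ^ n) = fun ζ => w ^ n • (f ζ * ζ⁻¹ ^ n) := by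
    ext ζ
    rw [div_eq_mul_inv, mul_pow, smul_eq_mul, mul_left_comm]
  rw [hfactor, Real.circleAverage_fun_smul, circleAverage_mul_inv_pow hR0 hf_closed, smul_eq_mul]
  ring

lemma exists_hasSum_hadamardProd_mul (hH : DifferentiableOn ℂ H 𝔻)
    (hE : DifferentiableOn ℂ E 𝔻) (hw : w ∈ 𝔻) :
    ∃ c : ℕ → ℂ, ∀ P, DifferentiableOn ℂ P 𝔻 →
      HasSum (fun n => taylorCoeff P n * c n) (hadamardProd H (E * P) w) := by
  obtain ⟨R, hwR, hR⟩ := exists_between (mem_unitDisk.1 hw)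
  have hR0 : 0 < R := (norm_nonneg w).trans_lt hwR
  have hsphere : sphere (0 : ℂ) |R| ⊆ 𝔻 := by
    rw [abs_of_pos hR0]
    exact sphere_subset_ball hR
  have hcont : ContinuousOn (fun ζ => E ζ * H (w / ζ)) (sphere 0 |R|) :=
    (hE.continuousOn.mono hsphere).mul (hH.continuousOn.comp
      (continuousOn_const.mul (continuousOn_inv_sphere hR0.ne')) fun _ => div_mem_unitDisk hwR)
  refine ⟨fun n => circleAverage (fun ζ => E ζ * H (w / ζ) * ζ ^ n) 0 R, fun P hP => ?_⟩
  have hRmem : (R : ℂ) ∈ 𝔻 := hsphere (by simp)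
  rw [hadamardProd_eq_circleAverage hH (hE.mul hP) hwR hR]
  simp only [Pi.mul_apply, mul_right_comm (E _) (P _)]
  exact hasSum_circleAverage_mul_pow (φ := fun ζ => ζ) (S := P) (r := R) hcont continuousOn_id
    (fun ζ hζ => by simp [mem_sphere_zero_iff_norm.1 hζ, abs_of_pos hR0])
    (by simpa [abs_of_pos hR0] using (hasSum_taylorCoeff hP hRmem).summable.norm)
    (fun ζ hζ => hasSum_taylorCoeff hP (hsphere hζ))

lemma continuousOn_hadamardProd_mul_cauchyKernel (hH : DifferentiableOn ℂ H 𝔻)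
    (hE : DifferentiableOn ℂ E 𝔻) (hw : w ∈ 𝔻) :
    ContinuousOn (fun s => hadamardProd H (E * cauchyKernel s) w) (sphere 0 1) := by
  obtain ⟨c, hc⟩ := exists_hasSum_hadamardProd_mul hH hE hw
  have hsum {s : ℂ} (hs : ‖s‖ ≤ 1) :
      HasSum (fun n => s ^ n * c n) (hadamardProd H (E * cauchyKernel s) w) := by
    simpa only [taylorCoeff_cauchyKernel hs] using hc _ (differentiableOn_cauchyKernel hs)
  have hc_summable : Summable fun n => ‖c n‖ := by
    simpa using (hsum norm_one.le).summable.norm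
  refine ContinuousOn.congr (f := fun s => ∑' n, s ^ n * c n) ?_ fun s hs =>
    (hsum (mem_sphere_zero_iff_norm.1 hs).le).tsum_eq.symm
  refine continuousOn_tsum (fun n => by fun_prop) hc_summable fun n s hs => ?_
  simp [mem_sphere_zero_iff_norm.1 hs]

lemma continuousOn_tsum_mul_inv_pow {c : ℕ → ℂ} (hc : Summable fun n => ‖c n‖) :
    ContinuousOn (fun ζ : ℂ => ∑' n, c n * ζ⁻¹ ^ n) (sphere 0 |1|) :=
  continuousOn_tsum (fun n => continuousOn_const.mul ((continuousOn_inv_sphere one_ne_zero).pow n))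
    hc fun n ζ hζ => by simp [mem_sphere_zero_iff_norm.1 hζ]

lemma circleAverage_mul_tsum_mul_inv_pow {c : ℕ → ℂ} (hc : Summable fun n => ‖c n‖)
    (hP : DifferentiableOn ℂ P (closedBall 0 1)) :
    circleAverage (fun ζ => P ζ * ∑' n, c n * ζ⁻¹ ^ n) 0 1 = ∑' n, c n * taylorCoeff P n := by
  have hPc : ContinuousOn P (sphere 0 |1|) :=
    hP.continuousOn.mono (by simpa using sphere_subset_closedBall)
  have hsum := hasSum_circleAverage_mul_pow (φ := fun ζ => ζ⁻¹) (r := 1) hPc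
    (continuousOn_inv_sphere one_ne_zero) (fun ζ hζ => by simp [mem_sphere_zero_iff_norm.1 hζ])
    (by simpa using hc) fun ζ hζ => (Summable.of_norm
      (by simpa [mem_sphere_zero_iff_norm.1 hζ] using hc) : Summable fun n => c n * ζ⁻¹ ^ n).hasSum
  simp only [← hsum.tsum_eq, circleAverage_mul_inv_pow one_pos hP]

lemma circleAverage_mul_conj_tsum_mul_inv_pow {c : ℕ → ℂ} (hc : Summable fun n => ‖c n‖)
    (hP : DifferentiableOn ℂ P (closedBall 0 1)) :
    circleAverage (fun ζ => P ζ * starRingEnd ℂ (∑' n, c n * ζ⁻¹ ^ n)) 0 1 =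
      P 0 * starRingEnd ℂ (c 0) := by
  have hPc : ContinuousOn P (sphere 0 |1|) :=
    hP.continuousOn.mono (by simpa using sphere_subset_closedBall)
  have hsum := hasSum_circleAverage_mul_pow (φ := fun ζ => ζ) (r := 1)
    (a := fun n => starRingEnd ℂ (c n)) (S := fun ζ => starRingEnd ℂ (∑' n, c n * ζ⁻¹ ^ n)) hPc
    continuousOn_id (fun ζ hζ => by simp [mem_sphere_zero_iff_norm.1 hζ]) (by simpa using hc)
    fun ζ hζ => by
      have hζ1 : ‖ζ‖ = 1 := by simpa using hζ
      have hkernel : HasSum (fun n => c n * ζ⁻¹ ^ n) (∑' n, c n * ζ⁻¹ ^ n) :=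
        (Summable.of_norm (by simpa [hζ1] using hc)).hasSum
      simpa [inv_eq_conj hζ1] using hasSum_conj'.2 hkernel
  simp only [← hsum.tsum_eq, circleAverage_mul_pow zero_le_one hP]
  rw [tsum_eq_single 0 fun n hn => by simp [hn], pow_zero, mul_one, mul_comm]

lemma tsum_mul_taylorCoeff_eq_circleAverage {c : ℕ → ℂ} (hc : Summable fun n => ‖c n‖)
    (hc₀ : c 0 = 1) (hP : DifferentiableOn ℂ P (closedBall 0 1)) :
    ∑' n, c n * taylorCoeff P n =
      circleAverage (fun ζ => P ζ * ((2 * ∑' n, c n * ζ⁻¹ ^ n - 1).re : ℝ)) 0 1 := by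
  have hPc : ContinuousOn P (sphere 0 |1|) :=
    hP.continuousOn.mono (by simpa using sphere_subset_closedBall)
  have hkc := continuousOn_tsum_mul_inv_pow hc
  have hint : CircleIntegrable (fun ζ => P ζ * ∑' n, c n * ζ⁻¹ ^ n) 0 1 :=
    (hPc.mul hkc).circleIntegrable'
  have hint_conj : CircleIntegrable
      (fun ζ => P ζ * starRingEnd ℂ (∑' n, c n * ζ⁻¹ ^ n)) 0 1 :=
    (hPc.mul (continuous_conj.comp_continuousOn hkc)).circleIntegrable'
  have hmean : circleAverage P 0 1 = P 0 := by
    simpa using circleAverage_mul_pow zero_le_one hP 0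
  have hsplit : (fun ζ => P ζ * ((2 * ∑' n, c n * ζ⁻¹ ^ n - 1).re : ℝ)) =
      (fun ζ => P ζ * ∑' n, c n * ζ⁻¹ ^ n) +
        (fun ζ => P ζ * starRingEnd ℂ (∑' n, c n * ζ⁻¹ ^ n)) - P := by
    ext ζ
    simp only [Pi.sub_apply, Pi.add_apply, ← mul_add, add_conj]
    simp [mul_sub]
  rw [hsplit, Real.circleAverage_sub (hint.add hint_conj) hPc.circleIntegrable',
    Real.circleAverage_add hint hint_conj,
    circleAverage_mul_tsum_mul_inv_pow hc hP, circleAverage_mul_conj_tsum_mul_inv_pow hc hP, hmean,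
    hc₀, map_one, mul_one, add_sub_cancel_right]

lemma re_tsum_mul_taylorCoeff_nonneg {c : ℕ → ℂ} (hc : Summable fun n => ‖c n‖) (hc₀ : c 0 = 1)
    (hre : ∀ s : ℂ, ‖s‖ = 1 → 0 ≤ (2 * ∑' n, c n * s ^ n - 1).re)
    (hP : DifferentiableOn ℂ P (closedBall 0 1)) (hPre : ∀ z : ℂ, ‖z‖ = 1 → 0 ≤ (P z).re) :
    0 ≤ (∑' n, c n * taylorCoeff P n).re := by
  have hPc : ContinuousOn P (sphere 0 |1|) :=
    hP.continuousOn.mono (by simpa using sphere_subset_closedBall)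
  have hkc := continuousOn_tsum_mul_inv_pow hc
  rw [tsum_mul_taylorCoeff_eq_circleAverage hc hc₀ hP, ← reCLM_apply,
    ← reCLM.circleAverage_comp_comm (ContinuousOn.circleIntegrable' (by fun_prop))]
  refine Real.circleAverage_nonneg_of_nonneg fun ζ hζ => ?_
  have hζ1 : ‖ζ‖ = 1 := by simpa using hζ
  simpa only [Function.comp_apply, reCLM_apply, re_mul_ofReal] using
    mul_nonneg (hPre ζ hζ1) (hre ζ⁻¹ (by simp [hζ1]))

lemma re_hadamardRatio_nonneg (hH : DifferentiableOn ℂ H 𝔻) (hE : DifferentiableOn ℂ E 𝔻)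
    (hw : w ∈ 𝔻) (hD : hadamardProd H E w ≠ 0)
    (hre : ∀ s : ℂ, ‖s‖ = 1 → 0 ≤ (hadamardRatio H E (herglotzKernel s) w).re)
    (hP : DifferentiableOn ℂ P (closedBall 0 1)) (hPre : ∀ z : ℂ, ‖z‖ = 1 → 0 ≤ (P z).re) :
    0 ≤ (hadamardRatio H E P w).re := by
  obtain ⟨c, hc⟩ := exists_hasSum_hadamardProd_mul hH hE hw
  set D := hadamardProd H E w with hD_def
  have hdiv {Q : ℂ → ℂ} (hQ : DifferentiableOn ℂ Q 𝔻) :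
      HasSum (fun n => c n / D * taylorCoeff Q n) (hadamardProd H (E * Q) w / D) := by
    simpa only [mul_comm (taylorCoeff Q _), div_mul_eq_mul_div] using (hc Q hQ).div_const D
  have hkernel {s : ℂ} (hs : ‖s‖ ≤ 1) :
      HasSum (fun n => c n / D * s ^ n) (hadamardProd H (E * cauchyKernel s) w / D) := by
    simpa only [taylorCoeff_cauchyKernel hs] using hdiv (differentiableOn_cauchyKernel hs)
  have hc₀ : c 0 / D = 1 := by
    have hsum := (hkernel (s := 0) (by simp)).tsum_eq
    rwa [tsum_eq_single 0 fun n hn => by simp [hn], pow_zero, mul_one, cauchyKernel_zero_left,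
      mul_one, div_self hD] at hsum
  rw [hadamardRatio, ← hD_def, ← (hdiv (hP.mono ball_subset_closedBall)).tsum_eq]
  refine re_tsum_mul_taylorCoeff_nonneg (by simpa using (hkernel norm_one.le).summable.norm) hc₀
    (fun s hs => ?_) hP hPre
  rw [(hkernel hs.le).tsum_eq, ← mul_div_assoc, ← div_self hD, ← sub_div,
    ← hadamardProd_mul_herglotzKernel hH hE hs.le hw]
  exact hre s hs

end CircleAverage

section ConvexCurve

variable {f u : ℂ → ℂ} {ρ : ℝ} {T : ℝ → ℝ}

lemma IsConvexFn.differentiableOn (hf : IsConvexFn f) : DifferentiableOn ℂ f 𝔻 := hf.1.1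

lemma IsConvexFn.deriv_ne_zero (hf : IsConvexFn f) {z : ℂ} (hz : z ∈ 𝔻) : deriv f z ≠ 0 :=
  hf.2.1 z hz

lemma exists_hasDerivAt_exp_eq (hu : DifferentiableOn ℂ u 𝔻) (hne : ∀ z ∈ 𝔻, u z ≠ 0) :
    ∃ l : ℂ → ℂ, ∀ z ∈ 𝔻, HasDerivAt l (deriv u z / u z) z ∧ exp (l z) = u z := by
  have hlogDeriv : DifferentiableOn ℂ (fun z => deriv u z / u z) 𝔻 :=
    (hu.deriv isOpen_unitDisk).div hu hne
  obtain ⟨l, hl₀, hl⟩ := hlogDeriv.isExactOn_ball.with_val_at 0 (log (u 0))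
  have hderiv (z : ℂ) (hz : z ∈ 𝔻) : HasDerivAt (fun z => exp (l z) / u z) 0 z := by
    have hdiv := (hl z hz).cexp.div
      (hu.differentiableAt (isOpen_unitDisk.mem_nhds hz)).hasDerivAt (hne z hz)
    convert! hdiv using 1
    have := hne z hz
    field_simp
    ring
  refine ⟨l, fun z hz => ⟨hl z hz, ?_⟩⟩
  have hconst := isOpen_unitDisk.is_const_of_deriv_eq_zero isPreconnected_unitDisk
    (fun z hz => (hderiv z hz).differentiableAt.differentiableWithinAt)
    (fun z hz => (hderiv z hz).deriv) hz zero_mem_unitDisk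
  rwa [hl₀, exp_log (hne 0 zero_mem_unitDisk), div_self (hne 0 zero_mem_unitDisk),
    div_eq_one_iff_eq (hne z hz)] at hconst

lemma circleMap_mem_unitDisk (hρ₀ : 0 ≤ ρ) (hρ₁ : ρ < 1) (θ : ℝ) : circleMap 0 ρ θ ∈ 𝔻 := by
  rwa [mem_unitDisk, norm_circleMap_zero, abs_of_nonneg hρ₀]

lemma exists_mem_Ioc_circleMap_eq {z : ℂ} (hz : ‖z‖ = ρ) (a : ℝ) :
    ∃ θ ∈ Ioc a (a + 2 * Real.pi), circleMap 0 ρ θ = z := by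
  have hmem : z ∈ circleMap 0 ρ '' Ioc 0 (2 * Real.pi) := by
    rw [image_circleMap_Ioc, mem_sphere_zero_iff_norm, hz, abs_of_nonneg (hz ▸ norm_nonneg z)]
  rwa [← zero_add (2 * Real.pi), (periodic_circleMap 0 ρ).image_Ioc Real.two_pi_pos 0,
    ← (periodic_circleMap 0 ρ).image_Ioc Real.two_pi_pos a] at hmem

/-- `T` is a continuous strictly increasing direction angle of the curve `θ ↦ f (ρ e^{iθ})`, which
makes one turn per period: the tangent vector at `θ` is a positive multiple of `i e^{iT(θ)}`, that
is, `f'(ρ e^{iθ})` has argument `T θ - θ`. -/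
structure IsTurningAngle (f : ℂ → ℂ) (ρ : ℝ) (T : ℝ → ℝ) : Prop where
  strictMono : StrictMono T
  continuous : Continuous T
  map_add_two_pi (θ : ℝ) : T (θ + 2 * Real.pi) = T θ + 2 * Real.pi
  deriv_eq (θ : ℝ) : deriv f (circleMap 0 ρ θ) =
    ‖deriv f (circleMap 0 ρ θ)‖ * exp ((T θ - θ : ℝ) * I)

lemma IsConvexFn.exists_isTurningAngle (hf : IsConvexFn f) (hρ₀ : 0 ≤ ρ) (hρ₁ : ρ < 1) :
    ∃ T, IsTurningAngle f ρ T := by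
  obtain ⟨l, hl⟩ := exists_hasDerivAt_exp_eq (hf.differentiableOn.deriv isOpen_unitDisk) hf.2.1
  have hmem (θ : ℝ) : circleMap 0 ρ θ ∈ 𝔻 := circleMap_mem_unitDisk hρ₀ hρ₁ θ
  have hT (θ : ℝ) : HasDerivAt (fun θ => θ + (l (circleMap 0 ρ θ)).im)
      (1 + circleMap 0 ρ θ * deriv (deriv f) (circleMap 0 ρ θ) / deriv f (circleMap 0 ρ θ)).re
      θ := by
    have hcurve := (hl _ (hmem θ)).1.comp θ (hasDerivAt_circleMap 0 ρ θ)
    convert! (hasDerivAt_id θ).add (imCLM.hasFDerivAt.comp_hasDerivAt θ hcurve) using 1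
    rw [imCLM_apply, ← mul_assoc, mul_I_im, add_re, one_re, div_mul_eq_mul_div, mul_comm]
  refine ⟨fun θ => θ + (l (circleMap 0 ρ θ)).im, strictMono_of_deriv_pos fun θ => ?_,
    continuous_iff_continuousAt.2 fun θ => (hT θ).continuousAt, fun θ => ?_, fun θ => ?_⟩
  · rw [(hT θ).deriv]
    exact hf.2.2 _ (hmem θ)
  · rw [periodic_circleMap 0 ρ θ, add_right_comm]
  · rw [← (hl _ (hmem θ)).2, norm_exp, add_sub_cancel_left, ofReal_exp, ← exp_add, re_add_im]

lemma IsTurningAngle.hasDerivAt_im_mul (hT : IsTurningAngle f ρ T) (hf : DifferentiableOn ℂ f 𝔻)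
    (hρ₀ : 0 ≤ ρ) (hρ₁ : ρ < 1) (d : ℂ) (θ : ℝ) :
    HasDerivAt (fun θ => (d * f (circleMap 0 ρ θ)).im)
      (‖d‖ * ρ * ‖deriv f (circleMap 0 ρ θ)‖ * Real.cos (T θ + arg d)) θ := by
  have hf_at := (hf.differentiableAt
    (isOpen_unitDisk.mem_nhds (circleMap_mem_unitDisk hρ₀ hρ₁ θ))).hasDerivAt
  have hcurve := (hf_at.comp θ (hasDerivAt_circleMap 0 ρ θ)).const_mul d
  convert! imCLM.hasFDerivAt.comp_hasDerivAt θ hcurve using 1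
  have hpolar : d * (deriv f (circleMap 0 ρ θ) * (circleMap 0 ρ θ * I)) =
      ((‖d‖ * ρ * ‖deriv f (circleMap 0 ρ θ)‖ : ℝ) : ℂ) * exp ((T θ + arg d : ℝ) * I) * I := by
    have hdirection := hT.deriv_eq θ
    set R := ‖deriv f (circleMap 0 ρ θ)‖
    rw [hdirection, circleMap_zero]
    nth_rw 1 [← norm_mul_exp_arg_mul_I d]
    push_cast
    rw [sub_mul, exp_sub, add_mul, exp_add]
    field_simp [exp_ne_zero]
  rw [imCLM_apply, hpolar, mul_I_im, re_ofReal_mul, exp_ofReal_mul_I_re]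

lemma not_cos_eq_zero_three {a b c : ℝ} (hab : a < b) (hbc : b < c) (hca : c < a + 2 * Real.pi)
    (ha : Real.cos a = 0) (hb : Real.cos b = 0) : Real.cos c ≠ 0 := by
  intro hc
  obtain ⟨i, rfl⟩ := Real.cos_eq_zero_iff.1 ha
  obtain ⟨j, rfl⟩ := Real.cos_eq_zero_iff.1 hb
  obtain ⟨k, rfl⟩ := Real.cos_eq_zero_iff.1 hc
  have hij : (i : ℝ) < j := by nlinarith [Real.pi_pos]
  have hjk : (j : ℝ) < k := by nlinarith [Real.pi_pos]
  have hki : (k : ℝ) < i + 2 := by nlinarith [Real.pi_pos]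
  norm_cast at hij hjk hki
  omega

-- By Rolle, a line met three times is parallel to three tangents within one turn.
lemma IsConvexFn.im_mul_circleMap_ne (hf : IsConvexFn f) (hρ₀ : 0 < ρ) (hρ₁ : ρ < 1) {d : ℂ}
    (hd : d ≠ 0) {a b c : ℝ} (hab : a < b) (hbc : b < c) (hca : c < a + 2 * Real.pi)
    (h_ab : (d * f (circleMap 0 ρ a)).im = (d * f (circleMap 0 ρ b)).im) :
    (d * f (circleMap 0 ρ b)).im ≠ (d * f (circleMap 0 ρ c)).im := by
  intro h_bc
  obtain ⟨T, hT⟩ := hf.exists_isTurningAngle hρ₀.le hρ₁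
  have hderiv := hT.hasDerivAt_im_mul hf.differentiableOn hρ₀.le hρ₁ d
  have exists_parallel {s t : ℝ} (hst : s < t)
      (heq : (d * f (circleMap 0 ρ s)).im = (d * f (circleMap 0 ρ t)).im) :
      ∃ τ ∈ Ioo s t, Real.cos (T τ + arg d) = 0 := by
    obtain ⟨τ, hτ, hzero⟩ := exists_hasDerivAt_eq_zero hst
      (HasDerivAt.continuousOn fun x _ => hderiv x) heq fun x _ => hderiv x
    have hne := hf.deriv_ne_zero (circleMap_mem_unitDisk hρ₀.le hρ₁ τ)
    exact ⟨τ, hτ, (mul_eq_zero.1 hzero).resolve_left (by positivity)⟩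
  obtain ⟨t₁, ht₁, hcos₁⟩ := exists_parallel hab h_ab
  obtain ⟨t₂, ht₂, hcos₂⟩ := exists_parallel hbc h_bc
  obtain ⟨t₃, ht₃, hcos₃⟩ := exists_parallel hca
    (by rw [periodic_circleMap 0 ρ a, h_ab, h_bc])
  have hT₁₂ : T t₁ < T t₂ := hT.strictMono (ht₁.2.trans ht₂.1)
  have hT₂₃ : T t₂ < T t₃ := hT.strictMono (ht₂.2.trans ht₃.1)
  have hT₃₁ : T t₃ < T t₁ + 2 * Real.pi := by
    rw [← hT.map_add_two_pi]
    exact hT.strictMono (by linarith [ht₁.1, ht₃.2])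
  exact not_cos_eq_zero_three (by linarith) (by linarith) (by linarith) hcos₁ hcos₂ hcos₃

lemma IsConvexFn.im_mul_ne (hf : IsConvexFn f) (hρ₀ : 0 < ρ) (hρ₁ : ρ < 1) {d : ℂ}
    (hd : d ≠ 0) {p q r : ℂ} (hp : ‖p‖ = ρ) (hq : ‖q‖ = ρ) (hr : ‖r‖ = ρ) (hpq : p ≠ q)
    (hqr : q ≠ r) (hrp : r ≠ p) (h_pq : (d * f p).im = (d * f q).im) :
    (d * f q).im ≠ (d * f r).im := by
  intro h_qr
  obtain ⟨a, -, rfl⟩ := exists_mem_Ioc_circleMap_eq hp 0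
  obtain ⟨b, ⟨hab, hb⟩, rfl⟩ := exists_mem_Ioc_circleMap_eq hq a
  obtain ⟨c, ⟨hac, hc⟩, rfl⟩ := exists_mem_Ioc_circleMap_eq hr a
  have hb' : b < a + 2 * Real.pi := hb.lt_of_ne fun h => hpq (by rw [h, periodic_circleMap 0 ρ a])
  have hc' : c < a + 2 * Real.pi := hc.lt_of_ne fun h => hrp (by rw [h, periodic_circleMap 0 ρ a])
  rcases lt_trichotomy b c with hbc | rfl | hcb
  · exact hf.im_mul_circleMap_ne hρ₀ hρ₁ hd hab hbc hc' h_pq h_qr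
  · exact hqr rfl
  · exact hf.im_mul_circleMap_ne hρ₀ hρ₁ hd hac hcb hb' (h_pq.trans h_qr) h_qr.symm

lemma exists_ne_zero_im_mul_eq_zero {z w : ℂ} (h : (z * starRingEnd ℂ w).im = 0) :
    ∃ d : ℂ, d ≠ 0 ∧ (d * z).im = 0 ∧ (d * w).im = 0 := by
  rcases eq_or_ne w 0 with rfl | hw
  · rcases eq_or_ne z 0 with rfl | hz
    · exact ⟨1, one_ne_zero, by simp⟩
    · exact ⟨starRingEnd ℂ z, (map_ne_zero _).2 hz, by simp [mul_comm]⟩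
  · exact ⟨starRingEnd ℂ w, (map_ne_zero _).2 hw, by rwa [mul_comm], by simp [mul_comm]⟩

lemma IsConvexFn.im_sub_mul_conj_sub_ne_zero (hf : IsConvexFn f) (hρ₀ : 0 < ρ) (hρ₁ : ρ < 1)
    {p q r : ℂ} (hp : ‖p‖ = ρ) (hq : ‖q‖ = ρ) (hr : ‖r‖ = ρ) (hpq : p ≠ q) (hqr : q ≠ r)
    (hrp : r ≠ p) : ((f p - f r) * starRingEnd ℂ (f q - f r)).im ≠ 0 := by
  intro hcollinear
  obtain ⟨d, hd, hd_pr, hd_qr⟩ := exists_ne_zero_im_mul_eq_zero hcollinear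
  rw [mul_sub, sub_im, sub_eq_zero] at hd_pr hd_qr
  exact hf.im_mul_ne hρ₀ hρ₁ hd hp hq hr hpq hqr hrp (hd_pr.trans hd_qr.symm) hd_qr

end ConvexCurve

section Robertson

variable {f : ℂ → ℂ} {ρ : ℝ} {T : ℝ → ℝ}

lemma one_sub_exp_mul_I (t : ℝ) :
    1 - exp (t * I) = -2 * I * Real.sin (t / 2) * exp ((t / 2 : ℝ) * I) := by
  have hsquare : exp (t * I) = exp ((t / 2 : ℝ) * I) * exp ((t / 2 : ℝ) * I) := by
    rw [← exp_add]
    push_cast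
    ring_nf
  rw [hsquare, exp_mul_I, ofReal_sin]
  linear_combination Complex.sin ((t / 2 : ℝ) : ℂ) ^ 2 * I_sq -
    Complex.sin_sq_add_cos_sq ((t / 2 : ℝ) : ℂ)

lemma IsTurningAngle.deriv_mul_one_sub_mul_one_sub (hT : IsTurningAngle f ρ T) (θ₁ θ₂ θ : ℝ) :
    deriv f (circleMap 0 ρ θ) * (1 - exp ((θ - θ₁ : ℝ) * I)) * (1 - exp ((θ - θ₂ : ℝ) * I)) =
      -4 * ‖deriv f (circleMap 0 ρ θ)‖ * Real.sin ((θ - θ₁) / 2) * Real.sin ((θ - θ₂) / 2) *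
        exp ((T θ - (θ₁ + θ₂) / 2 : ℝ) * I) := by
  have hdirection := hT.deriv_eq θ
  have hphase : exp ((T θ - (θ₁ + θ₂) / 2 : ℝ) * I) = exp ((T θ - θ : ℝ) * I) *
      exp (((θ - θ₁) / 2 : ℝ) * I) * exp (((θ - θ₂) / 2 : ℝ) * I) := by
    rw [← exp_add, ← exp_add]
    push_cast
    ring_nf
  set R := ‖deriv f (circleMap 0 ρ θ)‖
  rw [hdirection, hphase, one_sub_exp_mul_I, one_sub_exp_mul_I]
  linear_combination 4 * R * exp ((T θ - θ : ℝ) * I) * Real.sin ((θ - θ₁) / 2) *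
    exp (((θ - θ₁) / 2 : ℝ) * I) * Real.sin ((θ - θ₂) / 2) * exp (((θ - θ₂) / 2 : ℝ) * I) * I_sq

lemma IsTurningAngle.sin_mul_sin_mul_sin_nonpos (hT : IsTurningAngle f ρ T) {θ₁ θ₂ θ : ℝ}
    (hθ₂ : θ₂ ∈ Icc θ₁ (θ₁ + 2 * Real.pi)) (hT₂ : T θ₂ = T θ₁ + Real.pi)
    (hθ : θ ∈ Icc θ₁ (θ₁ + 2 * Real.pi)) :
    Real.sin ((θ - θ₁) / 2) * (Real.sin ((θ - θ₂) / 2) * Real.sin (T θ - T θ₁)) ≤ 0 := by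
  have hT_lower : T θ₁ ≤ T θ := hT.strictMono.monotone hθ.1
  have hT_upper : T θ ≤ T θ₁ + 2 * Real.pi :=
    hT.map_add_two_pi θ₁ ▸ hT.strictMono.monotone hθ.2
  have hsin₁ : 0 ≤ Real.sin ((θ - θ₁) / 2) :=
    Real.sin_nonneg_of_nonneg_of_le_pi (by linarith [hθ.1]) (by linarith [hθ.2])
  refine mul_nonpos_of_nonneg_of_nonpos hsin₁ ?_
  rcases le_total θ θ₂ with hle | hle
  · have hT_le : T θ ≤ T θ₂ := hT.strictMono.monotone hle
    refine mul_nonpos_of_nonpos_of_nonneg ?_ ?_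
    · exact Real.sin_nonpos_of_nonpos_of_neg_pi_le (by linarith) (by linarith [hθ.1, hθ₂.2])
    · exact Real.sin_nonneg_of_nonneg_of_le_pi (by linarith) (by linarith)
  · have hT_le : T θ₂ ≤ T θ := hT.strictMono.monotone hle
    refine mul_nonpos_of_nonneg_of_nonpos ?_ ?_
    · exact Real.sin_nonneg_of_nonneg_of_le_pi (by linarith) (by linarith [hθ.2, hθ₂.1])
    · rw [← Real.sin_sub_two_pi]
      exact Real.sin_nonpos_of_nonpos_of_neg_pi_le (by linarith) (by linarith)

-- Robertson's choice of `x`: the tangents at the parameters `1 / x` and `1 / x₁` are antiparallel.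
lemma IsConvexFn.exists_re_mul_deriv_mul_nonneg (hf : IsConvexFn f) (hρ₀ : 0 ≤ ρ) (hρ₁ : ρ < 1)
    {x₁ : ℂ} (hx₁ : ‖x₁‖ = 1) :
    ∃ x e : ℂ, ‖x‖ = 1 ∧ e ≠ 0 ∧
      ∀ z : ℂ, ‖z‖ = 1 → 0 ≤ (e * (deriv f (ρ * z) * (1 - x₁ * z) * (1 - x * z))).re := by
  obtain ⟨T, hT⟩ := hf.exists_isTurningAngle hρ₀ hρ₁
  obtain ⟨φ, -, rfl⟩ := exists_mem_Ioc_circleMap_eq hx₁ 0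
  set θ₁ := -φ with hθ₁
  obtain ⟨θ₂, hθ₂, hT₂⟩ : T θ₁ + Real.pi ∈ T '' Icc θ₁ (θ₁ + 2 * Real.pi) := by
    refine intermediate_value_Icc (by linarith [Real.pi_pos]) hT.continuous.continuousOn ?_
    rw [hT.map_add_two_pi]
    constructor <;> linarith [Real.pi_pos]
  refine ⟨circleMap 0 1 (-θ₂), exp (((θ₁ + θ₂) / 2 - T θ₁ : ℝ) * I) * -I, by simp,
    mul_ne_zero (exp_ne_zero _) (neg_ne_zero.2 I_ne_zero), fun z hz => ?_⟩
  obtain ⟨θ, hθ, rfl⟩ := exists_mem_Ioc_circleMap_eq hz θ₁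
  have hrotate (t : ℝ) : circleMap 0 1 (-t) * circleMap 0 1 θ = exp ((θ - t : ℝ) * I) := by
    rw [circleMap_zero_mul, circleMap_zero, neg_add_eq_sub, mul_one, ofReal_one, one_mul]
  have hscale : ρ * circleMap 0 1 θ = circleMap 0 ρ θ := by simp [circleMap_zero]
  have hphase : exp (((θ₁ + θ₂) / 2 - T θ₁ : ℝ) * I) * exp ((T θ - (θ₁ + θ₂) / 2 : ℝ) * I) =
      exp ((T θ - T θ₁ : ℝ) * I) := by
    rw [← exp_add]
    push_cast
    ring_nf
  have hvalue : exp (((θ₁ + θ₂) / 2 - T θ₁ : ℝ) * I) * -I * (deriv f (ρ * circleMap 0 1 θ) *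
      (1 - circleMap 0 1 φ * circleMap 0 1 θ) * (1 - circleMap 0 1 (-θ₂) * circleMap 0 1 θ)) =
      ((4 * ‖deriv f (circleMap 0 ρ θ)‖ * Real.sin ((θ - θ₁) / 2) * Real.sin ((θ - θ₂) / 2) : ℝ) :
        ℂ) * exp ((T θ - T θ₁ : ℝ) * I) * I := by
    rw [← neg_neg φ, ← hθ₁, hrotate, hrotate, hscale, hT.deriv_mul_one_sub_mul_one_sub, ← hphase]
    push_cast
    ring
  rw [hvalue, mul_I_re, im_ofReal_mul, exp_ofReal_mul_I_im]
  have hsign := mul_nonpos_of_nonneg_of_nonpos (norm_nonneg (deriv f (circleMap 0 ρ θ)))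
    (hT.sin_mul_sin_mul_sin_nonpos hθ₂ hT₂ (Ioc_subset_Icc_self hθ))
  linarith

end Robertson

section ConvexKernel

variable {h : ℂ → ℂ} {w x y s : ℂ}

lemma differentiableOn_cauchyKernel_mul_cauchyKernel (hx : ‖x‖ ≤ 1) (hy : ‖y‖ ≤ 1) :
    DifferentiableOn ℂ (cauchyKernel x * cauchyKernel y) 𝔻 :=
  (differentiableOn_cauchyKernel hx).mul (differentiableOn_cauchyKernel hy)

lemma mul_sub_mul_hadamardProd_cauchyKernel_mul_cauchyKernel (hh : DifferentiableOn ℂ h 𝔻)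
    (hx : ‖x‖ ≤ 1) (hy : ‖y‖ ≤ 1) (hw : w ∈ 𝔻) :
    w * ((x - y) * hadamardProd (dslope h 0) (cauchyKernel x * cauchyKernel y) w) =
      h (x * w) - h (y * w) := by
  have hH := differentiableOn_dslope_zero hh
  have hslope (z : ℂ) : z * dslope h 0 z = h z - h 0 := by simpa using sub_smul_dslope h 0 z
  rw [← hadamardProd_smul hH (differentiableOn_cauchyKernel_mul_cauchyKernel hx hy) _ hw,
    hadamardProd_congr_right (sub_smul_cauchyKernel_mul_cauchyKernel hx hy),
    hadamardProd_smul_add_smul hH (differentiableOn_cauchyKernel hx)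
      (differentiableOn_cauchyKernel hy) _ _ hw,
    hadamardProd_cauchyKernel hH hx hw, hadamardProd_cauchyKernel hH hy hw]
  linear_combination hslope (x * w) - hslope (y * w)

lemma herglotzKernel_apply (hs : ‖s‖ ≤ 1) {z : ℂ} (hz : z ∈ 𝔻) :
    herglotzKernel s z = (1 + s * z) / (1 - s * z) := by
  rw [eq_div_iff (one_sub_mul_ne_zero hs hz)]
  simp only [herglotzKernel, Pi.add_apply, Pi.smul_apply, Pi.one_apply, smul_eq_mul, cauchyKernel]
  linear_combination 2 * inv_mul_cancel₀ (one_sub_mul_ne_zero hs hz)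

lemma herglotzKernel_apply_zero (s : ℂ) : herglotzKernel s 0 = 1 := by
  norm_num [herglotzKernel, cauchyKernel]

lemma sub_smul_cauchyKernel_mul_cauchyKernel_mul_herglotzKernel (hx : ‖x‖ ≤ 1) (hy : ‖y‖ ≤ 1)
    (hs : ‖s‖ ≤ 1) :
    EqOn ((x - y) • (cauchyKernel x * cauchyKernel y * herglotzKernel s))
      ((x + s) • (cauchyKernel x * cauchyKernel s) +
        (-(y + s)) • (cauchyKernel y * cauchyKernel s)) 𝔻 := fun z hz => by
  have hxz := one_sub_mul_ne_zero hx hz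
  have hyz := one_sub_mul_ne_zero hy hz
  simp only [Pi.smul_apply, Pi.mul_apply, Pi.add_apply, cauchyKernel, herglotzKernel_apply hs hz,
    smul_eq_mul]
  field_simp
  ring

lemma exists_add_eq_mul_I_mul_sub (hx : ‖x‖ = 1) (hs : ‖s‖ = 1) (hxs : x ≠ s) :
    ∃ u : ℝ, x + s = u * I * (x - s) := by
  have hre : ((x + s) / (x - s)).re = 0 := by
    have hnorm : normSq x = normSq s := by rw [normSq_eq_norm_sq, normSq_eq_norm_sq, hx, hs]
    rw [normSq_apply, normSq_apply] at hnorm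
    rw [div_re, ← add_div, div_eq_zero_iff, add_re, add_im, sub_re, sub_im]
    left
    linear_combination hnorm
  refine ⟨((x + s) / (x - s)).im, (div_eq_iff (sub_ne_zero.2 hxs)).1 ?_⟩
  apply Complex.ext <;> simp [hre]

lemma mul_sub_mul_hadamardProd_mul_herglotzKernel {u v : ℝ} (hh : DifferentiableOn ℂ h 𝔻)
    (hx : ‖x‖ ≤ 1) (hy : ‖y‖ ≤ 1) (hs : ‖s‖ ≤ 1) (hu : x + s = u * I * (x - s))
    (hv : y + s = v * I * (y - s)) (hw : w ∈ 𝔻) :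
    w * ((x - y) * hadamardProd (dslope h 0)
        (cauchyKernel x * cauchyKernel y * herglotzKernel s) w) =
      (u * (h (x * w) - h (s * w)) - v * (h (y * w) - h (s * w))) * I := by
  have hH := differentiableOn_dslope_zero hh
  have hxs := mul_sub_mul_hadamardProd_cauchyKernel_mul_cauchyKernel hh hx hs hw
  have hys := mul_sub_mul_hadamardProd_cauchyKernel_mul_cauchyKernel hh hy hs hw
  rw [← hadamardProd_smul hH ((differentiableOn_cauchyKernel_mul_cauchyKernel hx hy).mul
      (differentiableOn_herglotzKernel hs)) _ hw,
    hadamardProd_congr_right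
      (sub_smul_cauchyKernel_mul_cauchyKernel_mul_herglotzKernel hx hy hs),
    hadamardProd_smul_add_smul hH (differentiableOn_cauchyKernel_mul_cauchyKernel hx hs)
      (differentiableOn_cauchyKernel_mul_cauchyKernel hy hs) _ _ hw, hu, hv]
  linear_combination u * I * hxs - v * I * hys

lemma re_mul_sub_mul_mul_I_div_sub (u v : ℝ) (p q : ℂ) :
    (((u * p - v * q) * I) / (p - q)).re =
      (u - v) * (p * starRingEnd ℂ q).im / normSq (p - q) := by
  rw [div_re, ← add_div]
  congr 1
  simp [mul_re, mul_im]
  ring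

lemma preperfect_unitSphere : Preperfect (sphere (0 : ℂ) 1) :=
  (isPreconnected_sphere (by simp) 0 1).preperfect_of_nontrivial
    ⟨1, by simp, -1, by simp, by norm_num⟩

lemma exists_notMem_of_finite {S : Set ℂ} (hS : S.Finite) : ∃ s : ℂ, ‖s‖ = 1 ∧ s ∉ S := by
  have hinf := Infinite.of_accPt (preperfect_unitSphere 1 (by simp))
  obtain ⟨s, hs, hsS⟩ := hinf.exists_notMem_finite hS
  exact ⟨s, mem_sphere_zero_iff_norm.1 hs, hsS⟩

lemma nonneg_of_continuousOn_sphere {F : ℂ → ℝ} (hF : ContinuousOn F (sphere 0 1)) {S : Set ℂ}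
    (hS : S.Finite) (hnonneg : ∀ x : ℂ, ‖x‖ = 1 → x ∉ S → 0 ≤ F x) (hx : ‖x‖ = 1) : 0 ≤ F x := by
  have hmem : x ∈ sphere (0 : ℂ) 1 := mem_sphere_zero_iff_norm.2 hx
  have : Filter.NeBot (𝓝[≠] x ⊓ Filter.principal (sphere 0 1)) := preperfect_unitSphere x hmem
  have htendsto : Filter.Tendsto F (𝓝[≠] x ⊓ Filter.principal (sphere 0 1)) (𝓝 (F x)) :=
    (hF x hmem).mono_left (inf_le_inf_right _ nhdsWithin_le_nhds)
  refine ge_of_tendsto htendsto ?_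
  filter_upwards [Filter.mem_inf_of_left (nhdsNE_le_cofinite x hS.compl_mem_cofinite),
    Filter.mem_inf_of_right (Filter.mem_principal_self _)] with y hyS hy
  exact hnonneg y (mem_sphere_zero_iff_norm.1 hy) hyS

namespace IsConvexFn

variable (hh : IsConvexFn h)

include hh

lemma im_sub_mul_conj_sub_mul_ne_zero (hx : ‖x‖ = 1) (hy : ‖y‖ = 1) (hs : ‖s‖ = 1) (hxy : x ≠ y)
    (hys : y ≠ s) (hsx : s ≠ x) (hw : w ∈ 𝔻) (hw₀ : w ≠ 0) :
    ((h (x * w) - h (s * w)) * starRingEnd ℂ (h (y * w) - h (s * w))).im ≠ 0 :=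
  hh.im_sub_mul_conj_sub_ne_zero (norm_pos_iff.2 hw₀) (mem_unitDisk.1 hw)
    (by simp [hx]) (by simp [hy]) (by simp [hs]) (mul_left_injective₀ hw₀ |>.ne hxy)
    (mul_left_injective₀ hw₀ |>.ne hys) (mul_left_injective₀ hw₀ |>.ne hsx)

lemma hadamardProd_cauchyKernel_mul_cauchyKernel_ne_zero (hx : ‖x‖ = 1) (hy : ‖y‖ = 1)
    (hw : w ∈ 𝔻) : hadamardProd (dslope h 0) (cauchyKernel x * cauchyKernel y) w ≠ 0 := by
  rcases eq_or_ne x y with rfl | hxy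
  · rw [hadamardProd_dslope_cauchyKernel_mul_self hh.differentiableOn hx.le hw]
    exact hh.deriv_ne_zero (mul_mem_unitDisk hx.le hw)
  rcases eq_or_ne w 0 with rfl | hw₀
  · simpa [hadamardProd_apply_zero, cauchyKernel] using hh.deriv_ne_zero zero_mem_unitDisk
  intro hzero
  have hvalues : h (x * w) = h (y * w) := by
    rw [← sub_eq_zero, ← mul_sub_mul_hadamardProd_cauchyKernel_mul_cauchyKernel
      hh.differentiableOn hx.le hy.le hw, hzero, mul_zero, mul_zero]
  obtain ⟨s, hs, hsxy⟩ := exists_notMem_of_finite (S := {x, y}) (by simp)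
  rw [mem_insert_iff, mem_singleton_iff, not_or] at hsxy
  refine hh.im_sub_mul_conj_sub_mul_ne_zero hx hy hs hxy (Ne.symm hsxy.2) hsxy.1 hw hw₀ ?_
  rw [hvalues, mul_conj, ofReal_im]

lemma re_hadamardRatio_herglotzKernel_ne_zero (hx : ‖x‖ = 1) (hy : ‖y‖ = 1) (hs : ‖s‖ = 1)
    (hxy : x ≠ y) (hys : y ≠ s) (hsx : s ≠ x) (hw : w ∈ 𝔻) (hw₀ : w ≠ 0) :
    (hadamardRatio (dslope h 0) (cauchyKernel x * cauchyKernel y) (herglotzKernel s) w).re ≠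
      0 := by
  obtain ⟨u, hu⟩ := exists_add_eq_mul_I_mul_sub hx hs hsx.symm
  obtain ⟨v, hv⟩ := exists_add_eq_mul_I_mul_sub hy hs hys
  have hsub : x - y ≠ 0 := sub_ne_zero.2 hxy
  have huv : u ≠ v := by
    rintro rfl
    have hcancel : (u * I - 1) * (x - y) = 0 := by linear_combination hv - hu
    have hu_ne : (u * I - 1 : ℂ) ≠ 0 := fun h => by simpa using congrArg re h
    exact (mul_ne_zero hu_ne hsub) hcancel
  have hdenom : w * ((x - y) * hadamardProd (dslope h 0) (cauchyKernel x * cauchyKernel y) w) =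
      h (x * w) - h (s * w) - (h (y * w) - h (s * w)) := by
    rw [sub_sub_sub_cancel_right]
    exact mul_sub_mul_hadamardProd_cauchyKernel_mul_cauchyKernel hh.differentiableOn hx.le
      hy.le hw
  have hdenom_ne : h (x * w) - h (s * w) - (h (y * w) - h (s * w)) ≠ 0 := hdenom ▸ mul_ne_zero hw₀
    (mul_ne_zero hsub (hh.hadamardProd_cauchyKernel_mul_cauchyKernel_ne_zero hx hy hw))
  rw [hadamardRatio, ← mul_div_mul_left _ _ hsub, ← mul_div_mul_left _ _ hw₀, hdenom,
    mul_sub_mul_hadamardProd_mul_herglotzKernel hh.differentiableOn hx.le hy.le hs.le hu hv hw,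
    re_mul_sub_mul_mul_I_div_sub]
  exact div_ne_zero (mul_ne_zero (sub_ne_zero.2 huv)
      (hh.im_sub_mul_conj_sub_mul_ne_zero hx hy hs hxy hys hsx hw hw₀))
    (mt normSq_eq_zero.1 hdenom_ne)

lemma re_hadamardRatio_herglotzKernel_pos (hx : ‖x‖ = 1) (hy : ‖y‖ = 1) (hs : ‖s‖ = 1)
    (hxy : x ≠ y) (hys : y ≠ s) (hsx : s ≠ x) (hw : w ∈ 𝔻) :
    0 < (hadamardRatio (dslope h 0) (cauchyKernel x * cauchyKernel y) (herglotzKernel s) w).re := by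
  have hratio_diff := differentiableOn_hadamardRatio (differentiableOn_dslope_zero
    hh.differentiableOn) (differentiableOn_cauchyKernel_mul_cauchyKernel hx.le hy.le)
    (differentiableOn_herglotzKernel hs.le)
    fun w hw => hh.hadamardProd_cauchyKernel_mul_cauchyKernel_ne_zero hx hy hw
  have hzero : hadamardRatio (dslope h 0) (cauchyKernel x * cauchyKernel y) (herglotzKernel s) 0 =
      1 := by
    rw [hadamardRatio_apply_zero (by simpa using hh.deriv_ne_zero zero_mem_unitDisk)
      (by simp [cauchyKernel]), herglotzKernel_apply_zero]
  refine re_pos_of_re_ne_zero isPreconnected_unitDisk hratio_diff.continuousOn (fun w hw => ?_)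
    zero_mem_unitDisk (by simp [hzero]) hw
  rcases eq_or_ne w 0 with rfl | hw₀
  · simp [hzero]
  · exact hh.re_hadamardRatio_herglotzKernel_ne_zero hx hy hs hxy hys hsx hw hw₀

lemma continuousOn_re_hadamardRatio_herglotzKernel (hx : ‖x‖ = 1) (hs : ‖s‖ = 1) (hw : w ∈ 𝔻) :
    ContinuousOn (fun y => (hadamardRatio (dslope h 0) (cauchyKernel x * cauchyKernel y)
      (herglotzKernel s) w).re) (sphere 0 1) := by
  have hH := differentiableOn_dslope_zero hh.differentiableOn
  have hx_diff := differentiableOn_cauchyKernel hx.le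
  simp only [hadamardRatio, mul_right_comm _ _ (herglotzKernel s)]
  exact continuous_re.comp_continuousOn ((continuousOn_hadamardProd_mul_cauchyKernel hH
    (hx_diff.mul (differentiableOn_herglotzKernel hs.le)) hw).div
    (continuousOn_hadamardProd_mul_cauchyKernel hH hx_diff hw) fun y hy =>
      hh.hadamardProd_cauchyKernel_mul_cauchyKernel_ne_zero hx (mem_sphere_zero_iff_norm.1 hy) hw)

lemma re_hadamardRatio_herglotzKernel_nonneg (hx : ‖x‖ = 1) (hy : ‖y‖ = 1) (hs : ‖s‖ = 1)
    (hw : w ∈ 𝔻) :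
    0 ≤ (hadamardRatio (dslope h 0) (cauchyKernel x * cauchyKernel y) (herglotzKernel s) w).re := by
  set F : ℂ → ℂ → ℝ := fun x y =>
    (hadamardRatio (dslope h 0) (cauchyKernel x * cauchyKernel y) (herglotzKernel s) w).re with hF
  have hcont {x : ℂ} (hx : ‖x‖ = 1) : ContinuousOn (F x) (sphere 0 1) :=
    hh.continuousOn_re_hadamardRatio_herglotzKernel hx hs hw
  have hsymm (x y : ℂ) : F x y = F y x := by
    simp only [hF, mul_comm (cauchyKernel x)]
  have hne {x y : ℂ} (hx : ‖x‖ = 1) (hy : ‖y‖ = 1) (hsx : s ≠ x) : 0 ≤ F x y := by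
    refine nonneg_of_continuousOn_sphere (hcont hx) (S := {x, s}) (by simp) (fun y hy hyS => ?_) hy
    rw [mem_insert_iff, mem_singleton_iff, not_or] at hyS
    exact (hh.re_hadamardRatio_herglotzKernel_pos hx hy hs (Ne.symm hyS.1) hyS.2 hsx hw).le
  change 0 ≤ F x y
  rcases eq_or_ne s x with rfl | hsx
  · exact nonneg_of_continuousOn_sphere (hcont hx) (finite_singleton s)
      (fun y hy hys => hsymm s y ▸ hne hy hs (Ne.symm hys)) hy
  · exact hne hx hy hsx

end IsConvexFn

end ConvexKernel

section RuscheweyhSheilSmall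

variable {f h E F H : ℂ → ℂ} {w s : ℂ} {ρ : ℝ}

lemma hadamardProd_mul_one_add_mul_cauchyKernel (hH : DifferentiableOn ℂ H 𝔻)
    (hE : DifferentiableOn ℂ E 𝔻) (hs : ‖s‖ ≤ 1) (α : ℂ) (hw : w ∈ 𝔻) :
    hadamardProd H (fun z => E z * (1 + α * s * z) * cauchyKernel s z) w =
      (1 + α) / 2 * hadamardProd H (E * herglotzKernel s) w +
        (1 - α) / 2 * hadamardProd H E w := by
  rw [← hadamardProd_smul_add_smul hH (hE.mul (differentiableOn_herglotzKernel hs)) hE _ _ hw]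
  refine congrFun (hadamardProd_congr_right fun z hz => ?_) w
  have hsz := one_sub_mul_ne_zero hs hz
  simp only [Pi.smul_apply, Pi.mul_apply, Pi.add_apply, cauchyKernel, herglotzKernel_apply hs hz,
    smul_eq_mul]
  field_simp
  ring

lemma norm_one_add_div_one_sub {q : ℂ} (hq : q.re = 0) : ‖(1 + q) / (1 - q)‖ = 1 := by
  have hconj : starRingEnd ℂ (1 - q) = 1 + q := by
    apply Complex.ext <;> simp [hq]
  have hne : 1 - q ≠ 0 := fun h => by simpa [hq] using congrArg re h
  rw [norm_div, ← hconj, norm_conj, div_self (norm_ne_zero_iff.2 hne)]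

lemma hadamardProd_ne_zero_of_mul_one_add_mul_cauchyKernel (hH : DifferentiableOn ℂ H 𝔻)
    (hE : DifferentiableOn ℂ E 𝔻) (hs : ‖s‖ ≤ 1) (hw : w ∈ 𝔻)
    (hne : hadamardProd H (fun z => E z * (1 + -1 * s * z) * cauchyKernel s z) w ≠ 0) :
    hadamardProd H E w ≠ 0 := by
  rw [hadamardProd_mul_one_add_mul_cauchyKernel hH hE hs _ hw] at hne
  norm_num at hne
  exact hne

lemma re_hadamardRatio_herglotzKernel_ne_zero_of_ne_zero (hH : DifferentiableOn ℂ H 𝔻)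
    (hE : DifferentiableOn ℂ E 𝔻) (hs : ‖s‖ ≤ 1) (hw : w ∈ 𝔻) (hD : hadamardProd H E w ≠ 0)
    (hne : ∀ α : ℂ, ‖α‖ = 1 →
      hadamardProd H (fun z => E z * (1 + α * s * z) * cauchyKernel s z) w ≠ 0) :
    (hadamardRatio H E (herglotzKernel s) w).re ≠ 0 := by
  intro hre
  refine hne _ (norm_one_add_div_one_sub hre) ?_
  set q := hadamardRatio H E (herglotzKernel s) w with hq
  rw [hadamardRatio, eq_div_iff hD] at hq
  have hsub : 1 - q ≠ 0 := fun h => by simpa [hre] using congrArg re h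
  rw [hadamardProd_mul_one_add_mul_cauchyKernel hH hE hs _ hw, ← hq]
  field_simp
  ring

lemma re_hadamardRatio_herglotzKernel_pos_of_ne_zero (hH : DifferentiableOn ℂ H 𝔻)
    (hE : DifferentiableOn ℂ E 𝔻) (hs : ‖s‖ ≤ 1)
    (hne : ∀ α : ℂ, ‖α‖ = 1 → ∀ w ∈ 𝔻,
      hadamardProd H (fun z => E z * (1 + α * s * z) * cauchyKernel s z) w ≠ 0) (hw : w ∈ 𝔻) :
    0 < (hadamardRatio H E (herglotzKernel s) w).re := by
  have hD (w) (hw : w ∈ 𝔻) : hadamardProd H E w ≠ 0 :=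
    hadamardProd_ne_zero_of_mul_one_add_mul_cauchyKernel hH hE hs hw (hne (-1) (by simp) w hw)
  have hzero : hadamardRatio H E (herglotzKernel s) 0 = 1 := by
    obtain ⟨hH₀, hE₀⟩ := mul_ne_zero_iff.1 (hadamardProd_apply_zero H E ▸ hD 0 zero_mem_unitDisk)
    rw [hadamardRatio_apply_zero hH₀ hE₀, herglotzKernel_apply_zero]
  refine re_pos_of_re_ne_zero isPreconnected_unitDisk (differentiableOn_hadamardRatio hH hE
    (differentiableOn_herglotzKernel hs) hD).continuousOn (fun w hw => ?_)
    zero_mem_unitDisk (by simp [hzero]) hw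
  exact re_hadamardRatio_herglotzKernel_ne_zero_of_ne_zero hH hE hs hw (hD w hw)
    fun α hα => hne α hα w hw

lemma differentiableOn_comp_ofReal_mul (hf : DifferentiableOn ℂ f 𝔻) (hρ₀ : 0 ≤ ρ) (hρ₁ : ρ < 1) :
    DifferentiableOn ℂ (fun z => f (ρ * z)) (closedBall 0 1) := by
  refine hf.comp (by fun_prop) fun z hz => mem_unitDisk.2 ?_
  rw [norm_mul, norm_real, Real.norm_of_nonneg hρ₀]
  exact (mul_le_of_le_one_right hρ₀ (mem_closedBall_zero_iff.1 hz)).trans_lt hρ₁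

lemma exists_ofReal_mul_eq (hw : w ∈ 𝔻) :
    ∃ (ρ : ℝ) (v : ℂ), 0 ≤ ρ ∧ ρ < 1 ∧ v ∈ 𝔻 ∧ ρ * v = w := by
  obtain ⟨ρ, hwρ, hρ₁⟩ := exists_between (mem_unitDisk.1 hw)
  have hρ₀ : 0 < ρ := (norm_nonneg w).trans_lt hwρ
  refine ⟨ρ, w / ρ, hρ₀.le, hρ₁, mem_unitDisk.2 ?_,
    mul_div_cancel₀ w (ofReal_ne_zero.2 hρ₀.ne')⟩
  rwa [norm_div, norm_real, Real.norm_of_nonneg hρ₀.le, div_lt_one hρ₀]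

lemma hadamardRatio_comp_const_mul_right (hE : DifferentiableOn ℂ E 𝔻)
    (hF : DifferentiableOn ℂ F 𝔻) {c : ℂ} (hc : ‖c‖ ≤ 1) (w : ℂ) :
    hadamardRatio H (fun z => E (c * z)) (fun z => F (c * z)) w =
      hadamardRatio H E F (c * w) :=
  congrArg₂ (· / ·) (hadamardProd_comp_const_mul_right (hE.mul hF) hc w)
    (hadamardProd_comp_const_mul_right hE hc w)

lemma hadamardRatio_smul_one_add_smul (hH : DifferentiableOn ℂ H 𝔻)
    (hE : DifferentiableOn ℂ E 𝔻) (hF : DifferentiableOn ℂ F 𝔻) (a b : ℂ) (hw : w ∈ 𝔻)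
    (hD : hadamardProd H E w ≠ 0) :
    hadamardRatio H E (a • 1 + b • F) w = a + b * hadamardRatio H E F w := by
  rw [hadamardRatio, hadamardRatio, mul_add, mul_smul_comm, mul_smul_comm, mul_one,
    hadamardProd_smul_add_smul hH hE (hE.mul hF) _ _ hw, add_div, mul_div_cancel_right₀ _ hD,
    mul_div_assoc]

namespace IsConvexFn

variable (hh : IsConvexFn h) (hf : IsConvexFn f)

include hh hf

lemma hadamardProd_deriv_mul_one_add_mul_cauchyKernel_ne_zero (hρ₀ : 0 ≤ ρ) (hρ₁ : ρ < 1) {c : ℂ}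
    (hc : ‖c‖ = 1) (hs : ‖s‖ = 1) (hw : w ∈ 𝔻) :
    hadamardProd (dslope h 0) (fun z => deriv f (ρ * z) * (1 + c * z) * cauchyKernel s z) w ≠
      0 := by
  obtain ⟨x, e, hx, he, hre⟩ := hf.exists_re_mul_deriv_mul_nonneg hρ₀ hρ₁ (x₁ := -c) (by simpa)
  set P : ℂ → ℂ := fun z => e * (deriv f (ρ * z) * (1 - -c * z) * (1 - x * z)) with hP_def
  set Q : ℂ → ℂ := fun z => deriv f (ρ * z) * (1 + c * z) * cauchyKernel s z with hQ_def
  have hH := differentiableOn_dslope_zero hh.differentiableOn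
  have hu := differentiableOn_comp_ofReal_mul (hf.differentiableOn.deriv isOpen_unitDisk) hρ₀ hρ₁
  have hP : DifferentiableOn ℂ P (closedBall 0 1) :=
    ((hu.mul (by fun_prop)).mul (by fun_prop)).const_mul e
  have hQ : DifferentiableOn ℂ Q 𝔻 := ((hu.mono ball_subset_closedBall).mul (by fun_prop)).mul
    (differentiableOn_cauchyKernel hs.le)
  have hE := differentiableOn_cauchyKernel_mul_cauchyKernel hx.le hs.le
  have hD (w) (hw : w ∈ 𝔻) := hh.hadamardProd_cauchyKernel_mul_cauchyKernel_ne_zero hx hs hw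
  have hprod : EqOn (cauchyKernel x * cauchyKernel s * P) (e • Q) 𝔻 := fun z hz => by
    simp only [Pi.mul_apply, Pi.smul_apply, smul_eq_mul, cauchyKernel, hP_def, hQ_def]
    linear_combination (1 - s * z)⁻¹ * e * deriv f (ρ * z) * (1 + c * z) *
      inv_mul_cancel₀ (one_sub_mul_ne_zero hx.le hz)
  have hratio : hadamardRatio (dslope h 0) (cauchyKernel x * cauchyKernel s) P w ≠ 0 := by
    refine ne_zero_of_re_nonneg isOpen_unitDisk isPreconnected_unitDisk
      (differentiableOn_hadamardRatio hH hE (hP.mono ball_subset_closedBall) hD)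
      (fun w hw => re_hadamardRatio_nonneg hH hE hw (hD w hw)
        (fun σ hσ => hh.re_hadamardRatio_herglotzKernel_nonneg hx hs hσ hw) hP hre)
      zero_mem_unitDisk ?_ w hw
    rw [hadamardRatio_apply_zero (by simpa using hh.deriv_ne_zero zero_mem_unitDisk)
      (by simp [cauchyKernel])]
    simpa [hP_def] using ⟨he, hf.deriv_ne_zero zero_mem_unitDisk⟩
  intro hzero
  refine hratio ?_
  rw [hadamardRatio, hadamardProd_congr_right hprod, hadamardProd_smul hH hQ _ hw, hzero, mul_zero,
    zero_div]

lemma hadamardProd_deriv_comp_ofReal_mul_ne_zero (hρ₀ : 0 ≤ ρ) (hρ₁ : ρ < 1) (hw : w ∈ 𝔻) :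
    hadamardProd (dslope h 0) (fun z => deriv f (ρ * z)) w ≠ 0 :=
  hadamardProd_ne_zero_of_mul_one_add_mul_cauchyKernel
    (differentiableOn_dslope_zero hh.differentiableOn)
    ((differentiableOn_comp_ofReal_mul (hf.differentiableOn.deriv isOpen_unitDisk) hρ₀ hρ₁).mono
      ball_subset_closedBall) norm_one.le hw
    (hh.hadamardProd_deriv_mul_one_add_mul_cauchyKernel_ne_zero hf hρ₀ hρ₁ (by simp) norm_one hw)

lemma re_hadamardRatio_deriv_comp_ofReal_mul_nonneg (hρ₀ : 0 ≤ ρ) (hρ₁ : ρ < 1)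
    (hF : DifferentiableOn ℂ F (closedBall 0 1)) (hFre : ∀ z, ‖z‖ = 1 → 0 ≤ (F z).re)
    (hw : w ∈ 𝔻) : 0 ≤ (hadamardRatio (dslope h 0) (fun z => deriv f (ρ * z)) F w).re := by
  have hH := differentiableOn_dslope_zero hh.differentiableOn
  have hu : DifferentiableOn ℂ (fun z => deriv f (ρ * z)) 𝔻 :=
    (differentiableOn_comp_ofReal_mul (hf.differentiableOn.deriv isOpen_unitDisk) hρ₀ hρ₁).mono
      ball_subset_closedBall
  refine re_hadamardRatio_nonneg hH hu hw
    (hh.hadamardProd_deriv_comp_ofReal_mul_ne_zero hf hρ₀ hρ₁ hw) (fun s hs => ?_) hF hFre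
  refine (re_hadamardRatio_herglotzKernel_pos_of_ne_zero hH hu hs.le (fun α hα w hw => ?_) hw).le
  exact hh.hadamardProd_deriv_mul_one_add_mul_cauchyKernel_ne_zero hf hρ₀ hρ₁
    (by rw [norm_mul, hα, hs, mul_one]) hs hw

lemma hadamardProd_deriv_ne_zero (hw : w ∈ 𝔻) :
    hadamardProd (dslope h 0) (deriv f) w ≠ 0 := by
  obtain ⟨ρ, v, hρ₀, hρ₁, hv, rfl⟩ := exists_ofReal_mul_eq hw
  rw [← hadamardProd_comp_const_mul_right (hf.differentiableOn.deriv isOpen_unitDisk)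
    (by simpa [abs_of_nonneg hρ₀] using hρ₁.le)]
  exact hh.hadamardProd_deriv_comp_ofReal_mul_ne_zero hf hρ₀ hρ₁ hv

lemma re_hadamardRatio_deriv_nonneg (hF : DifferentiableOn ℂ F 𝔻)
    (hFre : ∀ z ∈ 𝔻, 0 ≤ (F z).re) (hw : w ∈ 𝔻) :
    0 ≤ (hadamardRatio (dslope h 0) (deriv f) F w).re := by
  obtain ⟨ρ, v, hρ₀, hρ₁, hv, rfl⟩ := exists_ofReal_mul_eq hw
  have hu := hf.differentiableOn.deriv isOpen_unitDisk
  have hρ : ‖(ρ : ℂ)‖ ≤ 1 := by simpa [abs_of_nonneg hρ₀] using hρ₁.le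
  rw [← hadamardRatio_comp_const_mul_right hu hF hρ]
  refine hh.re_hadamardRatio_deriv_comp_ofReal_mul_nonneg hf hρ₀ hρ₁
    (differentiableOn_comp_ofReal_mul hF hρ₀ hρ₁) (fun z hz => hFre _ (mem_unitDisk.2 ?_)) hv
  rwa [norm_mul, hz, mul_one, norm_real, Real.norm_of_nonneg hρ₀]

lemma hadamardRatio_deriv_mem {V : Set ℂ} (hV : Convex ℝ V) (hV' : IsOpen V)
    (hF : DifferentiableOn ℂ F 𝔻) (hmaps : MapsTo F 𝔻 V) (hw : w ∈ 𝔻) :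
    hadamardRatio (dslope h 0) (deriv f) F w ∈ V := by
  by_contra hmem
  set q := hadamardRatio (dslope h 0) (deriv f) F w with hq
  obtain ⟨L, hL⟩ := RCLike.geometric_hahn_banach_open_point (𝕜 := ℂ) hV hV' hmem
  have hL_apply (z : ℂ) : L z = L 1 * z := by simpa [mul_comm] using L.map_smul z 1
  have hH := differentiableOn_dslope_zero hh.differentiableOn
  have hu := hf.differentiableOn.deriv isOpen_unitDisk
  have hD (w) (hw : w ∈ 𝔻) := hh.hadamardProd_deriv_ne_zero hf hw
  set G : ℂ → ℂ := (L 1 * q) • 1 + (-L 1) • F with hG_def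
  have hG : DifferentiableOn ℂ G 𝔻 :=
    ((differentiableOn_const 1).const_smul _).add (hF.const_smul _)
  have hGre (z) (hz : z ∈ 𝔻) : 0 < (G z).re := by
    have hlt := hL _ (hmaps hz)
    rw [hL_apply, hL_apply q] at hlt
    simpa [hG_def, sub_eq_add_neg, add_comm] using sub_pos.2 hlt
  refine ne_zero_of_re_nonneg isOpen_unitDisk isPreconnected_unitDisk
    (differentiableOn_hadamardRatio hH hu hG hD)
    (fun z hz => hh.re_hadamardRatio_deriv_nonneg hf hG (fun z hz => (hGre z hz).le) hz)
    zero_mem_unitDisk ?_ w hw ?_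
  · rw [hadamardRatio_apply_zero (by simpa using hh.deriv_ne_zero zero_mem_unitDisk)
      (hf.deriv_ne_zero zero_mem_unitDisk)]
    exact fun h₀ => (hGre 0 zero_mem_unitDisk).ne' (by rw [h₀, zero_re])
  · rw [hG_def, hadamardRatio_smul_one_add_smul hH hu hF _ _ hw (hD w hw), ← hq]
    ring

end IsConvexFn

end RuscheweyhSheilSmall

section ConvexMM

variable {ψ f h : ℂ → ℂ}

lemma ConvexMM.mapsTo (hf : ConvexMM ψ f) :
    MapsTo (fun z => 1 + z * deriv (deriv f) z / deriv f z) 𝔻 (ψ '' 𝔻) := fun z hz =>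
  let ⟨ω, _, _, hω, hfω⟩ := hf.2.2
  ⟨ω z, hω z hz, (hfω z hz).symm⟩

lemma ConvexMM.apply_zero (hf : ConvexMM ψ f) : ψ 0 = 1 := by
  obtain ⟨ω, -, hω₀, -, hfω⟩ := hf.2.2
  simpa [hω₀] using (hfω 0 zero_mem_unitDisk).symm

lemma ConvexMM.isConvexFn (hf : ConvexMM ψ f) (hre : ∀ z ∈ 𝔻, 0 < (ψ z).re) : IsConvexFn f :=
  ⟨hf.1, hf.2.1, fun _ hz => let ⟨v, hv, hvz⟩ := hf.mapsTo hz
    (hre v hv).trans_eq (congrArg re hvz)⟩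

lemma IsClassA.hadamardProd (hh : IsClassA h) (hf : IsClassA f) : IsClassA (hadamardProd h f) := by
  refine ⟨differentiableOn_hadamardProd hh.1 hf.1, ?_, ?_⟩
  · rw [hadamardProd_apply_zero, hf.2.1, mul_zero]
  · rw [deriv_hadamardProd hh.1 hf.1 zero_mem_unitDisk, hadamardProd_apply_zero, dslope_same,
      hh.2.2, hf.2.2, one_mul]

lemma one_add_mul_deriv_deriv_hadamardProd_div (hh : DifferentiableOn ℂ h 𝔻)
    (hf : DifferentiableOn ℂ f 𝔻) (hf' : ∀ z ∈ 𝔻, deriv f z ≠ 0)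
    (hD : ∀ w ∈ 𝔻, hadamardProd (dslope h 0) (deriv f) w ≠ 0) :
    EqOn (fun w => 1 + w * deriv (deriv (hadamardProd h f)) w / deriv (hadamardProd h f) w)
      (hadamardRatio (dslope h 0) (deriv f) fun z => 1 + z * deriv (deriv f) z / deriv f z) 𝔻 := by
  intro w hw
  have hH := differentiableOn_dslope_zero hh
  have hu := hf.deriv isOpen_unitDisk
  have hprod : EqOn (deriv f * fun z => 1 + z * deriv (deriv f) z / deriv f z)
      ((1 : ℂ) • deriv f + (1 : ℂ) • (id * deriv (deriv f))) 𝔻 := fun z hz => by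
    simp only [Pi.mul_apply, Pi.add_apply, one_smul, id]
    field_simp [hf' z hz]
  have hmul : w * deriv (hadamardProd (dslope h 0) (deriv f)) w =
      hadamardProd (dslope h 0) (id * deriv (deriv f)) w :=
    id_mul_deriv_hadamardProd hH hu hw
  simp only [hadamardRatio]
  rw [(deriv_hadamardProd hh hf).deriv isOpen_unitDisk hw, deriv_hadamardProd hh hf hw, hmul,
    hadamardProd_congr_right hprod, hadamardProd_smul_add_smul hH hu
      (differentiableOn_id.mul (hu.deriv isOpen_unitDisk)), one_mul, one_mul, add_div,
    div_self (hD w hw)]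
  exact hw

theorem stmt11_general (hψ : DifferentiableOn ℂ ψ 𝔻) (hinj : InjOn ψ 𝔻)
    (hre : ∀ z ∈ 𝔻, 0 < (ψ z).re) (hconv : Convex ℝ (ψ '' 𝔻)) (hh : IsConvexFn h)
    (hf : ConvexMM ψ f) : ConvexMM ψ (hadamardProd h f) := by
  have hfconv := hf.isConvexFn hre
  have hD (w) (hw : w ∈ 𝔻) := hh.hadamardProd_deriv_ne_zero hfconv hw
  have hu := hfconv.differentiableOn.deriv isOpen_unitDisk
  have hF : DifferentiableOn ℂ (fun z => 1 + z * deriv (deriv f) z / deriv f z) 𝔻 :=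
    (differentiableOn_const 1).add
      ((differentiableOn_id.mul (hu.deriv isOpen_unitDisk)).div hu hf.2.1)
  have hratio := one_add_mul_deriv_deriv_hadamardProd_div hh.differentiableOn
    hfconv.differentiableOn hf.2.1 hD
  refine ⟨hh.1.hadamardProd hf.1, fun z hz => ?_, subordinate_of_mapsTo_image hψ hinj ?_ ?_ ?_⟩
  · rw [deriv_hadamardProd hh.differentiableOn hfconv.differentiableOn hz]
    exact hD z hz
  · exact (differentiableOn_hadamardRatio (differentiableOn_dslope_zero hh.differentiableOn) hu hF
      hD).congr hratio
  · simp [hf.apply_zero]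
  · exact hratio.mapsTo_iff.2 fun w hw => hh.hadamardRatio_deriv_mem hfconv hconv
      (isOpen_image_of_injOn isOpen_unitDisk hψ hinj) hF hf.mapsTo hw

end ConvexMM

theorem stmt11 (ψ : ℂ → ℂ) (hψ : MaMinda ψ) (hconv : Convex ℝ (ψ '' 𝔻))
    (k : ℕ) (hk : 2 ≤ k) (r₀ : ℝ) (h0 : 0 < r₀) (h1 : r₀ ≤ 1)
    (hgk : IsConvexFn (fun z => (∑ i ∈ Finset.Icc 1 k, ((r₀:ℂ)*z) ^ i) / (r₀:ℂ)))
    (f : ℂ → ℂ) (a : ℕ → ℂ) (ha0 : a 0 = 0) (ha1 : a 1 = 1)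
    (hrep : ∀ z ∈ 𝔻, HasSum (fun n => a n * z^n) (f z))
    (hfC : ConvexMM ψ f) :
    ConvexMM ψ (fun z => (∑ i ∈ Finset.Icc 1 k, a i * ((r₀:ℂ)*z)^i) / (r₀:ℂ)) := by
  rw [← taylorCoeff_eq_of_hasSum hrep, ← hadamardProd_sum_mul_pow_div]
  exact stmt11_general hψ.1 hψ.2.1 hψ.2.2.1 hconv hgk hfC
end
end
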